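/- arXiv:0902.2795 — 3 statements merged into one kernel-verified Lean document; each statement's English description precedes it below -/
import Mathlib

section
/- Let G be a simple planar graph whose vertex set is partitioned into T ∪ W such that W is a stable (independent) set and every vertex of G has degree at least 3. Then there exists a vertex t ∈ T of degree at most 10 that has at most 5 neighbors in T. -/
open SimpleGraph
/-- `G` has `H` as a minor: there are nonempty, pairwise-disjoint, connected branch sets,
one for each vertex of `H`, with an edge of `G` between the branch sets of any two
adjacent vertices of `H`. -/
def HasMinor {V : Type*} {W : Type*} (G : SimpleGraph V) (H : SimpleGraph W) : Prop :=
  ∃ f : W → Set V,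
    (∀ w, (f w).Nonempty) ∧
    (∀ w, (G.induce (f w)).Connected) ∧
    (∀ w₁ w₂, w₁ ≠ w₂ → Disjoint (f w₁) (f w₂)) ∧
    (∀ w₁ w₂, H.Adj w₁ w₂ → ∃ a ∈ f w₁, ∃ b ∈ f w₂, G.Adj a b)

/-- Planarity, via Wagner's theorem: a graph is planar iff it has neither a `K₅` minor
nor a `K₃,₃` minor. -/
def IsPlanar {V : Type*} (G : SimpleGraph V) : Prop :=
  ¬ HasMinor G (completeGraph (Fin 5)) ∧
  ¬ HasMinor G (completeBipartiteGraph (Fin 3) (Fin 3))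

/-! We induct on the number of vertices, with a clique `E` of at most two terminals exempted from
the search. Two configurations lead to a smaller graph.

* If the neighbourhood of a nonterminal `w` contains no edge, contract `w` into a neighbour: every
  terminal adjacent to `w` gains a new neighbour in exchange, so degrees of terminals do not drop.
* Suppose two terminals `t` and `x` have a set `C` of at least three common nonterminal neighbours.
  As `K₃,₃` is not a minor, every component of `G - t - x - C` misses a vertex of `C`, and since
  nonterminals have a third neighbour there are at least two components that contain a terminal,
  one of which avoids `E`. Keep only this component, together with `t`, `x` and the vertices of `C`
  it sees. Contracting a missed vertex of `C` into `t` creates the edge `tx`, the new exempt clique.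

Otherwise every nonterminal `w` sends charge `max (2 - d) 0` to each neighbour `t` with which it has
`d` common neighbours. For a terminal that is not light, twice its number of terminal neighbours
plus the charge it receives is at least 12. On the other hand, contract each nonterminal into the
neighbour with which it shares fewest neighbours. The charge it sends is at most twice the number of
edges that this creates, and each new edge is created at most twice, so the total over `T` is at
most four times the number of edges of a `K₅`-minor-free graph on `T`. By Mader's bound `3n - 6` it
is at most `12 |T| - 24`, a contradiction because exempting `E` costs at most 20.
-/

section Minors

variable {V U X : Type*} {G : SimpleGraph V} {H : SimpleGraph U} {K : SimpleGraph X}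

theorem connected_induce_biUnion {f : U → Set V} {s : Set U}
    (hconn : ∀ u ∈ s, (G.induce (f u)).Connected)
    (hadj : ∀ u ∈ s, ∀ v ∈ s, H.Adj u v → ∃ a ∈ f u, ∃ b ∈ f v, G.Adj a b)
    (hs : (H.induce s).Connected) : (G.induce (⋃ u ∈ s, f u)).Connected := by
  have hsub {u : U} (hu : u ∈ s) : f u ⊆ ⋃ u ∈ s, f u := Set.subset_biUnion_of_mem hu
  have within {u : U} (hu : u ∈ s) {a b : V} (ha : a ∈ f u) (hb : b ∈ f u) :
      (G.induce (⋃ u ∈ s, f u)).Reachable ⟨a, hsub hu ha⟩ ⟨b, hsub hu hb⟩ :=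
    ((hconn u hu).preconnected ⟨a, ha⟩ ⟨b, hb⟩).map (G.induceHomOfLE (hsub hu)).toHom
  have across (u v : s) (huv : (H.induce s).Reachable u v) :
      ∀ a (ha : a ∈ f u) b (hb : b ∈ f v),
        (G.induce (⋃ u ∈ s, f u)).Reachable ⟨a, hsub u.2 ha⟩ ⟨b, hsub v.2 hb⟩ := by
    obtain ⟨p⟩ := huv
    induction p with
    | nil => exact fun a ha b hb => within (Subtype.prop _) ha hb
    | cons h _ ih =>
      intro a ha b hb
      obtain ⟨x, hx, y, hy, hxy⟩ := hadj _ (Subtype.prop _) _ (Subtype.prop _) h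
      have hstep : (G.induce (⋃ u ∈ s, f u)).Adj
          ⟨x, hsub (Subtype.prop _) hx⟩ ⟨y, hsub (Subtype.prop _) hy⟩ := hxy
      exact (within (Subtype.prop _) ha hx).trans (hstep.reachable.trans (ih y hy b hb))
  obtain ⟨⟨u, hu⟩⟩ := hs.nonempty
  obtain ⟨⟨a, ha⟩⟩ := (hconn u hu).nonempty
  refine (connected_iff_exists_forall_reachable _).2 ⟨⟨a, hsub hu ha⟩, ?_⟩
  rintro ⟨b, hb⟩
  obtain ⟨v, hv, hbv⟩ := Set.mem_iUnion₂.1 hb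
  exact across ⟨u, hu⟩ ⟨v, hv⟩ (hs.preconnected _ _) a ha b hbv

theorem HasMinor.trans (hGH : HasMinor G H) (hHK : HasMinor H K) : HasMinor G K := by
  obtain ⟨f, fne, fconn, fdisj, fadj⟩ := hGH
  obtain ⟨g, gne, gconn, gdisj, gadj⟩ := hHK
  refine ⟨fun x => ⋃ u ∈ g x, f u, fun x => ?_, fun x => ?_, fun x y hxy => ?_, fun x y hxy => ?_⟩
  · obtain ⟨u, hu⟩ := gne x
    exact (fne u).mono (Set.subset_biUnion_of_mem hu)
  · exact connected_induce_biUnion (fun u _ => fconn u) (fun u _ v _ => fadj u v) (gconn x)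
  · simp only [Set.disjoint_iUnion_left, Set.disjoint_iUnion_right]
    exact fun _ _ _ _ => fdisj _ _ ((gdisj x y hxy).ne_of_mem ‹_› ‹_›)
  · obtain ⟨u, hu, v, hv, huv⟩ := gadj x y hxy
    obtain ⟨a, ha, b, hb, hab⟩ := fadj u v huv
    exact ⟨a, Set.mem_biUnion hu ha, b, Set.mem_biUnion hv hb, hab⟩

theorem HasMinor.mono {G' : SimpleGraph V} (hle : G ≤ G') (h : HasMinor G H) : HasMinor G' H := by
  obtain ⟨f, fne, fconn, fdisj, fadj⟩ := h
  refine ⟨f, fne, fun u => (fconn u).mono fun _ _ hab => hle hab, fdisj, fun u v huv => ?_⟩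
  obtain ⟨a, ha, b, hb, hab⟩ := fadj u v huv
  exact ⟨a, ha, b, hb, hle hab⟩

theorem hasMinor_induce (s : Set V) : HasMinor G (G.induce s) := by
  refine ⟨fun u => {(u : V)}, fun u => Set.singleton_nonempty _, fun u => ?_, fun u v huv => ?_,
    fun u v huv => ⟨u, rfl, v, rfl, huv⟩⟩
  · rw [induce_singleton_eq_top]
    exact connected_top
  · exact Set.disjoint_singleton.2 (Subtype.coe_ne_coe.2 huv)

theorem IsPlanar.of_hasMinor (hG : IsPlanar G) (h : HasMinor G H) : IsPlanar H :=
  ⟨fun h5 => hG.1 (h.trans h5), fun h33 => hG.2 (h.trans h33)⟩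

/-- The graph on `S` obtained from `G` by contracting every vertex `m ∈ M` into its neighbour `c m`
and deleting the remaining vertices outside `S`. -/
def starContraction (G : SimpleGraph V) (S M : Set V) (c : V → S) : SimpleGraph S :=
  SimpleGraph.fromRel fun u v => G.Adj u v ∨ ∃ m ∈ M, c m = u ∧ G.Adj m v

theorem connected_induce_insert_of_adj {a : V} {s : Set V} (h : ∀ b ∈ s, G.Adj b a) :
    (G.induce (insert a s)).Connected := by
  refine (connected_iff_exists_forall_reachable _).2 ⟨⟨a, Set.mem_insert a s⟩, ?_⟩
  rintro ⟨b, rfl | hb⟩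
  · exact Reachable.refl _
  · exact (show (G.induce (insert a s)).Adj ⟨a, _⟩ ⟨b, _⟩ from (h b hb).symm).reachable

theorem hasMinor_starContraction {S M : Set V} {c : V → S} (hSM : Disjoint S M)
    (hc : ∀ m ∈ M, G.Adj m (c m)) : HasMinor G (starContraction G S M c) := by
  refine ⟨fun u => insert (u : V) {m | m ∈ M ∧ c m = u}, fun u => Set.insert_nonempty _ _,
    fun u => connected_induce_insert_of_adj ?_, fun u v huv => ?_, ?_⟩
  · rintro m ⟨hm, rfl⟩
    exact hc m hm
  · have hne (u v : S) : (u : V) ∉ {m | m ∈ M ∧ c m = v} :=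
      fun h => Set.disjoint_left.1 hSM u.2 h.1
    have huv' : (u : V) ≠ v := Subtype.coe_injective.ne huv
    rw [Set.disjoint_insert_left, Set.disjoint_insert_right, Set.mem_insert_iff]
    exact ⟨not_or.2 ⟨huv', hne u v⟩, hne v u,
      Set.disjoint_left.2 fun m hu hv => huv (hu.2.symm.trans hv.2)⟩
  · rintro u v ⟨-, (huv | ⟨m, hm, rfl, hmv⟩) | (hvu | ⟨m, hm, rfl, hmu⟩)⟩
    · exact ⟨u, .inl rfl, v, .inl rfl, huv⟩
    · exact ⟨m, .inr ⟨hm, rfl⟩, v, .inl rfl, hmv⟩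
    · exact ⟨u, .inl rfl, v, .inl rfl, hvu.symm⟩
    · exact ⟨u, .inl rfl, m, .inr ⟨hm, rfl⟩, hmu.symm⟩

theorem starContraction_adj_of_adj {S M : Set V} {c : V → S} {u v : S} (h : G.Adj u v) :
    (starContraction G S M c).Adj u v :=
  ⟨Subtype.coe_ne_coe.1 h.ne, .inl (.inl h)⟩

theorem starContraction_adj_of_mem {S M : Set V} {c : V → S} {m : V} {v : S} (hm : m ∈ M)
    (hne : c m ≠ v) (h : G.Adj m v) : (starContraction G S M c).Adj (c m) v :=
  ⟨hne, .inl (.inr ⟨m, hm, rfl, h⟩)⟩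

end Minors

section EdgeBound

variable {V : Type*} {G : SimpleGraph V}

theorem hasMinor_completeGraph_succ_of_isNClique {n : ℕ} {s : Finset V} {D : Set V}
    (hs : G.IsNClique n s) (hD : (G.induce D).Connected) (hsD : Disjoint (s : Set V) D)
    (hadj : ∀ a ∈ s, ∃ d ∈ D, G.Adj a d) : HasMinor G (completeGraph (Fin (n + 1))) := by
  let e : Fin n ≃ s := (s.equivFinOfCardEq hs.card_eq).symm
  have hDne : D.Nonempty := Set.nonempty_coe_sort.1 hD.nonempty
  refine ⟨Fin.cons D fun i => {(e i : V)}, ?_, ?_, ?_, ?_⟩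
  · exact Fin.cases hDne fun i => Set.singleton_nonempty _
  · refine Fin.cases hD fun i => ?_
    rw [Fin.cons_succ, induce_singleton_eq_top]
    exact connected_top
  · have hcross (i : Fin n) : Disjoint D {(e i : V)} :=
      Set.disjoint_singleton_right.2 (Set.disjoint_left.1 hsD (e i).2)
    refine Fin.cases (Fin.cases (fun h => (h rfl).elim) fun j _ => hcross j) fun i =>
      Fin.cases (fun _ => (hcross i).symm) fun j hij => ?_
    have hne : e i ≠ e j := e.injective.ne (ne_of_apply_ne Fin.succ hij)
    simpa [Subtype.ext_iff] using hne
  · have hcross (i : Fin n) : ∃ d ∈ D, G.Adj (e i) d := hadj _ (e i).2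
    refine Fin.cases (Fin.cases (fun h => (h rfl).elim) fun j _ => ?_) fun i =>
      Fin.cases (fun _ => ?_) fun j hij => ?_
    · obtain ⟨d, hd, had⟩ := hcross j
      exact ⟨d, hd, e j, rfl, had.symm⟩
    · obtain ⟨d, hd, had⟩ := hcross i
      exact ⟨e i, rfl, d, hd, had⟩
    · have hne : e i ≠ e j := e.injective.ne (ne_of_apply_ne Fin.succ hij)
      exact ⟨e i, rfl, e j, rfl, hs.isClique (e i).2 (e j).2 (Subtype.coe_ne_coe.2 hne)⟩

open Finset

variable [Fintype V] [DecidableEq V] [DecidableRel G.Adj]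

theorem neighborFinset_inter_eq_erase_erase {N : Finset V} {x y : V} (hN : #N ≤ 5) (hx : x ∈ N)
    (hy : y ∈ N) (hxy : x ≠ y) (hnadj : ¬ G.Adj x y) (hdeg : 3 ≤ #(N ∩ G.neighborFinset x)) :
    N ∩ G.neighborFinset x = (N.erase x).erase y := by
  refine eq_of_subset_of_card_le (fun z hz => ?_) ?_
  · rw [mem_inter, mem_neighborFinset] at hz
    exact mem_erase.2 ⟨fun h => hnadj (h ▸ hz.2), mem_erase.2 ⟨hz.2.ne', hz.1⟩⟩
  · rw [card_erase_of_mem (mem_erase.2 ⟨hxy.symm, hy⟩), card_erase_of_mem hx]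
    omega

theorem exists_adj_common_neighbors_of_not_adj {v x y : V} (hle : G.degree v ≤ 5)
    (hcommon : ∀ a, G.Adj v a → 3 ≤ #(G.neighborFinset v ∩ G.neighborFinset a))
    (hx : G.Adj v x) (hy : G.Adj v y) (hxy : x ≠ y) (hnadj : ¬ G.Adj x y) :
    ∃ a b c, G.Adj a b ∧ c ≠ a ∧ c ≠ b ∧
      ∀ z ∈ ({a, b, c} : Finset V), G.Adj v z ∧ G.Adj x z ∧ G.Adj y z := by
  set N := G.neighborFinset v
  have hxN : x ∈ N := (mem_neighborFinset ..).2 hx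
  have hyN : y ∈ N := (mem_neighborFinset ..).2 hy
  have hxZ := neighborFinset_inter_eq_erase_erase hle hxN hyN hxy hnadj (hcommon x hx)
  have hyZ := neighborFinset_inter_eq_erase_erase hle hyN hxN hxy.symm (fun h => hnadj h.symm)
    (hcommon y hy)
  set Z := (N.erase x).erase y with hZ
  rw [erase_right_comm, ← hZ] at hyZ
  have hcardZ : 3 ≤ #Z := hxZ ▸ hcommon x hx
  have adj_Z {z : V} (hz : z ∈ Z) : G.Adj v z ∧ G.Adj x z ∧ G.Adj y z := by
    have h1 := hxZ ▸ hz
    have h2 := hyZ ▸ hz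
    rw [mem_inter, mem_neighborFinset, mem_neighborFinset] at h1 h2
    exact ⟨h1.1, h1.2, h2.2⟩
  obtain ⟨a, ha⟩ : Z.Nonempty := card_pos.1 (by omega)
  obtain ⟨b, hb, hbxy⟩ : ∃ b ∈ N ∩ G.neighborFinset a, b ∉ ({x, y} : Finset V) :=
    exists_mem_notMem_of_card_lt_card (card_le_two.trans_lt (hcommon a (adj_Z ha).1))
  obtain ⟨c, hc, hcab⟩ : ∃ c ∈ Z, c ∉ ({a, b} : Finset V) :=
    exists_mem_notMem_of_card_lt_card (card_le_two.trans_lt hcardZ)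
  simp only [mem_insert, mem_singleton, not_or] at hbxy hcab
  rw [mem_inter, mem_neighborFinset G a] at hb
  have hbZ : b ∈ Z := mem_erase.2 ⟨hbxy.2, mem_erase.2 ⟨hbxy.1, hb.1⟩⟩
  refine ⟨a, b, c, hb.2, hcab.1, hcab.2, ?_⟩
  simp only [mem_insert, mem_singleton, forall_eq_or_imp, forall_eq]
  exact ⟨adj_Z ha, adj_Z hbZ, adj_Z hc⟩

theorem hasMinor_completeGraph_five_of_not_adj {v x y : V} (hle : G.degree v ≤ 5)
    (hcommon : ∀ a, G.Adj v a → 3 ≤ #(G.neighborFinset v ∩ G.neighborFinset a))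
    (hx : G.Adj v x) (hy : G.Adj v y) (hxy : x ≠ y) (hnadj : ¬ G.Adj x y) :
    HasMinor G (completeGraph (Fin 5)) := by
  obtain ⟨a, b, c, hab, hca, hcb, hadj⟩ :=
    exists_adj_common_neighbors_of_not_adj hle hcommon hx hy hxy hnadj
  simp only [mem_insert, mem_singleton, forall_eq_or_imp, forall_eq] at hadj
  obtain ⟨⟨hva, hxa, hya⟩, ⟨hvb, hxb, hyb⟩, hvc, hxc, hyc⟩ := hadj
  have hclique : G.IsNClique 4 {v, x, a, b} :=
    (is3Clique_triple_iff.2 ⟨hxa, hxb, hab⟩).insert (by simp [hx, hva, hvb])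
  refine hasMinor_completeGraph_succ_of_isNClique hclique (induce_pair_connected_of_adj hyc) ?_ ?_
  · suffices (y ≠ v ∧ y ≠ x ∧ y ≠ a ∧ y ≠ b) ∧ c ≠ v ∧ c ≠ x ∧ c ≠ a ∧ c ≠ b by simpa
    exact ⟨⟨hy.ne', hxy.symm, hya.ne, hyb.ne⟩, hvc.ne', hxc.ne', hca, hcb⟩
  · simp only [mem_insert, mem_singleton, forall_eq_or_imp, forall_eq]
    exact ⟨⟨y, .inl rfl, hy⟩, ⟨c, .inr rfl, hxc⟩, ⟨y, .inl rfl, hya.symm⟩, ⟨y, .inl rfl, hyb.symm⟩⟩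

theorem hasMinor_completeGraph_five_of_degree_le_five {v : V} (hpos : 0 < G.degree v)
    (hle : G.degree v ≤ 5)
    (hcommon : ∀ x, G.Adj v x → 3 ≤ #(G.neighborFinset v ∩ G.neighborFinset x)) :
    HasMinor G (completeGraph (Fin 5)) := by
  by_cases hN : G.IsClique (G.neighborFinset v)
  · obtain ⟨x, hx⟩ := card_pos.1 hpos
    have hcard : 4 ≤ #(G.neighborFinset v) := by
      have hlt : G.neighborFinset v ∩ G.neighborFinset x ⊂ G.neighborFinset v :=
        (ssubset_iff_of_subset inter_subset_left).2 ⟨x, hx, by simp⟩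
      exact (hcommon x ((mem_neighborFinset ..).1 hx)).trans_lt (card_lt_card hlt)
    obtain ⟨s, hsN, hs⟩ := exists_subset_card_eq hcard
    have adj_v {a : V} (ha : a ∈ s) : G.Adj v a := (mem_neighborFinset ..).1 (hsN ha)
    refine hasMinor_completeGraph_succ_of_isNClique (s := s) (D := {v})
      ⟨hN.subset (coe_subset.2 hsN), hs⟩ ?_ ?_ fun a ha => ⟨v, rfl, (adj_v ha).symm⟩
    · rw [induce_singleton_eq_top]
      exact connected_top
    · exact Set.disjoint_singleton_right.2 fun hv => (adj_v hv).ne rfl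
  · obtain ⟨x, hx, y, hy, hxy, hnadj⟩ :
        ∃ x, G.Adj v x ∧ ∃ y, G.Adj v y ∧ x ≠ y ∧ ¬ G.Adj x y := by
      simpa [IsClique, Set.Pairwise] using hN
    exact hasMinor_completeGraph_five_of_not_adj hle hcommon hx hy hxy hnadj

end EdgeBound

section ContractionCount

open Finset

theorem ncard_edgeSet_add_card_le {U : Type*} [Finite U] {H K : SimpleGraph U} (hle : H ≤ K)
    {A : Finset (Sym2 U)} (hAK : ∀ e ∈ A, e ∈ K.edgeSet) (hAH : ∀ e ∈ A, e ∉ H.edgeSet) :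
    H.edgeSet.ncard + #A ≤ K.edgeSet.ncard := by
  rw [← Set.ncard_coe_finset, ← Set.ncard_union_eq (Set.disjoint_right.2 hAH)]
  exact Set.ncard_le_ncard (Set.union_subset (edgeSet_mono hle) hAK)

variable {V : Type*} [Fintype V] [DecidableEq V] {G : SimpleGraph V} [DecidableRel G.Adj]

theorem card_filter_adj_eq {S : Set V} {m : V} {c : S} (hmS : ∀ v, G.Adj m v → v ∈ S)
    (hmc : G.Adj m c) [Fintype S] [DecidablePred fun v : S => v ≠ c ∧ G.Adj m v ∧ ¬ G.Adj c v] :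
    #{v : S | v ≠ c ∧ G.Adj m v ∧ ¬ G.Adj c v} =
      G.degree m - 1 - #(G.neighborFinset m ∩ G.neighborFinset c) := by
  have hmap : ({v : S | v ≠ c ∧ G.Adj m v ∧ ¬ G.Adj c v} : Finset S).map (.subtype _) =
      (G.neighborFinset m).erase c \ (G.neighborFinset m ∩ G.neighborFinset c) := by
    ext v
    have := hmS v
    simp only [mem_map, mem_filter_univ, Function.Embedding.subtype_apply, Subtype.exists,
      mem_sdiff, mem_inter, mem_erase, mem_neighborFinset]
    grind
  have hsub : G.neighborFinset m ∩ G.neighborFinset c ⊆ (G.neighborFinset m).erase c := by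
    intro v hv
    rw [mem_inter, mem_neighborFinset G c] at hv
    exact mem_erase.2 ⟨hv.2.ne', hv.1⟩
  rw [← card_map, hmap, card_sdiff_of_subset hsub, card_erase_of_mem (by simpa),
    card_neighborFinset_eq_degree]

-- The summand is the number of new edges that the contraction of `m` produces; by `hk`, an edge is
-- produced by at most `k` vertices.
theorem mul_ncard_edgeSet_add_sum_le {S : Set V} {M : Finset V} {c : V → S} {k : ℕ}
    (hMS : ∀ m ∈ M, ∀ v, G.Adj m v → v ∈ S) (hc : ∀ m ∈ M, G.Adj m (c m))
    (hk : ∀ u ∈ S, ∀ v ∈ S, u ≠ v → ¬ G.Adj u v → #{m ∈ M | G.Adj m u ∧ G.Adj m v} ≤ k) :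
    k * (G.induce S).edgeSet.ncard +
        ∑ m ∈ M, (G.degree m - 1 - #(G.neighborFinset m ∩ G.neighborFinset (c m))) ≤
      k * (starContraction G S M c).edgeSet.ncard := by
  classical
  let P : Finset (Σ _ : V, S) :=
    M.sigma fun m => {v | v ≠ c m ∧ G.Adj m v ∧ ¬ G.Adj (c m) v}
  let pair (p : Σ _ : V, S) : Sym2 S := s(c p.1, p.2)
  have mem_P {p : Σ _ : V, S} (hp : p ∈ P) :
      p.1 ∈ M ∧ p.2 ≠ c p.1 ∧ G.Adj p.1 p.2 ∧ ¬ G.Adj (c p.1) p.2 := by simpa [P] using hp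
  have hcard : ∑ m ∈ M, (G.degree m - 1 - #(G.neighborFinset m ∩ G.neighborFinset (c m))) = #P := by
    rw [card_sigma]
    exact sum_congr rfl fun m hm => (card_filter_adj_eq (hMS m hm) (hc m hm)).symm
  have hfiber : #P ≤ k * #(P.image pair) := by
    refine card_le_mul_card_image P k (forall_mem_image.2 fun p hp => ?_)
    obtain ⟨-, hne, -, hnadj⟩ := mem_P hp
    refine le_trans ?_ (hk _ (c p.1).2 _ p.2.2 (Subtype.coe_ne_coe.2 hne.symm) hnadj)
    refine card_le_card_of_injOn Sigma.fst (fun q hq => ?_) fun q hq q' hq' h => ?_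
    · obtain ⟨hq, heq⟩ := mem_filter.1 hq
      obtain ⟨hqM, -, hadj, -⟩ := mem_P hq
      have := hc q.1 hqM
      rcases Sym2.eq_iff.1 heq with ⟨h1, h2⟩ | ⟨h1, h2⟩ <;> simp_all
    · have heq : pair q = pair q' := (mem_filter.1 hq).2.trans (mem_filter.1 hq').2.symm
      obtain ⟨m, v⟩ := q
      obtain ⟨_, v'⟩ := q'
      obtain rfl : m = _ := h
      exact congrArg (Sigma.mk m) (Sym2.congr_right.1 heq)
  have hedges : (G.induce S).edgeSet.ncard + #(P.image pair) ≤
      (starContraction G S M c).edgeSet.ncard := by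
    refine ncard_edgeSet_add_card_le (fun u v => starContraction_adj_of_adj)
      (forall_mem_image.2 fun p hp => ?_) (forall_mem_image.2 fun p hp => (mem_P hp).2.2.2)
    obtain ⟨hM, hne, hadj, -⟩ := mem_P hp
    exact starContraction_adj_of_mem hM hne.symm hadj
  calc k * (G.induce S).edgeSet.ncard + _
      ≤ k * (G.induce S).edgeSet.ncard + k * #(P.image pair) := by
        rw [hcard]
        gcongr
    _ = k * ((G.induce S).edgeSet.ncard + #(P.image pair)) := (mul_add ..).symm
    _ ≤ k * (starContraction G S M c).edgeSet.ncard := Nat.mul_le_mul_left k hedges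

end ContractionCount

section Mader

open Finset

theorem ncard_edgeSet_induce_compl_singleton_add_degree {V : Type*} [Fintype V] (G : SimpleGraph V)
    [DecidableRel G.Adj] (v : V) :
    (G.induce {v}ᶜ).edgeSet.ncard + G.degree v = G.edgeSet.ncard := by
  classical
  have hle : G.degree v ≤ #G.edgeFinset := by
    rw [← card_incidenceFinset_eq_degree]
    exact card_le_card (G.incidenceFinset_subset v)
  rw [← coe_edgeFinset, ← coe_edgeFinset, Set.ncard_coe_finset, Set.ncard_coe_finset,
    card_edgeFinset_induce_compl_singleton, card_edgeFinset_deleteIncidenceSet,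
    Nat.sub_add_cancel hle]

theorem ncard_edgeSet_le_starContraction_singleton {V : Type*} [Fintype V] [DecidableEq V]
    {G : SimpleGraph V} [DecidableRel G.Adj] {v x : V} (hx : G.Adj v x) :
    G.edgeSet.ncard ≤ (starContraction G {v}ᶜ {v} fun _ => ⟨x, hx.ne'⟩).edgeSet.ncard + 1 +
      #(G.neighborFinset v ∩ G.neighborFinset x) := by
  have hcount := mul_ncard_edgeSet_add_sum_le (G := G) (S := {v}ᶜ) (M := {v})
    (c := fun _ => ⟨x, hx.ne'⟩) (k := 1) (by simpa using fun u hu => Adj.ne' hu) (by simpa)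
    fun _ _ _ _ _ _ => (card_filter_le _ _).trans_eq (card_singleton v)
  simp only [one_mul, sum_singleton, coe_singleton] at hcount
  rw [← ncard_edgeSet_induce_compl_singleton_add_degree G v]
  omega

theorem hasMinor_completeGraph_five_of_edge_critical {V : Type*} [Finite V] {G : SimpleGraph V}
    (hedge : G.edgeSet.ncard + 5 = 3 * Nat.card V)
    (hminor : ∀ v, ∀ H : SimpleGraph ({v}ᶜ : Set V), HasMinor G H →
      H.edgeSet.ncard + 9 ≤ 3 * Nat.card V) :
    HasMinor G (completeGraph (Fin 5)) := by
  classical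
  have := Fintype.ofFinite V
  obtain ⟨v, hv⟩ : ∃ v, G.degree v < 6 := by
    by_contra! h
    have hsum : 6 * Nat.card V ≤ 2 * G.edgeSet.ncard := by
      calc 6 * Nat.card V = ∑ _v : V, 6 := by simp [mul_comm]
        _ ≤ ∑ v, G.degree v := sum_le_sum fun v _ => h v
        _ = 2 * G.edgeSet.ncard := by
          rw [sum_degrees_eq_twice_card_edges, ← coe_edgeFinset, Set.ncard_coe_finset]
    omega
  have hdelete := hminor v _ (hasMinor_induce _)
  have hdegree := ncard_edgeSet_induce_compl_singleton_add_degree G v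
  refine hasMinor_completeGraph_five_of_degree_le_five (by omega) (Nat.lt_succ_iff.1 hv)
    fun x hx => ?_
  have hcontract := hminor v _ (hasMinor_starContraction (M := {v}) (c := fun _ => ⟨x, hx.ne'⟩)
    disjoint_compl_left (by simpa))
  have hcount := ncard_edgeSet_le_starContraction_singleton hx
  omega

theorem exists_le_ncard_edgeSet_eq {V : Type*} [Finite V] {G : SimpleGraph V} {k : ℕ}
    (hk : k ≤ G.edgeSet.ncard) : ∃ K ≤ G, K.edgeSet.ncard = k := by
  obtain ⟨A, hA, hAk⟩ := Set.exists_subset_card_eq hk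
  have hdiag : A \ Sym2.diagSet = A :=
    sdiff_eq_left.2 (Set.disjoint_left.2 fun e he => G.not_isDiag_of_mem_edgeSet (hA he))
  refine ⟨fromEdgeSet A, (fromEdgeSet_le _).2 (Set.sdiff_subset.trans hA), ?_⟩
  rw [edgeSet_fromEdgeSet, hdiag, hAk]

theorem ncard_edgeSet_add_six_le {V : Type*} [Finite V] {G : SimpleGraph V}
    (h5 : ¬ HasMinor G (completeGraph (Fin 5))) (h3 : 3 ≤ Nat.card V) :
    G.edgeSet.ncard + 6 ≤ 3 * Nat.card V := by
  classical
  have := Fintype.ofFinite V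
  induction hn : Nat.card V using Nat.strong_induction_on generalizing V with | _ n ih
  subst hn
  by_contra! hlt
  have hcard : 5 ≤ Nat.card V := by
    have hle := G.card_edgeFinset_le_card_choose_two
    rw [← Nat.card_eq_fintype_card, ← Set.ncard_coe_finset, coe_edgeFinset] at hle
    by_contra! h
    interval_cases Nat.card V <;> simp [Nat.choose] at hle <;> omega
  obtain ⟨K, hKG, hK⟩ := exists_le_ncard_edgeSet_eq
    (show 3 * Nat.card V - 5 ≤ G.edgeSet.ncard by omega)
  refine h5 (.mono hKG (hasMinor_completeGraph_five_of_edge_critical (by omega) fun v H hH => ?_))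
  have hv : Nat.card ({v}ᶜ : Set V) + 1 = Nat.card V := by
    rw [Nat.card_coe_set_eq, ← Set.ncard_singleton v, add_comm, Set.ncard_add_ncard_compl]
  have := ih _ (by omega) (fun h => h5 (.mono hKG (hH.trans h))) (by omega) (Fintype.ofFinite _) rfl
  omega

end Mader

section Discharging

open Finset

variable {V : Type*} [Fintype V] [DecidableEq V] {G : SimpleGraph V} [DecidableRel G.Adj]

/-- The charge that a vertex `w` outside the terminal set sends to its neighbour `t`. The
subtraction is truncated: nothing is sent as soon as `w` and `t` have two common neighbours. -/
def charge (G : SimpleGraph V) [DecidableRel G.Adj] (w t : V) : ℕ :=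
  2 - #(G.neighborFinset w ∩ G.neighborFinset t)

theorem twelve_le_two_mul_card_add_sum_charge {T : Finset V} {t : V}
    (hstable : ∀ w ∉ T, ∀ v, G.Adj w v → v ∈ T)
    (hcommon : ∀ x ∈ T, G.Adj t x → #((G.neighborFinset t ∩ G.neighborFinset x) \ T) ≤ 2)
    (ht : ¬ (G.degree t ≤ 10 ∧ #(G.neighborFinset t ∩ T) ≤ 5)) :
    12 ≤ 2 * #(G.neighborFinset t ∩ T) + ∑ w ∈ G.neighborFinset t \ T, charge G w t := by
  set A := G.neighborFinset t ∩ T with hA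
  set B := G.neighborFinset t \ T with hB
  have hcard : #A + #B = G.degree t := card_inter_add_card_sdiff ..
  have hcount : ∑ w ∈ B, #(G.neighborFinset w ∩ G.neighborFinset t) ≤ 2 * #A := by
    calc ∑ w ∈ B, #(G.neighborFinset w ∩ G.neighborFinset t)
        = ∑ w ∈ B, #{x ∈ A | G.Adj w x} := by
          refine sum_congr rfl fun w hw => congrArg card ?_
          ext x
          have := hstable w (mem_sdiff.1 hw).2 x
          simp only [hA, mem_inter, mem_filter, mem_neighborFinset]
          tauto
      _ = ∑ x ∈ A, #{w ∈ B | G.Adj w x} :=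
          sum_card_bipartiteAbove_eq_sum_card_bipartiteBelow _
      _ ≤ ∑ _x ∈ A, 2 := by
          refine sum_le_sum fun x hx => ?_
          rw [hA, mem_inter, mem_neighborFinset] at hx
          refine (card_le_card fun w hw => ?_).trans (hcommon x hx.2 hx.1)
          simp only [hB, mem_filter, mem_sdiff, mem_neighborFinset] at hw
          simpa [hw] using hw.2.symm
      _ = 2 * #A := by rw [sum_const, smul_eq_mul, mul_comm]
  have hcharge : 2 * #B ≤
      ∑ w ∈ B, charge G w t + ∑ w ∈ B, #(G.neighborFinset w ∩ G.neighborFinset t) := by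
    rw [← sum_add_distrib, mul_comm, ← smul_eq_mul, ← sum_const]
    exact sum_le_sum fun w _ => le_tsub_add
  omega

theorem sum_charge_add_two_le {w x y : V} (hx : G.Adj w x) (hy : G.Adj w y) (hxy : G.Adj x y) :
    ∑ t ∈ G.neighborFinset w, charge G w t + 2 ≤ 2 * G.degree w := by
  set s := {t ∈ G.neighborFinset w | 0 < #(G.neighborFinset w ∩ G.neighborFinset t)}
  have hs : 2 ≤ #s := by
    have hsub : {x, y} ⊆ s := by
      refine insert_subset (mem_filter.2 ⟨by simpa, card_pos.2 ⟨y, ?_⟩⟩)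
        (singleton_subset_iff.2 (mem_filter.2 ⟨by simpa, card_pos.2 ⟨x, ?_⟩⟩))
      · simpa using ⟨hy, hxy⟩
      · simpa using ⟨hx, hxy.symm⟩
    exact (card_pair hxy.ne).symm.trans_le (card_le_card hsub)
  calc ∑ t ∈ G.neighborFinset w, charge G w t + 2
      ≤ ∑ t ∈ G.neighborFinset w, charge G w t + #s := by gcongr
    _ ≤ ∑ _t ∈ G.neighborFinset w, 2 := by
        rw [card_filter, ← sum_add_distrib]
        refine sum_le_sum fun t _ => ?_
        unfold charge
        split_ifs <;> omega
    _ = 2 * G.degree w := by rw [sum_const, smul_eq_mul, mul_comm, card_neighborFinset_eq_degree]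

theorem charge_eq_zero {w t x y : V} (hwx : G.Adj w x) (hwy : G.Adj w y) (htx : G.Adj t x)
    (hty : G.Adj t y) (hxy : x ≠ y) : charge G w t = 0 := by
  refine Nat.sub_eq_zero_of_le ((card_pair hxy).symm.trans_le (card_le_card ?_))
  exact insert_subset (by simpa using ⟨hwx, htx⟩)
    (singleton_subset_iff.2 (by simpa using ⟨hwy, hty⟩))

theorem exists_charge_eq_zero {w : V} (hdeg : G.degree w = 3)
    (hpos : ∀ t, G.Adj w t → ∃ u, G.Adj w u ∧ G.Adj t u) :
    ∃ t, G.Adj w t ∧ charge G w t = 0 := by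
  obtain ⟨a, ha⟩ : (G.neighborFinset w).Nonempty := card_pos.1 (by simp [hdeg])
  rw [mem_neighborFinset] at ha
  obtain ⟨b, hb, hab⟩ := hpos a ha
  obtain ⟨c, hc, hcab⟩ : ∃ c ∈ G.neighborFinset w, c ∉ ({a, b} : Finset V) :=
    exists_mem_notMem_of_card_lt_card (card_le_two.trans_lt (by simp [hdeg]))
  rw [mem_neighborFinset] at hc
  simp only [mem_insert, mem_singleton, not_or] at hcab
  obtain ⟨d, hd, hcd⟩ := hpos c hc
  have heq : {a, b, c} = G.neighborFinset w := by
    refine eq_of_subset_of_card_le (by simp [insert_subset_iff, ha, hb, hc]) ?_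
    rw [card_neighborFinset_eq_degree, hdeg,
      card_eq_three.2 ⟨a, b, c, hab.ne, Ne.symm hcab.1, Ne.symm hcab.2, rfl⟩]
  have hmem : d ∈ ({a, b, c} : Finset V) := by rwa [heq, mem_neighborFinset]
  simp only [mem_insert, mem_singleton] at hmem
  obtain rfl | rfl | rfl := hmem
  · exact ⟨d, hd, charge_eq_zero hb hc hab hcd.symm (Ne.symm hcab.2)⟩
  · exact ⟨d, hd, charge_eq_zero ha hc hab.symm hcd.symm (Ne.symm hcab.1)⟩
  · exact (hcd.ne rfl).elim

theorem sum_charge_le_two {w : V} (hdeg : G.degree w = 3)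
    (hpos : ∀ t, G.Adj w t → 0 < #(G.neighborFinset w ∩ G.neighborFinset t)) :
    ∑ t ∈ G.neighborFinset w, charge G w t ≤ 2 := by
  obtain ⟨a, ha, ha0⟩ := exists_charge_eq_zero hdeg fun t ht => by
    obtain ⟨u, hu⟩ := card_pos.1 (hpos t ht)
    simp only [mem_inter, mem_neighborFinset] at hu
    exact ⟨u, hu⟩
  have haN : a ∈ G.neighborFinset w := by simpa
  rw [← add_sum_erase _ _ haN, ha0, zero_add]
  calc ∑ t ∈ (G.neighborFinset w).erase a, charge G w t
      ≤ #((G.neighborFinset w).erase a) • 1 := by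
        refine sum_le_card_nsmul _ _ _ fun t ht => ?_
        have := hpos t ((mem_neighborFinset ..).1 (mem_of_mem_erase ht))
        unfold charge
        omega
    _ = 2 := by rw [card_erase_of_mem haN, card_neighborFinset_eq_degree, hdeg, smul_eq_mul]

theorem exists_adj_sum_charge_le {w x y : V} (hdeg : 3 ≤ G.degree w) (hx : G.Adj w x)
    (hy : G.Adj w y) (hxy : G.Adj x y) :
    ∃ b, G.Adj w b ∧ ∑ t ∈ G.neighborFinset w, charge G w t ≤
      2 * (G.degree w - 1 - #(G.neighborFinset w ∩ G.neighborFinset b)) := by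
  obtain ⟨b, hb, hmin⟩ := (G.neighborFinset w).exists_min_image
    (fun t => #(G.neighborFinset w ∩ G.neighborFinset t)) ⟨x, by simpa⟩
  rw [mem_neighborFinset] at hb
  refine ⟨b, hb, ?_⟩
  have hsum : ∑ t ∈ G.neighborFinset w, charge G w t ≤
      G.degree w * (2 - #(G.neighborFinset w ∩ G.neighborFinset b)) :=
    sum_le_card_nsmul _ _ _ fun t ht => Nat.sub_le_sub_left (hmin t ht) 2
  obtain h0 | h1 | h2 : #(G.neighborFinset w ∩ G.neighborFinset b) = 0 ∨
      #(G.neighborFinset w ∩ G.neighborFinset b) = 1 ∨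
      2 ≤ #(G.neighborFinset w ∩ G.neighborFinset b) := by omega
  · have := sum_charge_add_two_le hx hy hxy
    omega
  · obtain h3 | h4 := hdeg.eq_or_lt
    · have := sum_charge_le_two h3.symm fun t ht => by
        have := hmin t (by simpa)
        omega
      omega
    · have : ∑ t ∈ G.neighborFinset w, charge G w t ≤ G.degree w := by simpa [h1] using hsum
      omega
  · rw [Nat.sub_eq_zero_of_le h2, mul_zero] at hsum
    omega

theorem sum_sum_charge_comm {T : Finset V} (hstable : ∀ w ∉ T, ∀ v, G.Adj w v → v ∈ T) :
    ∑ t ∈ T, ∑ w ∈ G.neighborFinset t \ T, charge G w t =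
      ∑ w ∈ Tᶜ, ∑ t ∈ G.neighborFinset w, charge G w t := by
  refine sum_comm' fun t w => ?_
  simp only [mem_sdiff, mem_neighborFinset, mem_compl, G.adj_comm t w]
  exact ⟨fun h => ⟨h.2.1, h.2.2⟩, fun h => ⟨hstable w h.2 t h.1, h.1, h.2⟩⟩

theorem two_mul_ncard_edgeSet_induce (T : Finset V) :
    2 * (G.induce (T : Set V)).edgeSet.ncard = ∑ t ∈ T, #(G.neighborFinset t ∩ T) := by
  rw [← coe_edgeFinset, Set.ncard_coe_finset, ← sum_degrees_eq_twice_card_edges,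
    sum_subtype T (p := (· ∈ (T : Set V))) fun _ => mem_coe.symm]
  refine sum_congr rfl fun t _ => ?_
  rw [← card_neighborFinset_eq_degree, ← card_map (.subtype (· ∈ (T : Set V)))]
  refine congrArg card ?_
  ext
  simp

theorem sum_card_add_sum_charge_le {T : Finset V} (hstable : ∀ w ∉ T, ∀ v, G.Adj w v → v ∈ T)
    (h5 : ¬ HasMinor G (completeGraph (Fin 5))) (hT : 3 ≤ #T) (hdeg : ∀ w ∉ T, 3 ≤ G.degree w)
    (hedge : ∀ w ∉ T, ∃ x y, G.Adj w x ∧ G.Adj w y ∧ G.Adj x y)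
    (hcommon : ∀ t ∈ T, ∀ x ∈ T, t ≠ x → ¬ G.Adj t x →
      #((G.neighborFinset t ∩ G.neighborFinset x) \ T) ≤ 2) :
    ∑ t ∈ T, 2 * #(G.neighborFinset t ∩ T) + ∑ w ∈ Tᶜ, ∑ t ∈ G.neighborFinset w, charge G w t + 24 ≤
      12 * #T := by
  have hcontract (w : V) : ∃ b : T, w ∉ T → G.Adj w b ∧ ∑ t ∈ G.neighborFinset w, charge G w t ≤
      2 * (G.degree w - 1 - #(G.neighborFinset w ∩ G.neighborFinset b)) := by
    by_cases hw : w ∈ T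
    · exact ⟨⟨w, hw⟩, fun h => (h hw).elim⟩
    · obtain ⟨x, y, hx, hy, hxy⟩ := hedge w hw
      obtain ⟨b, hb, hcharge⟩ := exists_adj_sum_charge_le (hdeg w hw) hx hy hxy
      exact ⟨⟨b, hstable w hw b hb⟩, fun _ => ⟨hb, hcharge⟩⟩
  choose c hc using hcontract
  have hminor : HasMinor G (starContraction G (T : Set V) ↑Tᶜ c) :=
    hasMinor_starContraction (by simpa using disjoint_compl_right)
      fun w hw => (hc w (mem_compl.1 hw)).1
  have hedges := mul_ncard_edgeSet_add_sum_le (S := (T : Set V)) (k := 2)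
    (fun w hw => hstable w (mem_compl.1 hw)) (fun w hw => (hc w (mem_compl.1 hw)).1)
    fun u hu v hv huv hnadj => (card_le_card fun w hw => by
      simp only [mem_filter, mem_compl, G.adj_comm w] at hw
      simp [hw]).trans (hcommon u hu v hv huv hnadj)
  have hmader := ncard_edgeSet_add_six_le (fun h => h5 (hminor.trans h)) (by simpa using hT)
  have hcharge := sum_le_sum fun w hw => (hc w (mem_compl.1 hw)).2
  rw [← mul_sum] at hcharge ⊢
  rw [two_mul_ncard_edgeSet_induce] at hedges
  rw [Nat.card_eq_card_toFinset, toFinset_coe] at hmader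
  omega

theorem twelve_mul_card_le_of_isClique {T E : Finset V} (hET : E ⊆ T) (hE : G.IsClique E)
    (hcard : #E ≤ 2) : 12 * #E ≤ ∑ t ∈ E, 2 * #(G.neighborFinset t ∩ T) + 20 := by
  obtain h1 | h2 : #E ≤ 1 ∨ #E = 2 := by omega
  · omega
  · have hpos {t : V} (ht : t ∈ E) : 2 ≤ 2 * #(G.neighborFinset t ∩ T) := by
      obtain ⟨x, hx, hxt⟩ := E.exists_mem_ne (by omega) t
      have : 0 < #(G.neighborFinset t ∩ T) :=
        card_pos.2 ⟨x, by simpa using ⟨hE ht hx hxt.symm, hET hx⟩⟩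
      omega
    have := card_nsmul_le_sum E _ 2 fun t ht => hpos ht
    rw [smul_eq_mul] at this
    omega

theorem exists_light_of_card_common_le_two {T E : Finset V}
    (hstable : ∀ w ∉ T, ∀ v, G.Adj w v → v ∈ T)
    (h5 : ¬ HasMinor G (completeGraph (Fin 5))) (hT : 3 ≤ #T) (hdeg : ∀ w ∉ T, 3 ≤ G.degree w)
    (hedge : ∀ w ∉ T, ∃ x y, G.Adj w x ∧ G.Adj w y ∧ G.Adj x y)
    (hcommon : ∀ t ∈ T, ∀ x ∈ T, t ≠ x → #((G.neighborFinset t ∩ G.neighborFinset x) \ T) ≤ 2)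
    (hET : E ⊆ T) (hE : G.IsClique E) (hcard : #E ≤ 2) :
    ∃ t ∈ T \ E, G.degree t ≤ 10 ∧ #(G.neighborFinset t ∩ T) ≤ 5 := by
  by_contra! hheavy
  have hterminal (t : V) (ht : t ∈ T \ E) :
      12 ≤ 2 * #(G.neighborFinset t ∩ T) + ∑ w ∈ G.neighborFinset t \ T, charge G w t :=
    twelve_le_two_mul_card_add_sum_charge hstable
      (fun x hx htx => hcommon t (mem_sdiff.1 ht).1 x hx htx.ne)
      fun h => (hheavy t ht h.1).not_ge h.2
  have htotal := card_nsmul_le_sum _ _ 12 hterminal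
  have hexempt := twelve_mul_card_le_of_isClique hET hE hcard
  have hexempt' : 12 * #E ≤ ∑ t ∈ E,
      (2 * #(G.neighborFinset t ∩ T) + ∑ w ∈ G.neighborFinset t \ T, charge G w t) + 20 :=
    hexempt.trans (by gcongr; exact Nat.le_add_right _ _)
  have hsplit := sum_sdiff hET (f := fun t =>
    2 * #(G.neighborFinset t ∩ T) + ∑ w ∈ G.neighborFinset t \ T, charge G w t)
  have hmader := sum_card_add_sum_charge_le hstable h5 hT hdeg hedge
    fun t ht x hx htx _ => hcommon t ht x hx htx
  rw [← sum_sum_charge_comm hstable, ← sum_add_distrib] at hmader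
  have := card_sdiff_add_card_eq_card hET
  rw [smul_eq_mul] at htotal
  omega

end Discharging

section Reduction

variable {V : Type*} {G : SimpleGraph V} {T E : Set V}

/-- A light vertex has the low degree and the few neighbours in `T` that the theorem asks of a
terminal. Membership in `T` is not included. -/
def IsLight (G : SimpleGraph V) (T : Set V) (t : V) : Prop :=
  (G.neighborSet t).ncard ≤ 10 ∧ (G.neighborSet t ∩ T).ncard ≤ 5

/-- The instances through which the induction runs: a planar graph with terminal set `T`, together
with a clique `E` of at most two terminals, exempt from the search for a light one. The terminals
themselves may have arbitrarily small degree. -/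
structure IsAdmissible (G : SimpleGraph V) (T E : Set V) : Prop where
  planar : IsPlanar G
  stable : ∀ a b, a ∉ T → b ∉ T → ¬ G.Adj a b
  three_le : ∀ w ∉ T, 3 ≤ (G.neighborSet w).ncard
  subset : E ⊆ T
  clique : G.IsClique E
  card_le : E.ncard ≤ 2
  nonempty : (T \ E).Nonempty

/-- There is an admissible graph on a proper subset of the vertices, each of whose light non-exempt
terminals is also a light non-exempt terminal of `G`. -/
def IsReducible (G : SimpleGraph V) (T E : Set V) : Prop :=
  ∃ (S : Set V) (H : SimpleGraph S) (E' : Set S), S ≠ Set.univ ∧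
    IsAdmissible H (Subtype.val ⁻¹' T) E' ∧
    ∀ v : S, (v : V) ∈ T → v ∉ E' → IsLight H (Subtype.val ⁻¹' T) v → (v : V) ∉ E ∧ IsLight G T v

theorem isPlanar_starContraction_singleton (hG : IsPlanar G) {S : Set V} {w : V} {x : S}
    (hwS : w ∉ S) (hwx : G.Adj w x) : IsPlanar (starContraction G S {w} fun _ => x) :=
  hG.of_hasMinor (hasMinor_starContraction (by simpa using hwS) (by simpa using hwx))

theorem not_adj_starContraction_singleton (hstable : ∀ a b, a ∉ T → b ∉ T → ¬ G.Adj a b)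
    {S : Set V} {w : V} {x : S} (hwT : w ∉ T) (u v : S) (hu : (u : V) ∉ T) (hv : (v : V) ∉ T) :
    ¬ (starContraction G S {w} fun _ => x).Adj u v := by
  rintro ⟨-, (h | ⟨_, rfl, -, h⟩) | h | ⟨_, rfl, -, h⟩⟩
  exacts [hstable _ _ hu hv h, hstable _ _ hwT hv h, hstable _ _ hv hu h, hstable _ _ hwT hu h]

theorem starContraction_singleton_adj {S : Set V} {w : V} {x v : S} (hne : x ≠ v)
    (h : G.Adj w v) : (starContraction G S {w} fun _ => x).Adj x v :=
  starContraction_adj_of_mem (c := fun _ => x) (Set.mem_singleton w) hne h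

theorem ncard_neighborSet_inter_le_starContraction [Finite V] {S M : Set V} {c : V → S} (v : S) :
    (G.neighborSet v ∩ S).ncard ≤ ((starContraction G S M c).neighborSet v).ncard := by
  rw [← Set.ncard_image_of_injective _ Subtype.val_injective]
  exact Set.ncard_le_ncard fun a ha => ⟨⟨a, ha.2⟩, starContraction_adj_of_adj ha.1, rfl⟩

theorem ncard_preimage_val_le [Finite V] {S : Set V} (A : Set V) :
    (Subtype.val ⁻¹' A : Set S).ncard ≤ A.ncard :=
  ENat.toNat_le_toNat (Set.encard_preimage_val_le_encard_right S A) A.toFinite.encard_lt_top.ne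

theorem IsLight.of_starContraction [Finite V] {S M : Set V} {c : V → S} {w : V} {v : S}
    (hwT : w ∉ T) (hN : G.neighborSet v ⊆ insert w S)
    (hnew : G.Adj v w → ∃ y : S, ¬ G.Adj v y ∧ (starContraction G S M c).Adj v y)
    (h : IsLight (starContraction G S M c) (Subtype.val ⁻¹' T) v) : IsLight G T v := by
  set N := (starContraction G S M c).neighborSet v
  have hold {a : V} (ha : G.Adj v a) (haw : a ≠ w) : a ∈ Subtype.val '' N :=
    ⟨⟨a, (hN ha).resolve_left haw⟩, starContraction_adj_of_adj ha, rfl⟩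
  have hcard (A : Set S) : (Subtype.val '' A).ncard = A.ncard :=
    Set.ncard_image_of_injective _ Subtype.val_injective
  refine ⟨le_trans ?_ h.1, le_trans ?_ h.2⟩
  · rw [← hcard]
    by_cases hvw : G.Adj v w
    · obtain ⟨y, hvy, hy⟩ := hnew hvw
      have hyN : (y : V) ∈ Subtype.val '' N := ⟨y, hy, rfl⟩
      calc (G.neighborSet v).ncard
          ≤ (insert w ((Subtype.val '' N) \ {(y : V)})).ncard :=
            Set.ncard_le_ncard fun a ha => or_iff_not_imp_left.2 fun haw =>
              ⟨hold ha haw, fun hay => hvy (hay ▸ ha)⟩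
        _ ≤ ((Subtype.val '' N) \ {(y : V)}).ncard + 1 := Set.ncard_insert_le _ _
        _ = (Subtype.val '' N).ncard := Set.ncard_sdiff_singleton_add_one hyN
    · exact Set.ncard_le_ncard fun a ha => hold ha fun haw => hvw (haw ▸ ha)
  · rw [← hcard]
    refine Set.ncard_le_ncard fun a ha => ?_
    obtain ⟨b, hb, rfl⟩ := hold ha.1 (ne_of_mem_of_not_mem ha.2 hwT)
    exact ⟨b, ⟨hb, ha.2⟩, rfl⟩

theorem IsAdmissible.isReducible_of_starContraction [Finite V] (h : IsAdmissible G T E) {S : Set V}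
    {E' : Set S} {w : V} {x : S} (hwS : w ∉ S) (hwT : w ∉ T) (hwx : G.Adj w x)
    (hthree : ∀ u ∈ S, u ∉ T → 3 ≤ (G.neighborSet u ∩ S).ncard) (hsub : E' ⊆ Subtype.val ⁻¹' T)
    (hclique : (starContraction G S {w} fun _ => x).IsClique E') (hcard : E'.ncard ≤ 2)
    (hnonempty : (Subtype.val ⁻¹' T \ E').Nonempty)
    (hkeep : ∀ v : S, (v : V) ∈ T → v ∉ E' → (v : V) ∉ E ∧ G.neighborSet v ⊆ insert w S ∧
      (G.Adj v w → ∃ y : S, ¬ G.Adj v y ∧ (starContraction G S {w} fun _ => x).Adj v y)) :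
    IsReducible G T E := by
  refine ⟨S, starContraction G S {w} fun _ => x, E', fun hS => hwS (hS ▸ Set.mem_univ w), ?_, ?_⟩
  · exact {
      planar := isPlanar_starContraction_singleton h.planar hwS hwx
      stable := not_adj_starContraction_singleton h.stable hwT
      three_le u hu := (hthree u u.2 hu).trans (ncard_neighborSet_inter_le_starContraction u)
      subset := hsub
      clique := hclique
      card_le := hcard
      nonempty := hnonempty }
  · intro v hvT hvE hlight
    obtain ⟨hv, hN, hnew⟩ := hkeep v hvT hvE
    exact ⟨hv, hlight.of_starContraction hwT hN hnew⟩

theorem IsAdmissible.isReducible_of_neighborSet_edgeless [Finite V] (h : IsAdmissible G T E) {w : V}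
    (hw : w ∉ T) (hedgeless : ∀ x y, G.Adj w x → G.Adj w y → ¬ G.Adj x y) :
    IsReducible G T E := by
  obtain ⟨b, z, -, hb, hz, -, hbz, -, -⟩ := (Set.two_lt_ncard_iff).1 (h.three_le w hw)
  let x : ({w}ᶜ : Set V) := ⟨b, hb.ne'⟩
  refine h.isReducible_of_starContraction (E' := Subtype.val ⁻¹' E) (x := x) (by simp) hw hb
    (fun u _ hu => ?_) (Set.preimage_mono h.subset) (fun u hu v hv huv => ?_) ?_ ?_
    fun v _ hvE => ⟨hvE, fun a _ => em (a = w), fun hvw => ?_⟩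
  · have hsub : G.neighborSet u ⊆ {w}ᶜ := fun a ha (haw : a = w) =>
      h.stable _ _ hu hw (haw ▸ ha)
    rw [Set.inter_eq_left.2 hsub]
    exact h.three_le u hu
  · exact starContraction_adj_of_adj (h.clique hu hv (Subtype.coe_ne_coe.2 huv))
  · exact (ncard_preimage_val_le E).trans h.card_le
  · obtain ⟨t, ht, htE⟩ := h.nonempty
    exact ⟨⟨t, ne_of_mem_of_not_mem ht hw⟩, ht, htE⟩
  · by_cases hvb : x = v
    · subst hvb
      exact ⟨⟨z, hz.ne'⟩, hedgeless _ _ hb hz,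
        starContraction_singleton_adj (Subtype.coe_ne_coe.1 hbz) hz⟩
    · exact ⟨x, hedgeless _ _ hvw.symm hb, (starContraction_singleton_adj hvb hvw.symm).symm⟩

theorem connected_induce_componentCompl {K : Set V} (D : G.ComponentCompl K) :
    (G.induce (D : Set V)).Connected :=
  (ConnectedComponent.connected_toSimpleGraph D).map
    { toFun := fun v => ⟨v.1.1, ⟨v.1.2, v.2⟩⟩, map_rel' := fun h => h }
    fun v => ⟨⟨⟨v, ComponentCompl.notMem_of_mem v.2⟩, v.2.choose_spec⟩, rfl⟩

theorem hasMinor_completeBipartiteGraph_three_three {t x : V} {D : Set V} {a : Fin 3 → V}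
    (hD : (G.induce D).Connected) (htx : t ≠ x) (htD : t ∉ D) (hxD : x ∉ D) (ha : a.Injective)
    (haD : ∀ i, a i ∉ D) (hta : ∀ i, G.Adj t (a i)) (hxa : ∀ i, G.Adj x (a i))
    (hDa : ∀ i, ∃ d ∈ D, G.Adj d (a i)) :
    HasMinor G (completeBipartiteGraph (Fin 3) (Fin 3)) := by
  have hsingleton (v : V) : (G.induce {v}).Connected := by
    rw [induce_singleton_eq_top]
    exact connected_top
  have hne : D.Nonempty := (hDa 0).imp fun _ h => h.1
  have hadj (i j : Fin 3) : ∃ u ∈ (![{t}, {x}, D] : Fin 3 → Set V) i, G.Adj u (a j) := by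
    fin_cases i
    exacts [⟨t, rfl, hta j⟩, ⟨x, rfl, hxa j⟩, hDa j]
  refine ⟨Sum.elim ![{t}, {x}, D] fun i => {a i}, ?_, ?_, ?_, ?_⟩
  · rintro (i | i)
    · fin_cases i <;> simp [hne]
    · exact Set.singleton_nonempty _
  · rintro (i | i)
    · fin_cases i
      exacts [hsingleton t, hsingleton x, hD]
    · exact hsingleton _
  · rintro (i | i) (j | j) hij
    · fin_cases i <;> fin_cases j <;> simp_all [htx.symm]
    · fin_cases i <;> simp [(hta j).ne, (hxa j).ne, haD j]
    · fin_cases j <;> simp [(hta i).ne', (hxa i).ne', haD i]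
    · simpa using ha.ne fun h => hij (congrArg _ h)
  · rintro (i | i) (j | j) hij
    · simp at hij
    · obtain ⟨u, hu, huj⟩ := hadj i j
      exact ⟨u, hu, a j, rfl, huj⟩
    · obtain ⟨u, hu, hui⟩ := hadj j i
      exact ⟨a i, rfl, u, hu, hui.symm⟩
    · simp at hij

theorem exists_forall_not_adj_of_componentCompl
    (hG : ¬ HasMinor G (completeBipartiteGraph (Fin 3) (Fin 3))) {t x : V} (htx : t ≠ x)
    {C : Set V} (hsub : C ⊆ G.commonNeighbors t x) (hC : 3 ≤ C.ncard)
    (D : G.ComponentCompl ({t, x} ∪ C)) : ∃ w ∈ C, ∀ d ∈ D, ¬ G.Adj d w := by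
  by_contra! hall
  obtain ⟨a, b, c, ha, hb, hc, hab, hac, hbc⟩ :=
    (Set.two_lt_ncard_iff (Set.finite_of_ncard_pos (by omega))).1 hC
  have hmem (i : Fin 3) : ![a, b, c] i ∈ C := by fin_cases i <;> assumption
  have hD {v : V} (hv : v ∈ {t, x} ∪ C) : v ∉ (D : Set V) :=
    fun hvD => ComponentCompl.notMem_of_mem hvD hv
  refine hG (hasMinor_completeBipartiteGraph_three_three (connected_induce_componentCompl D) htx
    (hD (by simp)) (hD (by simp)) (a := ![a, b, c]) ?_ (fun i => hD (.inr (hmem i)))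
    (fun i => (hsub (hmem i)).1) (fun i => (hsub (hmem i)).2) fun i => hall _ (hmem i))
  intro i j
  fin_cases i <;> fin_cases j <;> simp [hab, hac, hbc, hab.symm, hac.symm, hbc.symm]

theorem neighborSet_subset_of_mem_componentCompl {K C : Set V} (D : G.ComponentCompl (K ∪ C))
    {d : V} (hd : d ∈ D) : G.neighborSet d ⊆ K ∪ D ∪ {u ∈ C | ∃ d ∈ D, G.Adj d u} := fun a ha => by
  by_cases haKC : a ∈ K ∪ C
  · exact haKC.imp .inl fun haC => ⟨haC, d, hd, ha⟩
  · exact .inl (.inr (ComponentCompl.mem_of_adj d a hd haKC ha))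

theorem IsAdmissible.exists_adj_mem_notMem (h : IsAdmissible G T E) {w t x : V} (hw : w ∉ T) :
    ∃ y ∈ T, G.Adj w y ∧ y ≠ t ∧ y ≠ x := by
  have hlt : ({t, x} : Set V).ncard < (G.neighborSet w).ncard :=
    (Set.ncard_insert_le t {x}).trans_lt (by simpa [Nat.lt_iff_add_one_le] using h.three_le w hw)
  obtain ⟨y, hwy, hy⟩ := Set.exists_mem_notMem_of_ncard_lt_ncard hlt
  rw [Set.mem_insert_iff, Set.mem_singleton_iff, not_or] at hy
  exact ⟨y, by_contra fun hyT => h.stable _ _ hw hyT hwy, hwy, hy⟩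

theorem disjoint_or_disjoint_of_isClique {K : Set V} (hE : G.IsClique E)
    {D D' : G.ComponentCompl K} (hne : D ≠ D') :
    Disjoint E (D : Set V) ∨ Disjoint E (D' : Set V) := by
  by_contra! hmeet
  obtain ⟨⟨e, he, heD⟩, e', he', heD'⟩ := hmeet.imp Set.not_disjoint_iff.1 Set.not_disjoint_iff.1
  have hdisj := Set.disjoint_left.1 (ComponentCompl.pairwise_disjoint hne)
  refine hdisj (ComponentCompl.mem_of_adj e e' heD (ComponentCompl.notMem_of_mem heD')
    (hE he he' ?_)) heD'
  rintro rfl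
  exact hdisj heD heD'

theorem IsAdmissible.exists_componentCompl_not_adj (h : IsAdmissible G T E) {t x : V} (htx : t ≠ x)
    {C : Set V} (hsub : C ⊆ G.commonNeighbors t x) (hCT : Disjoint C T) (hC : 3 ≤ C.ncard) :
    ∃ D : G.ComponentCompl ({t, x} ∪ C), Disjoint E (D : Set V) ∧ (∃ y ∈ T, y ∈ D) ∧
      ∃ w ∈ C, ∀ d ∈ D, ¬ G.Adj d w := by
  have hmiss := exists_forall_not_adj_of_componentCompl h.planar.2 htx hsub hC
  have hmeet (w : V) (hw : w ∈ C) : ∃ D : G.ComponentCompl ({t, x} ∪ C),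
      ∃ y ∈ T, y ∈ D ∧ G.Adj y w := by
    obtain ⟨y, hyT, hwy, hy⟩ :=
      h.exists_adj_mem_notMem (t := t) (x := x) (Set.disjoint_left.1 hCT hw)
    have hyK : y ∉ ({t, x} ∪ C : Set V) := by simp [hy, Set.disjoint_right.1 hCT hyT]
    exact ⟨G.componentComplMk hyK, y, hyT, G.componentComplMk_mem hyK, hwy.symm⟩
  obtain ⟨w₀, hw₀⟩ := Set.nonempty_of_ncard_ne_zero (s := C) (by omega)
  obtain ⟨D₁, y₁, hy₁T, hy₁, -⟩ := hmeet w₀ hw₀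
  obtain ⟨w₁, hw₁, hmiss₁⟩ := hmiss D₁
  obtain ⟨D₂, y₂, hy₂T, hy₂, hadj⟩ := hmeet w₁ hw₁
  have hne : D₁ ≠ D₂ := by
    rintro rfl
    exact hmiss₁ y₂ hy₂ hadj
  obtain hE | hE := disjoint_or_disjoint_of_isClique h.clique hne
  · exact ⟨D₁, hE, ⟨y₁, hy₁T, hy₁⟩, w₁, hw₁, hmiss₁⟩
  · exact ⟨D₂, hE, ⟨y₂, hy₂T, hy₂⟩, hmiss D₂⟩

theorem IsAdmissible.isReducible_of_three_le_ncard [Finite V] (h : IsAdmissible G T E) {t x : V}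
    (ht : t ∈ T) (hx : x ∈ T) (htx : t ≠ x) {C : Set V} (hsub : C ⊆ G.commonNeighbors t x)
    (hCT : Disjoint C T) (hC : 3 ≤ C.ncard) : IsReducible G T E := by
  obtain ⟨D, hED, ⟨y, hyT, hyD⟩, w, hw, hwD⟩ := h.exists_componentCompl_not_adj htx hsub hCT hC
  have hCT' := Set.disjoint_left.1 hCT
  have hK {v : V} (hv : v ∈ {t, x} ∪ C) : v ∉ D := fun hvD => ComponentCompl.notMem_of_mem hvD hv
  let S : Set V := {t, x} ∪ D ∪ {u ∈ C | ∃ d ∈ D, G.Adj d u}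
  have hKS : {t, x} ⊆ S := fun v hv => .inl (.inl hv)
  have hDS : (D : Set V) ⊆ S := fun d hd => .inl (.inr hd)
  have hwS : w ∉ S := by
    rintro ((hwtx | hwD') | ⟨-, d, hd, hdw⟩)
    · exact hCT' hw (Set.pair_subset ht hx hwtx)
    · exact hK (.inr hw) hwD'
    · exact hwD d hd hdw
  have hneighbor {d : V} (hd : d ∈ D) : G.neighborSet d ⊆ S :=
    neighborSet_subset_of_mem_componentCompl D hd
  let t' : S := ⟨t, hKS (by simp)⟩
  let x' : S := ⟨x, hKS (by simp)⟩
  have hE' {v : S} : v ∈ ({t', x'} : Set S) ↔ (v : V) ∈ ({t, x} : Set V) :=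
    or_congr Subtype.ext_iff Subtype.ext_iff
  refine h.isReducible_of_starContraction (E' := {t', x'}) (x := t') hwS (hCT' hw) (hsub hw).1.symm
    (fun u hu huT => ?_) (Set.pair_subset ht hx)
    (isClique_pair.2 fun hne => starContraction_singleton_adj hne (hsub hw).2.symm)
    ((Set.ncard_insert_le _ _).trans (by simp))
    ⟨⟨y, hDS hyD⟩, hyT, fun hy => hK (.inl (hE'.1 hy)) hyD⟩ fun v hvT hvE => ?_
  · obtain (hu | hu) | ⟨huC, d, hd, hdu⟩ := hu
    · exact absurd (Set.pair_subset ht hx hu) huT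
    · rw [Set.inter_eq_left.2 (hneighbor hu)]
      exact h.three_le u huT
    · have hdne {v : V} (hv : v ∈ ({t, x} : Set V)) : v ≠ d := fun hvd => hK (.inl hv) (hvd ▸ hd)
      exact (Set.two_lt_ncard_iff).2 ⟨t, x, d, ⟨(hsub huC).1.symm, hKS (by simp)⟩,
        ⟨(hsub huC).2.symm, hKS (by simp)⟩, ⟨hdu.symm, hDS hd⟩, htx, hdne (by simp), hdne (by simp)⟩
  · have hvD : (v : V) ∈ D :=
      (v.2.resolve_right fun hvC => hCT' hvC.1 hvT).resolve_left (mt hE'.2 hvE)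
    exact ⟨fun hv => Set.disjoint_left.1 hED hv hvD, (hneighbor hvD).trans (Set.subset_insert _ _),
      fun hvw => (hwD v hvD hvw).elim⟩

end Reduction

section Induction

variable {V : Type*} {G : SimpleGraph V} {T E : Set V}

theorem IsAdmissible.exists_isLight_of_ncard_le_two [Finite V] (h : IsAdmissible G T E)
    (hT : T.ncard ≤ 2) : ∃ t ∈ T \ E, IsLight G T t := by
  obtain ⟨t, ht⟩ := h.nonempty
  have hall (w : V) : w ∈ T := by
    by_contra hw
    have hsub : G.neighborSet w ⊆ T := fun v hv => by_contra fun hvT => h.stable _ _ hw hvT hv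
    have := (h.three_le w hw).trans (Set.ncard_le_ncard hsub)
    omega
  have hdeg := Set.ncard_le_ncard (s := G.neighborSet t) fun v _ => hall v
  have hdegT := Set.ncard_le_ncard (Set.inter_subset_left : G.neighborSet t ∩ T ⊆ _)
  exact ⟨t, ht, by omega, by omega⟩

theorem IsAdmissible.exists_isLight_of_not_isReducible [Finite V] (h : IsAdmissible G T E)
    (hred : ¬ IsReducible G T E) : ∃ t ∈ T \ E, IsLight G T t := by
  classical
  have := Fintype.ofFinite V
  obtain hT | hT := le_or_gt T.ncard 2
  · exact h.exists_isLight_of_ncard_le_two hT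
  lift T to Finset V using T.toFinite
  lift E to Finset V using E.toFinite
  have hdegree (v : V) : G.degree v = (G.neighborSet v).ncard := by
    rw [← card_neighborSet_eq_degree, Set.ncard_eq_toFinset_card', Set.toFinset_card]
  have hedge (w : V) (hw : w ∉ T) : ∃ x y, G.Adj w x ∧ G.Adj w y ∧ G.Adj x y := by
    by_contra! hedgeless
    exact hred (h.isReducible_of_neighborSet_edgeless hw hedgeless)
  have hcommon (t : V) (ht : t ∈ T) (x : V) (hx : x ∈ T) (htx : t ≠ x) :
      ((G.neighborFinset t ∩ G.neighborFinset x) \ T).card ≤ 2 := by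
    by_contra! hC
    rw [← Set.ncard_coe_finset] at hC
    refine hred (h.isReducible_of_three_le_ncard ht hx htx (fun w hw => ?_) ?_ hC)
    · simp_all [mem_commonNeighbors]
    · exact Finset.disjoint_coe.2 Finset.sdiff_disjoint
  obtain ⟨t, ht, hlight⟩ := exists_light_of_card_common_le_two
    (fun w hw v hwv => by_contra fun hv => h.stable w v hw hv hwv) h.planar.1
    (by rwa [Set.ncard_coe_finset] at hT) (fun w hw => hdegree w ▸ h.three_le w hw) hedge hcommon
    (mod_cast h.subset) h.clique (by simpa using h.card_le)
  refine ⟨t, mod_cast ht, hdegree t ▸ hlight.1, ?_⟩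
  rw [← coe_neighborFinset, ← Finset.coe_inter, Set.ncard_coe_finset]
  exact hlight.2

theorem IsAdmissible.exists_isLight [Finite V] (h : IsAdmissible G T E) :
    ∃ t ∈ T \ E, IsLight G T t := by
  induction hn : Nat.card V using Nat.strong_induction_on generalizing V with | _ n ih =>
  by_cases hred : IsReducible G T E
  · obtain ⟨S, H, E', hS, hH, hlift⟩ := hred
    obtain ⟨v, hv, hlight⟩ := ih _ (by simpa [← hn] using Set.ncard_lt_card hS) hH rfl
    have := hlift v hv.1 hv.2 hlight
    exact ⟨v, ⟨hv.1, this.1⟩, this.2⟩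
  · exact h.exists_isLight_of_not_isReducible hred

end Induction

theorem planar_low_degree_terminal_general {V : Type*} [Finite V] (G : SimpleGraph V) (T E : Set V)
    (hplanar : IsPlanar G) (hstable : ∀ a b, a ∉ T → b ∉ T → ¬ G.Adj a b)
    (hdeg : ∀ w ∉ T, 3 ≤ (G.neighborSet w).ncard) (hET : E ⊆ T) (hE : G.IsClique E)
    (hcard : E.ncard ≤ 2) (hne : E ≠ Set.univ) :
    ∃ t ∈ T \ E, (G.neighborSet t).ncard ≤ 10 ∧ (G.neighborSet t ∩ T).ncard ≤ 5 := by
  suffices hnonempty : (T \ E).Nonempty from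
    IsAdmissible.exists_isLight ⟨hplanar, hstable, hdeg, hET, hE, hcard, hnonempty⟩
  obtain ⟨v, hvE⟩ := (Set.ne_univ_iff_exists_notMem E).1 hne
  by_cases hvT : v ∈ T
  · exact ⟨v, hvT, hvE⟩
  · obtain ⟨t, hvt, htE⟩ :=
      Set.exists_mem_notMem_of_ncard_lt_ncard (hcard.trans_lt (hdeg v hvT))
    exact ⟨t, by_contra fun ht => hstable v t hvT ht hvt, htE⟩

/-- **Discharging lemma.** In a simple planar graph whose vertex set is partitioned into
terminals `T` and a stable set of non-terminals, if every vertex has degree at least 3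
then some terminal has degree at most 10 and at most 5 neighbors in `T`. -/
theorem planar_low_degree_terminal {V : Type*} [Fintype V] [Nonempty V]
    (G : SimpleGraph V) (T : Set V)
    (hplanar : IsPlanar G)
    (hstable : ∀ a b, a ∉ T → b ∉ T → ¬ G.Adj a b)
    (hdeg : ∀ v : V, 3 ≤ (G.neighborSet v).ncard) :
    ∃ t ∈ T, (G.neighborSet t).ncard ≤ 10 ∧ (G.neighborSet t ∩ T).ncard ≤ 5 := by
  simpa using planar_low_degree_terminal_general G T ∅ hplanar hstable (fun v _ => hdeg v)
    T.empty_subset isClique_empty (by simp) Set.empty_ne_univ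
end

section
/- Consider an instance of the single-sink k-vertex-connectivity problem: an undirected graph G=(V,E) with nonnegative edge costs, a root r ∈ V, and a terminal set T ⊆ V; let OPT be the minimum cost of a subgraph of G containing k internally vertex-disjoint paths from every terminal to r. For each terminal t ∈ T, let ElemCost(t) be the minimum cost of an edge set forming k internally vertex-disjoint paths from t to vertices of (T ∪ {r}) ∖ {t}. Then Σ_{t ∈ T} ElemCost(t) ≤ 2·OPT. -/
open SimpleGraph

/-- Two walks between the same pair of vertices are *element-disjoint* with respect to a
terminal set `T` if they share no edges and every common vertex is a terminal or an
endpoint. -/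
def ElemDisjWalks {V : Type*} (T : Set V) {G : SimpleGraph V} {u v : V}
    (W₁ W₂ : G.Walk u v) : Prop :=
  (∀ e, e ∈ W₁.edges → e ∉ W₂.edges) ∧
  (∀ x, x ∈ W₁.support → x ∈ W₂.support → x ∈ T ∪ {u, v})

/-- There exist `k` pairwise element-disjoint `u`-`v` paths in `G`
(with respect to the terminal set `T`). -/
def HasElemPaths {V : Type*} (G : SimpleGraph V) (T : Set V) (u v : V) (k : ℕ) : Prop :=
  ∃ P : Fin k → G.Walk u v, (∀ i, (P i).IsPath) ∧
    ∀ i j, i ≠ j → ElemDisjWalks T (P i) (P j)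

/-- The element-connectivity `κ'_G(u,v)`: the maximum number of `u`-`v` paths that are
pairwise disjoint in edges and in non-terminal vertices. -/
noncomputable def elemConn {V : Type*} (G : SimpleGraph V) (T : Set V) (u v : V) : ℕ :=
  sSup {k | HasElemPaths G T u v k}

/-- `H` contains `k` internally vertex-disjoint `t`-`r` paths. -/
def HasFan {V : Type*} (H : SimpleGraph V) (t r : V) (k : ℕ) : Prop :=
  ∃ P : Fin k → H.Walk t r, (∀ i, (P i).IsPath) ∧
    ∀ i j, i ≠ j → ∀ x, x ∈ (P i).support → x ∈ (P j).support → x = t ∨ x = r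

/-- The total cost of the edges of `H`. -/
noncomputable def cost {V : Type*} (c : Sym2 V → ℝ) (H : SimpleGraph V) : ℝ :=
  ∑ᶠ e ∈ H.edgeSet, c e

/-- `H` contains `k` paths from `t` to vertices of `(T ∪ {r}) \ {t}` that pairwise share
no vertex other than `t` and common endpoints. -/
def HasElemFanTo {V : Type*} (H : SimpleGraph V) (T : Set V) (r t : V) (k : ℕ) : Prop :=
  ∃ (e : Fin k → V) (P : ∀ i, H.Walk t (e i)),
    (∀ i, e i ∈ (T ∪ {r}) \ {t}) ∧ (∀ i, (P i).IsPath) ∧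
    (∀ i j, i ≠ j → ∀ x, x ∈ (P i).support → x ∈ (P j).support →
      x = t ∨ (x = e i ∧ x = e j))

/-- `ElemCost(t)`: the minimum cost of an edge set of `G` forming `k` internally
vertex-disjoint paths from `t` to vertices of `(T ∪ {r}) \ {t}`. -/
noncomputable def elemCost {V : Type*} (G : SimpleGraph V) (c : Sym2 V → ℝ)
    (T : Set V) (r t : V) (k : ℕ) : ℝ :=
  sInf {x | ∃ H : SimpleGraph V, H ≤ G ∧ HasElemFanTo H T r t k ∧ x = cost c H}

/-!
Call a vertex cut isolating if it separates one terminal from all others by nonterminals. A feasible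
solution satisfies the condition that every isolating cut has at least `k` boundary vertices. For an
edge `pq` between nonterminals, contraction preserves this condition unless both ends lie in the
boundary of a tight isolating cut, and then uncrossing shows that deletion preserves it (the
element-connectivity reduction of Hind–Oellermann). Iterating until no edge joins two nonterminals,
every terminal without a terminal neighbour is seen to reach other terminals through `k` different
nonterminals. Undoing the contractions turns the stars around these into cells: subgraphs of the
solution, edge-disjoint and sharing only terminals, `k` of which connect the terminal to others.

Within each connected component of a cell, a closed walk through all vertices using every edge at
most once in each direction is cut by the terminals into stretches, each leading from a terminal to
the next one. Hence the cheapest paths from the terminals of the cell to other terminals cost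
together at most twice the cell, and the sum over all cells is at most twice the solution.
-/

section VertexCuts

variable {V : Type*}

/-- The outer vertex boundary `N(U)`: the vertices outside `U` with a neighbour in `U`. -/
def outerBoundary (K : SimpleGraph V) (U : Set V) : Set V :=
  {x | x ∉ U ∧ ∃ u ∈ U, K.Adj u x}

/-- `U` and its outer boundary form a vertex cut that isolates the terminal `t` from the other
vertices of the terminal set `A`, using nonterminals only. -/
structure IsIsolating (K : SimpleGraph V) (A : Set V) (t : V) (U : Set V) : Prop where
  inter_eq : U ∩ A = {t}
  disjoint_outerBoundary : Disjoint (outerBoundary K U) A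

/-- Every isolating cut has at least `k` boundary vertices: the Menger-type condition for
`k`-connectivity between terminals, which survives the reduction of `K` to cells. -/
def CutCondition (K : SimpleGraph V) (A : Set V) (k : ℕ) : Prop :=
  ∀ ⦃t U⦄, IsIsolating K A t U → k ≤ (outerBoundary K U).ncard

variable {K L : SimpleGraph V} {A X Y U : Set V} {k : ℕ} {s t p q : V}

lemma outerBoundary_mono (h : L ≤ K) (U : Set V) : outerBoundary L U ⊆ outerBoundary K U :=
  fun _ ⟨hx, u, hu, hux⟩ => ⟨hx, u, hu, h hux⟩

lemma IsIsolating.mem (h : IsIsolating K A t U) : t ∈ U ∧ t ∈ A :=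
  h.inter_eq.ge rfl

lemma IsIsolating.eq_of_mem (h : IsIsolating K A t U) {x : V} (hx : x ∈ U) (hxA : x ∈ A) : x = t :=
  h.inter_eq.le ⟨hx, hxA⟩

lemma ncard_add_ncard_le_of_union_subset_of_inter_subset [Finite V] {X' Y' : Set V}
    (hunion : X' ∪ Y' ⊆ X ∪ Y) (hinter : X' ∩ Y' ⊆ X ∩ Y) :
    X'.ncard + Y'.ncard ≤ X.ncard + Y.ncard := by
  rw [← Set.ncard_union_add_ncard_inter X' Y', ← Set.ncard_union_add_ncard_inter X Y]
  exact add_le_add (Set.ncard_le_ncard hunion) (Set.ncard_le_ncard hinter)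

lemma outerBoundary_inter_union_outerBoundary_union_subset :
    outerBoundary K (X ∩ Y) ∪ outerBoundary K (X ∪ Y) ⊆ outerBoundary K X ∪ outerBoundary K Y := by
  intro x hx
  simp only [outerBoundary, Set.mem_union, Set.mem_inter_iff, Set.mem_ofPred_eq] at hx ⊢
  grind

lemma ncard_outerBoundary_inter_add_union_le [Finite V] :
    (outerBoundary K (X ∩ Y)).ncard + (outerBoundary K (X ∪ Y)).ncard ≤
      (outerBoundary K X).ncard + (outerBoundary K Y).ncard := by
  refine ncard_add_ncard_le_of_union_subset_of_inter_subset
    outerBoundary_inter_union_outerBoundary_union_subset ?_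
  rintro x ⟨⟨-, u, ⟨huX, huY⟩, hux⟩, hxXY, -⟩
  exact ⟨⟨fun h => hxXY (.inl h), u, huX, hux⟩, ⟨fun h => hxXY (.inr h), u, huY, hux⟩⟩

lemma outerBoundary_diff_subset :
    outerBoundary K (X \ (Y ∪ outerBoundary K Y)) ⊆ outerBoundary K X ∪ outerBoundary K Y := by
  rintro x ⟨hx, u, ⟨huX, huY⟩, hux⟩
  simp only [outerBoundary, Set.mem_union, Set.mem_sdiff, Set.mem_ofPred_eq] at hx huY ⊢
  grind [K.adj_comm u x]

lemma ncard_outerBoundary_diff_add_diff_le [Finite V] :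
    (outerBoundary K (X \ (Y ∪ outerBoundary K Y))).ncard +
        (outerBoundary K (Y \ (X ∪ outerBoundary K X))).ncard ≤
      (outerBoundary K X).ncard + (outerBoundary K Y).ncard := by
  refine ncard_add_ncard_le_of_union_subset_of_inter_subset
    (Set.union_subset outerBoundary_diff_subset
      (outerBoundary_diff_subset.trans (Set.union_comm _ _).le)) ?_
  rintro x ⟨⟨hx, u, ⟨huX, huY⟩, hux⟩, ⟨hx', v, ⟨hvY, hvX⟩, hvx⟩⟩
  simp only [outerBoundary, Set.mem_union, Set.mem_sdiff, Set.mem_inter_iff,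
    Set.mem_ofPred_eq] at *
  grind [K.adj_comm u x, K.adj_comm v x]

lemma IsIsolating.inter (hX : IsIsolating K A t X) (hY : IsIsolating K A t Y) :
    IsIsolating K A t (X ∩ Y) where
  inter_eq := by rw [Set.inter_inter_distrib_right, hX.inter_eq, hY.inter_eq, Set.inter_self]
  disjoint_outerBoundary :=
    (hX.disjoint_outerBoundary.union_left hY.disjoint_outerBoundary).mono_left
      (Set.subset_union_left.trans outerBoundary_inter_union_outerBoundary_union_subset)

lemma IsIsolating.union (hX : IsIsolating K A t X) (hY : IsIsolating K A t Y) :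
    IsIsolating K A t (X ∪ Y) where
  inter_eq := by rw [Set.union_inter_distrib_right, hX.inter_eq, hY.inter_eq, Set.union_self]
  disjoint_outerBoundary :=
    (hX.disjoint_outerBoundary.union_left hY.disjoint_outerBoundary).mono_left
      (Set.subset_union_right.trans outerBoundary_inter_union_outerBoundary_union_subset)

lemma IsIsolating.diff (hX : IsIsolating K A s X) (hY : IsIsolating K A t Y) (hst : s ≠ t) :
    IsIsolating K A s (X \ (Y ∪ outerBoundary K Y)) where
  inter_eq := by
    refine Set.Subset.antisymm (fun x hx => hX.eq_of_mem hx.1.1 hx.2) ?_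
    rintro _ rfl
    refine ⟨⟨hX.mem.1, ?_⟩, hX.mem.2⟩
    rintro (hs | hs)
    · exact hst (hY.eq_of_mem hs hX.mem.2)
    · exact Set.disjoint_left.1 hY.disjoint_outerBoundary hs hX.mem.2
  disjoint_outerBoundary :=
    (hX.disjoint_outerBoundary.union_left hY.disjoint_outerBoundary).mono_left
      outerBoundary_diff_subset

lemma outerBoundary_deleteEdges_eq
    (hp : p ∈ U → q ∈ U ∪ outerBoundary (K.deleteEdges {s(p, q)}) U)
    (hq : q ∈ U → p ∈ U ∪ outerBoundary (K.deleteEdges {s(p, q)}) U) :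
    outerBoundary (K.deleteEdges {s(p, q)}) U = outerBoundary K U := by
  refine (outerBoundary_mono (K.deleteEdges_le _) U).antisymm ?_
  rintro x ⟨hx, u, hu, hux⟩
  by_cases he : s(u, x) = s(p, q)
  · rcases Sym2.eq_iff.1 he with ⟨rfl, rfl⟩ | ⟨rfl, rfl⟩
    · exact (hp hu).resolve_left hx
    · exact (hq hu).resolve_left hx
  · exact ⟨hx, u, hu, deleteEdges_adj.2 ⟨hux, he⟩⟩

lemma CutCondition.le_ncard_outerBoundary_deleteEdges (hK : CutCondition K A k)
    (hU : IsIsolating (K.deleteEdges {s(p, q)}) A t U)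
    (hp : p ∈ U → q ∈ U ∪ outerBoundary (K.deleteEdges {s(p, q)}) U)
    (hq : q ∈ U → p ∈ U ∪ outerBoundary (K.deleteEdges {s(p, q)}) U) :
    k ≤ (outerBoundary (K.deleteEdges {s(p, q)}) U).ncard := by
  have hbdry := outerBoundary_deleteEdges_eq hp hq
  rw [hbdry]
  exact hK ⟨hU.inter_eq, hbdry ▸ hU.disjoint_outerBoundary⟩

-- Neither end of `pq` lies in `X`, `X ∩ Y` or the two differences, and both ends lie in
-- `(X ∪ Y) ∪ N(X ∪ Y)`, so for all the sets produced by uncrossing the edge `pq` is irrelevant.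
lemma CutCondition.deleteEdges [Finite V] (hK : CutCondition K A k)
    (hX : IsIsolating K A s X) (hXk : (outerBoundary K X).ncard ≤ k)
    (hp : p ∈ outerBoundary K X) (hq : q ∈ outerBoundary K X) :
    CutCondition (K.deleteEdges {s(p, q)}) A k := by
  intro t Y hY
  set K' := K.deleteEdges {s(p, q)}
  have hbdry : outerBoundary K' X = outerBoundary K X :=
    outerBoundary_deleteEdges_eq (fun h => absurd h hp.1) (fun h => absurd h hq.1)
  have hX' : IsIsolating K' A s X := ⟨hX.inter_eq, hbdry ▸ hX.disjoint_outerBoundary⟩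
  rw [← hbdry] at hp hq hXk
  by_cases hst : s = t
  · subst hst
    have hmem {x : V} (hx : x ∈ outerBoundary K' X) : x ∈ X ∪ Y ∪ outerBoundary K' (X ∪ Y) := by
      by_cases hxY : x ∈ Y
      · exact .inl (.inr hxY)
      · obtain ⟨hxX, u, hu, hux⟩ := hx
        exact .inr ⟨by simp [hxX, hxY], u, .inl hu, hux⟩
    have hinter := hK.le_ncard_outerBoundary_deleteEdges (hX'.inter hY)
      (fun h => absurd h.1 hp.1) (fun h => absurd h.1 hq.1)
    have hunion := hK.le_ncard_outerBoundary_deleteEdges (hX'.union hY)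
      (fun _ => hmem hq) (fun _ => hmem hp)
    have := ncard_outerBoundary_inter_add_union_le (K := K') (X := X) (Y := Y)
    lia
  · have hXY := hK.le_ncard_outerBoundary_deleteEdges (hX'.diff hY hst)
      (fun h => absurd h.1 hp.1) (fun h => absurd h.1 hq.1)
    have hYX := hK.le_ncard_outerBoundary_deleteEdges (hY.diff hX' (Ne.symm hst))
      (fun h => absurd (.inr hp) h.2) (fun h => absurd (.inr hq) h.2)
    have := ncard_outerBoundary_diff_add_diff_le (K := K') (X := X) (Y := Y)
    lia

end VertexCuts

section Contraction

variable {V : Type*} {K : SimpleGraph V} {A U : Set V} {φ : V → V} {k : ℕ} {t p q : V}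

/-- `φ` moves nonterminals along edges of `K` to representatives; `K.map φ` is then the
contraction of `K` along these edges. -/
structure IsSteinerContraction (K : SimpleGraph V) (A : Set V) (φ : V → V) : Prop where
  map_eq_of_mem : ∀ ⦃x⦄, x ∈ A → φ x = x
  map_notMem : ∀ ⦃x⦄, x ∉ A → φ x ∉ A
  map_map : ∀ x, φ (φ x) = φ x
  eq_or_adj : ∀ x, φ x = x ∨ K.Adj x (φ x)

lemma IsSteinerContraction.eq_of_map_eq (hφ : IsSteinerContraction K A φ) {x : V}
    (hx : φ x = t) (ht : t ∈ A) : x = t := by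
  by_cases hxA : x ∈ A
  · rw [← hx, hφ.map_eq_of_mem hxA]
  · exact absurd (hx ▸ ht) (hφ.map_notMem hxA)

lemma isSteinerContraction_update [DecidableEq V] (hp : p ∉ A) (hq : q ∉ A) (h : K.Adj p q) :
    IsSteinerContraction K A (Function.update id q p) where
  map_eq_of_mem x hx := Function.update_of_ne (ne_of_mem_of_not_mem hx hq) _ _
  map_notMem x hx := by
    by_cases hxq : x = q <;> simp [hxq, hp, hx]
  map_map x := by
    by_cases hxq : x = q <;> simp [hxq, h.ne]
  eq_or_adj x := by
    by_cases hxq : x = q <;> simp [hxq, h.symm]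

lemma mapsTo_outerBoundary_preimage (K : SimpleGraph V) (φ : V → V) (U : Set V) :
    Set.MapsTo φ (outerBoundary K (φ ⁻¹' U)) (outerBoundary (K.map φ) U) := by
  rintro x ⟨hx, u, hu, hux⟩
  exact ⟨hx, φ u, hu, map_adj_apply' hux (fun h => hx (h ▸ hu : φ x ∈ U))⟩

lemma IsIsolating.preimage (hφ : IsSteinerContraction K A φ)
    (hU : IsIsolating (K.map φ) A t U) : IsIsolating K A t (φ ⁻¹' U) where
  inter_eq := by
    refine Set.Subset.antisymm (fun x hx => ?_) ?_
    · exact hU.eq_of_mem (hφ.map_eq_of_mem hx.2 ▸ hx.1) hx.2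
    · rintro _ rfl
      refine ⟨?_, hU.mem.2⟩
      rw [Set.mem_preimage, hφ.map_eq_of_mem hU.mem.2]
      exact hU.mem.1
  disjoint_outerBoundary := by
    refine Set.disjoint_left.2 fun x hx hxA => ?_
    refine Set.disjoint_left.1 hU.disjoint_outerBoundary (mapsTo_outerBoundary_preimage K φ U hx) ?_
    rwa [hφ.map_eq_of_mem hxA]

lemma injOn_update_id [DecidableEq V] {s : Set V} (h : p ∉ s ∨ q ∉ s) :
    Set.InjOn (Function.update id q p) s := by
  intro x hx y hy hxy
  simp only [Function.update_apply, id] at hxy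
  grind

lemma CutCondition.exists_tight_of_not_map [Finite V] [DecidableEq V] (hK : CutCondition K A k)
    (hp : p ∉ A) (hq : q ∉ A) (h : K.Adj p q)
    (hmap : ¬ CutCondition (K.map (Function.update id q p)) A k) :
    ∃ s X, IsIsolating K A s X ∧ (outerBoundary K X).ncard ≤ k ∧
      p ∈ outerBoundary K X ∧ q ∈ outerBoundary K X := by
  simp only [CutCondition, not_forall, not_le] at hmap
  obtain ⟨s, U, hU, hlt⟩ := hmap
  set φ := Function.update id q p
  have hX := hU.preimage (isSteinerContraction_update hp hq h)
  have hmaps := mapsTo_outerBoundary_preimage K φ U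
  have hpq : p ∈ outerBoundary K (φ ⁻¹' U) ∧ q ∈ outerBoundary K (φ ⁻¹' U) := by
    by_contra hpq
    have hinj := injOn_update_id (not_and_or.1 hpq)
    exact (hlt.trans_le (hK hX)).not_ge (Set.ncard_le_ncard_of_injOn φ hmaps hinj)
  refine ⟨s, φ ⁻¹' U, hX, ?_, hpq⟩
  have hinj : Set.InjOn φ (outerBoundary K (φ ⁻¹' U) \ {q}) := injOn_update_id (by simp)
  have hle := Set.ncard_le_ncard_of_injOn φ (hmaps.mono_left Set.sdiff_subset) hinj
  have := Set.ncard_sdiff_singleton_add_one hpq.2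
  lia

theorem CutCondition.map_or_deleteEdges [Finite V] [DecidableEq V] (hK : CutCondition K A k)
    (hp : p ∉ A) (hq : q ∉ A) (h : K.Adj p q) :
    CutCondition (K.map (Function.update id q p)) A k ∨
      CutCondition (K.deleteEdges {s(p, q)}) A k := by
  refine or_iff_not_imp_left.2 fun hmap => ?_
  obtain ⟨s, X, hX, hXk, hpX, hqX⟩ := hK.exists_tight_of_not_map hp hq h hmap
  exact hK.deleteEdges hX hXk hpX hqX

end Contraction

section Cells

variable {V : Type*} {K L : SimpleGraph V} {A : Set V} {f φ : V → V} {k : ℕ}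

/-- The cells of `L` with respect to a labelling `f` of the nonterminals: cell `none` consists of
the edges between terminals, cell `some i` of the edges with a nonterminal end of label `i`. -/
def cell (L : SimpleGraph V) (A : Set V) (f : V → V) : Option V → SimpleGraph V
  | none =>
    { Adj := fun x y => L.Adj x y ∧ x ∈ A ∧ y ∈ A
      symm := ⟨fun _ _ h => ⟨h.1.symm, h.2.symm⟩⟩
      loopless := ⟨fun _ h => h.1.ne rfl⟩ }
  | some i =>
    { Adj := fun x y => L.Adj x y ∧ (x ∉ A ∧ f x = i ∨ y ∉ A ∧ f y = i)
      symm := ⟨fun _ _ h => ⟨h.1.symm, h.2.symm⟩⟩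
      loopless := ⟨fun _ h => h.1.ne rfl⟩ }

lemma cell_le (L : SimpleGraph V) (A : Set V) (f : V → V) (o : Option V) : cell L A f o ≤ L := by
  intro x y h
  cases o <;> exact h.1

/-- The labels of the cells of `L` connecting the terminal `t` to some other terminal. -/
def connectingLabels (L : SimpleGraph V) (A : Set V) (f : V → V) (t : V) : Set V :=
  {i | ∃ t' ∈ A, t' ≠ t ∧ (cell L A f (some i)).Reachable t t'}

/-- The cells of `L` share only terminals, and every terminal either has a terminal neighbour or
is connected to other terminals by at least `k` cells. A single edge between terminals is enough
because the fans of `HasElemFanTo` may repeat a path without inner vertices. -/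
structure IsCellPacking (L : SimpleGraph V) (A : Set V) (f : V → V) (k : ℕ) : Prop where
  label_eq : ∀ ⦃x y⦄, x ∉ A → y ∉ A → L.Adj x y → f x = f y
  adj_or_le_ncard : ∀ t ∈ A, (∃ t' ∈ A, L.Adj t t') ∨ k ≤ (connectingLabels L A f t).ncard

lemma IsCellPacking.label_eq_of_adj (h : IsCellPacking L A f k) {i x y : V}
    (hxy : (cell L A f (some i)).Adj x y) (hx : x ∉ A) : f x = i := by
  obtain ⟨hL, ⟨-, hi⟩ | ⟨hy, hi⟩⟩ := hxy
  · exact hi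
  · exact (h.label_eq hx hy hL).trans hi

lemma IsCellPacking.pairwise_disjoint_cell (h : IsCellPacking L A f k) :
    Pairwise (Function.onFun Disjoint (cell L A f)) := by
  refine fun o o' hne => disjoint_edgeSet.1 (Set.disjoint_left.2 fun e => ?_)
  induction e with | _ x y
  simp only [mem_edgeSet]
  intro hxy hxy'
  apply hne
  match o, o', hxy, hxy' with
  | none, none, _, _ => rfl
  | none, some i, hxy, hxy' => exact absurd hxy.2 (by grind [cell])
  | some i, none, hxy, hxy' => exact absurd hxy'.2 (by grind [cell])
  | some i, some j, hxy, hxy' =>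
    rcases hxy.2 with ⟨hx, rfl⟩ | ⟨hy, rfl⟩
    · rw [h.label_eq_of_adj hxy' hx]
    · rw [h.label_eq_of_adj hxy'.symm hy]

theorem CutCondition.isCellPacking_id [Finite V] (hK : CutCondition K A k)
    (hA : ∀ ⦃x y⦄, K.Adj x y → x ∉ A → y ∈ A) : IsCellPacking K A id k where
  label_eq _ _ hx hy hxy := absurd (hA hxy hx) hy
  adj_or_le_ncard t ht := by
    refine or_iff_not_imp_left.2 fun hadj => ?_
    push Not at hadj
    set U : Set V := insert t {x | x ∉ A ∧ ∀ y, K.Adj x y → y = t}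
    have hbdry : ∀ x ∈ outerBoundary K U, K.Adj t x ∧ ∃ y, K.Adj x y ∧ y ≠ t := by
      rintro x ⟨hx, u, hu, hux⟩
      have hxt : x ≠ t := fun h => hx (.inl h)
      obtain rfl : u = t := hu.resolve_right fun h => hxt (h.2 x hux)
      have hxA : x ∉ A := fun h => hadj x h hux
      by_contra! hcon
      exact hx (.inr ⟨hxA, hcon hux⟩)
    have hU : IsIsolating K A t U :=
      { inter_eq := by
          refine Set.Subset.antisymm ?_ (Set.singleton_subset_iff.2 ⟨.inl rfl, ht⟩)
          rintro x ⟨hx, hxA⟩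
          exact hx.resolve_right fun h => h.1 hxA
        disjoint_outerBoundary :=
          Set.disjoint_left.2 fun x hx hxA => hadj x hxA (hbdry x hx).1 }
    refine (hK hU).trans (Set.ncard_le_ncard fun x hx => ?_)
    obtain ⟨htx, y, hxy, hyt⟩ := hbdry x hx
    have hxA : x ∉ A := Set.disjoint_left.1 hU.disjoint_outerBoundary hx
    have htx' : (cell K A id (some x)).Adj t x := ⟨htx, .inr ⟨hxA, rfl⟩⟩
    have hxy' : (cell K A id (some x)).Adj x y := ⟨hxy, .inl ⟨hxA, rfl⟩⟩
    exact ⟨y, hA hxy hxA, hyt, htx'.reachable.trans hxy'.reachable⟩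

/-- The lift to `K` of a subgraph `L` of the contraction `K.map φ`: the edges of `K` that are
contracted or map to edges of `L`. -/
def uncontract (K L : SimpleGraph V) (φ : V → V) : SimpleGraph V where
  Adj x y := K.Adj x y ∧ (φ x = φ y ∨ L.Adj (φ x) (φ y))
  symm := ⟨fun _ _ h => ⟨h.1.symm, h.2.imp Eq.symm Adj.symm⟩⟩
  loopless := ⟨fun _ h => h.1.ne rfl⟩

lemma uncontract_le (K L : SimpleGraph V) (φ : V → V) : uncontract K L φ ≤ K :=
  fun _ _ h => h.1

lemma exists_uncontract_adj_of_adj (hL : L ≤ K.map φ) {x y : V} (h : L.Adj x y) :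
    ∃ a b, φ a = x ∧ φ b = y ∧ (uncontract K L φ).Adj a b := by
  obtain ⟨-, a, b, hab, rfl, rfl⟩ := hL h
  exact ⟨a, b, rfl, rfl, hab, .inr h⟩

lemma IsCellPacking.reachable_uncontract (h : IsCellPacking L A f k)
    (hφ : IsSteinerContraction K A φ) (hL : L ≤ K.map φ) {i x y : V}
    (hxy : (cell L A f (some i)).Reachable x y) :
    (cell (uncontract K L φ) A (f ∘ φ) (some i)).Reachable x y := by
  have hlift : ∀ {a x y}, φ a = x → (cell L A f (some i)).Adj x y →
      (cell (uncontract K L φ) A (f ∘ φ) (some i)).Reachable a x := by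
    rintro a _ y rfl hay
    rcases hφ.eq_or_adj a with heq | hadj
    · rw [heq]
    · have ha : a ∉ A := fun ha => hadj.ne (hφ.map_eq_of_mem ha).symm
      exact Adj.reachable ⟨⟨hadj, .inl (hφ.map_map a).symm⟩,
        .inl ⟨ha, h.label_eq_of_adj hay (hφ.map_notMem ha)⟩⟩
  rw [reachable_iff_reflTransGen] at hxy
  induction hxy with
  | refl => rfl
  | @tail x y _ hxy ih =>
    obtain ⟨a, b, ha, hb, hab⟩ := exists_uncontract_adj_of_adj hL hxy.1
    have hab' : (cell (uncontract K L φ) A (f ∘ φ) (some i)).Adj a b := by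
      refine ⟨hab, hxy.2.imp ?_ ?_⟩
      · rintro ⟨hx, rfl⟩
        exact ⟨fun haA => hx (by rwa [← ha, hφ.map_eq_of_mem haA]), congrArg f ha⟩
      · rintro ⟨hy, rfl⟩
        exact ⟨fun hbA => hy (by rwa [← hb, hφ.map_eq_of_mem hbA]), congrArg f hb⟩
    exact ih.trans <| (hlift ha hxy).symm.trans <| hab'.reachable.trans (hlift hb hxy.symm)

theorem IsCellPacking.uncontract [Finite V] (h : IsCellPacking L A f k)
    (hφ : IsSteinerContraction K A φ) (hL : L ≤ K.map φ) :
    IsCellPacking (uncontract K L φ) A (f ∘ φ) k where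
  label_eq x y hx hy hxy := by
    rcases hxy.2 with heq | hadj
    · exact congrArg f heq
    · exact h.label_eq (hφ.map_notMem hx) (hφ.map_notMem hy) hadj
  adj_or_le_ncard t ht := by
    refine (h.adj_or_le_ncard t ht).imp ?_ fun hk => hk.trans (Set.ncard_le_ncard ?_)
    · rintro ⟨t', ht', hadj⟩
      obtain ⟨a, b, ha, hb, hab⟩ := exists_uncontract_adj_of_adj hL hadj
      rw [hφ.eq_of_map_eq ha ht, hφ.eq_of_map_eq hb ht'] at hab
      exact ⟨t', ht', hab⟩
    · rintro i ⟨t', ht', hne, hreach⟩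
      exact ⟨t', ht', hne, h.reachable_uncontract hφ hL hreach⟩

lemma ncard_edgeSet_deleteEdges_lt [Finite V] {p q : V} (h : K.Adj p q) :
    (K.deleteEdges {s(p, q)}).edgeSet.ncard < K.edgeSet.ncard := by
  rw [edgeSet_deleteEdges]
  exact Set.ncard_sdiff_singleton_lt_of_mem h

lemma ncard_edgeSet_map_lt [Finite V] {p q : V} (h : K.Adj p q) (hφ : φ p = φ q) :
    (K.map φ).edgeSet.ncard < K.edgeSet.ncard := by
  have himage : (K.map φ).edgeSet ⊆ Sym2.map φ '' (K.deleteEdges {s(p, q)}).edgeSet := by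
    intro e
    induction e with | _ x y
    rintro ⟨hne, a, b, hab, rfl, rfl⟩
    refine ⟨s(a, b), deleteEdges_adj.2 ⟨hab, fun he => hne ?_⟩, rfl⟩
    rcases Sym2.eq_iff.1 he with ⟨rfl, rfl⟩ | ⟨rfl, rfl⟩
    · exact hφ
    · exact hφ.symm
  exact ((Set.ncard_le_ncard himage).trans (Set.ncard_image_le (Set.toFinite _))).trans_lt
    (ncard_edgeSet_deleteEdges_lt h)

theorem CutCondition.exists_isCellPacking [Finite V] (hK : CutCondition K A k) :
    ∃ L ≤ K, ∃ f, IsCellPacking L A f k := by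
  classical
  induction hn : K.edgeSet.ncard using Nat.strong_induction_on generalizing K with
  | _ n ih =>
  by_cases hA : ∀ ⦃x y⦄, K.Adj x y → x ∉ A → y ∈ A
  · exact ⟨K, le_rfl, id, hK.isCellPacking_id hA⟩
  push Not at hA
  obtain ⟨p, q, hpq, hp, hq⟩ := hA
  rcases hK.map_or_deleteEdges hp hq hpq with hmap | hdel
  · have hlt := ncard_edgeSet_map_lt (φ := Function.update id q p) hpq (by simp [hpq.ne])
    obtain ⟨L, hL, f, hf⟩ := ih _ (hn ▸ hlt) hmap rfl
    exact ⟨_, uncontract_le K L _, _, hf.uncontract (isSteinerContraction_update hp hq hpq) hL⟩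
  · obtain ⟨L, hL, f, hf⟩ := ih _ (hn ▸ ncard_edgeSet_deleteEdges_lt hpq) hdel rfl
    exact ⟨L, hL.trans (K.deleteEdges_le _), f, hf⟩

end Cells

section WalkCost

variable {V : Type*} {G : SimpleGraph V} {c : Sym2 V → ℝ} {u v w : V}

/-- The total cost of the edges of a walk, counted with multiplicity. -/
def walkCost (c : Sym2 V → ℝ) (p : G.Walk u v) : ℝ :=
  (p.edges.map c).sum

lemma walkCost_nil : walkCost c (.nil : G.Walk u u) = 0 := rfl

lemma walkCost_cons (h : G.Adj u v) (p : G.Walk v w) :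
    walkCost c (.cons h p) = c s(u, v) + walkCost c p := by
  simp [walkCost]

lemma walkCost_append (p : G.Walk u v) (q : G.Walk v w) :
    walkCost c (p.append q) = walkCost c p + walkCost c q := by
  simp [walkCost]

lemma walkCost_concat (p : G.Walk u v) (h : G.Adj v w) :
    walkCost c (p.concat h) = walkCost c p + c s(v, w) := by
  simp [walkCost]

lemma walkCost_nonneg (hc : ∀ e, 0 ≤ c e) (p : G.Walk u v) : 0 ≤ walkCost c p :=
  List.sum_nonneg (by simp [hc])

lemma walkCost_bypass_le [DecidableEq V] (hc : ∀ e, 0 ≤ c e) (p : G.Walk u v) :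
    walkCost c p.bypass ≤ walkCost c p :=
  (p.edges_bypass_sublist_edges.map c).sum_le_sum (by simp [hc])

end WalkCost

section NearestTerminal

variable {V : Type*} {G : SimpleGraph V} {c : Sym2 V → ℝ} {A : Set V} {s t u v x : V}

/-- A path from `s` to a different terminal that meets no further terminals. -/
structure IsTerminalPath (A : Set V) (p : G.Walk s t) : Prop where
  isPath : p.IsPath
  mem : t ∈ A
  ne : t ≠ s
  eq_or_eq : ∀ x ∈ p.support, x ∈ A → x = s ∨ x = t

/-- The costs of the paths of `G` from `s` to another terminal. -/
def terminalPathCosts (G : SimpleGraph V) (c : Sym2 V → ℝ) (A : Set V) (s : V) : Set ℝ :=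
  {x | ∃ t, ∃ p : G.Walk s t, IsTerminalPath A p ∧ x = walkCost c p}

/-- The cost of a cheapest path of `G` from `s` to another terminal. If no other terminal is
reachable from `s`, the infimum is over the empty set and the value is `0`. -/
noncomputable def nearestCost (G : SimpleGraph V) (c : Sym2 V → ℝ) (A : Set V) (s : V) : ℝ :=
  sInf (terminalPathCosts G c A s)

lemma nearestCost_nonneg (hc : ∀ e, 0 ≤ c e) : 0 ≤ nearestCost G c A s := by
  refine Real.sInf_nonneg ?_
  rintro _ ⟨t, p, -, rfl⟩
  exact walkCost_nonneg hc p

lemma nearestCost_le_walkCost (hc : ∀ e, 0 ≤ c e) (p : G.Walk s t) (ht : t ∈ A) (hts : t ≠ s)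
    (hp : ∀ x ∈ p.support, x ∈ A → x = s ∨ x = t) : nearestCost G c A s ≤ walkCost c p := by
  classical
  have hbdd : BddBelow (terminalPathCosts G c A s) := by
    refine ⟨0, ?_⟩
    rintro _ ⟨t, p, -, rfl⟩
    exact walkCost_nonneg hc p
  have hpath : IsTerminalPath A p.bypass :=
    ⟨p.bypass_isPath, ht, hts, fun x hx => hp x (p.support_bypass_subset_support hx)⟩
  exact (csInf_le hbdd ⟨t, _, hpath, rfl⟩).trans (walkCost_bypass_le hc p)

lemma exists_isTerminalPath [Finite V] (ht : t ∈ A) (hts : t ≠ s) (hst : G.Reachable s t) :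
    ∃ t', ∃ p : G.Walk s t', IsTerminalPath A p := by
  classical
  have := Fintype.ofFinite V
  obtain ⟨p, hp⟩ := hst.exists_isPath
  obtain ⟨x, hx, hxp, hfirst⟩ := p.exists_mem_support_forall_mem_support_imp_eq
    (A \ {s}).toFinset ⟨t, by simp [ht, hts]⟩
  simp only [Set.mem_toFinset, Set.mem_sdiff, Set.mem_singleton_iff] at hx hfirst
  refine ⟨x, p.takeUntil x hxp, hp.takeUntil hxp, hx.1, hx.2, fun y hy hyA => ?_⟩
  exact or_iff_not_imp_left.2 fun hys => hfirst y ⟨hyA, hys⟩ hy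

lemma exists_isTerminalPath_walkCost_eq [Finite V] (ht : t ∈ A) (hts : t ≠ s)
    (hst : G.Reachable s t) :
    ∃ t', ∃ p : G.Walk s t', IsTerminalPath A p ∧ walkCost c p = nearestCost G c A s := by
  classical
  have hfin : (terminalPathCosts G c A s).Finite := by
    have := Fintype.ofFinite V
    refine (Set.finite_range fun p : Σ t, G.Path s t => walkCost c p.2.1).subset ?_
    rintro _ ⟨t, p, hp, rfl⟩
    exact ⟨⟨t, p, hp.isPath⟩, rfl⟩
  obtain ⟨t', p, hp⟩ := exists_isTerminalPath ht hts hst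
  obtain ⟨t'', q, hq, heq⟩ : nearestCost G c A s ∈ terminalPathCosts G c A s :=
    Set.Nonempty.csInf_mem ⟨_, t', p, hp, rfl⟩ hfin
  exact ⟨t'', q, hq, heq.symm⟩

lemma nearestCost_eq_zero (h : ∀ t ∈ A, G.Reachable s t → t = s) : nearestCost G c A s = 0 := by
  have hempty : terminalPathCosts G c A s = ∅ := by
    refine Set.eq_empty_of_forall_notMem ?_
    rintro _ ⟨t, p, hp, -⟩
    exact hp.ne (h t hp.mem p.reachable)
  rw [nearestCost, hempty, Real.sInf_empty]

lemma sum_le_add_sum_erase {ι M : Type*} [DecidableEq ι] [AddCommMonoid M] [PartialOrder M]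
    [IsOrderedAddMonoid M] {f : ι → M} {i : ι} (S : Finset ι) (hi : 0 ≤ f i) :
    ∑ j ∈ S, f j ≤ f i + ∑ j ∈ S.erase i, f j := by
  by_cases h : i ∈ S
  · rw [Finset.add_sum_erase S f h]
  · rw [Finset.erase_eq_of_notMem h]
    exact le_add_of_nonneg_left hi

-- Every terminal is charged for the stretch of the walk from its last visit to the next terminal;
-- `p` is the part of the current stretch already traversed.
lemma sum_nearestCost_le_add_walkCost (hc : ∀ e, 0 ≤ c e) (p : G.Walk s x) (w : G.Walk x v)
    (hp : ∀ y ∈ p.support, y ∈ A → y = s) (hv : v ∈ A) {S : Finset V} (hSA : ↑S ⊆ A)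
    (hS : ∀ y ∈ S, y = s ∨ y ∈ w.support) (hvS : v ∉ S) :
    ∑ y ∈ S, nearestCost G c A y ≤ walkCost c p + walkCost c w := by
  classical
  induction w generalizing s S with
  | @nil x =>
    have hxs : x = s := hp x p.end_mem_support hv
    have hempty : S = ∅ := Finset.eq_empty_of_forall_notMem fun y hy =>
      hvS (by grind [Walk.support_nil])
    simpa [hempty, walkCost_nil] using walkCost_nonneg hc p
  | @cons x y v hxy w ih =>
    rw [walkCost_cons, ← add_assoc, ← walkCost_concat p hxy]
    have hsupp : ∀ z ∈ S, z = s ∨ z ∈ w.support := by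
      intro z hz
      rcases hS z hz with rfl | hzw
      · exact .inl rfl
      · rw [Walk.support_cons, List.mem_cons] at hzw
        exact hzw.imp_left fun hzx => hp z (by rw [hzx]; exact p.end_mem_support) (hSA hz)
    by_cases hy : y ∈ A ∧ y ≠ s
    · have hstretch : nearestCost G c A s ≤ walkCost c (p.concat hxy) := by
        refine nearestCost_le_walkCost hc _ hy.1 hy.2 fun z hz hzA => ?_
        rw [Walk.support_concat, List.mem_append, List.mem_singleton] at hz
        exact hz.imp_left fun hz => hp z hz hzA
      have hrest := ih (s := y) .nil (by simp) hv (S := S.erase s)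
        (fun z hz => hSA (Finset.mem_of_mem_erase hz))
        (fun z hz => .inr <| (hsupp z (Finset.mem_of_mem_erase hz)).resolve_left
          (Finset.ne_of_mem_erase hz))
        (fun h => hvS (Finset.mem_of_mem_erase h))
      rw [walkCost_nil, zero_add] at hrest
      exact (sum_le_add_sum_erase S (nearestCost_nonneg hc)).trans (add_le_add hstretch hrest)
    · refine ih _ (fun z hz hzA => ?_) hv hSA hsupp hvS
      rw [Walk.support_concat, List.mem_append, List.mem_singleton] at hz
      rcases hz with hz | rfl
      · exact hp z hz hzA
      · exact not_not.1 fun hzs => hy ⟨hzA, hzs⟩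

lemma sum_nearestCost_le_walkCost (hc : ∀ e, 0 ≤ c e) (w : G.Walk u u) (hu : u ∈ A) (ht : t ∈ A)
    (htu : t ≠ u) (htw : t ∈ w.support) {S : Finset V} (hSA : ↑S ⊆ A)
    (hS : ∀ y ∈ S, y ∈ w.support) : ∑ y ∈ S, nearestCost G c A y ≤ walkCost c w := by
  classical
  obtain ⟨w₁, w₂, rfl⟩ := Walk.mem_support_iff_exists_append.1 htw
  have hfst := sum_nearestCost_le_add_walkCost (S := {y ∈ S | y ∈ w₁.support ∧ y ≠ t})
    hc .nil w₁ (by simp) ht (fun y hy => hSA (by grind)) (by grind) (by grind)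
  have hsnd := sum_nearestCost_le_add_walkCost (S := {y ∈ S | ¬ (y ∈ w₁.support ∧ y ≠ t)})
    hc .nil w₂ (by simp) hu (fun y hy => hSA (by grind))
    (by grind [Walk.mem_support_append_iff])
    (by grind [Walk.start_mem_support])
  rw [walkCost_append, ← Finset.sum_filter_add_sum_filter_not S (fun y => y ∈ w₁.support ∧ y ≠ t)]
  simp only [walkCost_nil, zero_add] at hfst hsnd
  exact add_le_add hfst hsnd

end NearestTerminal

section Tours

variable {V : Type*} {G : SimpleGraph V} {c : Sym2 V → ℝ} {A : Set V}

-- A closed walk missing a reachable vertex can be enlarged by a detour along some edge `xy`, which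
-- uses the darts `xy` and `yx` leading to and from the new vertex `y`.
lemma exists_closed_walk_darts_nodup [Finite V] (G : SimpleGraph V) (u : V) :
    ∃ w : G.Walk u u, w.darts.Nodup ∧ ∀ v, G.Reachable u v → v ∈ w.support := by
  classical
  obtain ⟨X, ⟨w, hw, rfl⟩, hmax⟩ := Set.Finite.exists_maximal
    (s := {X : Set V | ∃ w : G.Walk u u, w.darts.Nodup ∧ {v | v ∈ w.support} = X})
    (Set.toFinite _) ⟨_, .nil, by simp, rfl⟩
  refine ⟨w, hw, fun v ⟨p⟩ => ?_⟩
  by_contra hv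
  obtain ⟨⟨⟨x, y⟩, hxy⟩, -, hx, hy⟩ :=
    p.exists_boundary_dart {v | v ∈ w.support} w.start_mem_support hv
  simp only [Set.mem_ofPred_eq] at hx hy
  set q : G.Walk x x := .cons hxy (.cons hxy.symm (w.rotate x hx))
  have hq : q.darts.Nodup := by
    have hnot : ∀ d ∈ (w.rotate x hx).darts, d.fst ≠ y ∧ d.snd ≠ y := fun d hd => by
      have hd' := (w.rotate_darts x hx).mem_iff.1 hd
      exact ⟨fun h => hy (h ▸ w.dart_fst_mem_support_of_mem_darts hd'),
        fun h => hy (h ▸ w.dart_snd_mem_support_of_mem_darts hd')⟩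
    simp only [q, Walk.darts_cons, List.nodup_cons, List.mem_cons, not_or]
    exact ⟨⟨fun h => hxy.ne (congrArg (fun d => d.fst) h), fun h => (hnot _ h).2 rfl⟩,
      fun h => (hnot _ h).1 rfl, (w.rotate_darts x hx).nodup_iff.2 hw⟩
  have hsupp : ∀ {z}, z ∈ w.support → z ∈ q.support := fun hz => by
    simp [q, (w.mem_support_rotate_iff x hx).2 hz]
  have hu : u ∈ q.support := hsupp w.start_mem_support
  refine hy (hmax ⟨q.rotate u hu, (q.rotate_darts u hu).nodup_iff.2 hq, rfl⟩ (fun z hz => ?_) ?_)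
  · exact (q.mem_support_rotate_iff u hu).2 (hsupp hz)
  · exact (q.mem_support_rotate_iff u hu).2 (by simp [q])

lemma sum_nearestCost_component_le [Fintype V] [DecidableRel G.Adj]
    [DecidableEq G.ConnectedComponent] (hc : ∀ e, 0 ≤ c e) {S : Finset V} (hSA : ↑S ⊆ A)
    (C : G.ConnectedComponent) :
    ∑ s ∈ S with G.connectedComponentMk s = C, nearestCost G c A s ≤
      ∑ d : G.Dart with G.connectedComponentMk d.fst = C, c d.edge := by
  classical
  have hnonneg : 0 ≤ ∑ d : G.Dart with G.connectedComponentMk d.fst = C, c d.edge :=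
    Finset.sum_nonneg fun d _ => hc d.edge
  by_cases hzero : ∀ s ∈ S, G.connectedComponentMk s = C → ∀ t ∈ A, G.Reachable s t → t = s
  · refine (Finset.sum_nonpos fun s hs => (nearestCost_eq_zero ?_).le).trans hnonneg
    exact hzero s (Finset.mem_filter.1 hs).1 (Finset.mem_filter.1 hs).2
  push Not at hzero
  obtain ⟨u, hu, rfl, t, ht, hut, htu⟩ := hzero
  obtain ⟨w, hw, hcover⟩ := exists_closed_walk_darts_nodup G u
  calc _ ≤ walkCost c w := by
        refine sum_nearestCost_le_walkCost hc w (hSA hu) ht htu (hcover t hut)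
          (fun s hs => hSA (Finset.mem_filter.1 hs).1) fun s hs => hcover s ?_
        exact (ConnectedComponent.exact (Finset.mem_filter.1 hs).2).symm
    _ = ∑ d ∈ w.darts.toFinset, c d.edge := by
        rw [List.sum_toFinset _ hw, walkCost, Walk.edges, List.map_map]
        rfl
    _ ≤ _ := by
        refine Finset.sum_le_sum_of_subset_of_nonneg (fun d hd => ?_) fun d _ _ => hc d.edge
        have hd' := w.dart_fst_mem_support_of_mem_darts (List.mem_toFinset.1 hd)
        simpa using (w.takeUntil d.fst hd').reachable.symm

lemma sum_dart_eq_two_mul_cost [Fintype V] [DecidableRel G.Adj] :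
    ∑ d : G.Dart, c d.edge = 2 * cost c G := by
  classical
  rw [cost, ← coe_edgeFinset, finsum_mem_coe_finset, Finset.mul_sum,
    ← Finset.sum_fiberwise_of_maps_to (t := G.edgeFinset) (g := fun d : G.Dart => d.edge)
      (fun d _ => mem_edgeFinset.2 d.edge_mem)]
  refine Finset.sum_congr rfl fun e he => ?_
  rw [Finset.sum_congr rfl fun d hd => congrArg c (Finset.mem_filter.1 hd).2, Finset.sum_const,
    G.dart_edge_fiber_card e (mem_edgeFinset.1 he), two_nsmul, two_mul]

theorem sum_nearestCost_le [Finite V] (hc : ∀ e, 0 ≤ c e) {S : Finset V} (hSA : ↑S ⊆ A) :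
    ∑ s ∈ S, nearestCost G c A s ≤ 2 * cost c G := by
  classical
  have := Fintype.ofFinite V
  rw [← sum_dart_eq_two_mul_cost, ← Finset.sum_fiberwise S G.connectedComponentMk,
    ← Finset.sum_fiberwise Finset.univ fun d : G.Dart => G.connectedComponentMk d.fst]
  exact Finset.sum_le_sum fun C _ => sum_nearestCost_component_le hc hSA C

end Tours

section Cost

variable {V ι : Type*} {G H : SimpleGraph V} {c : Sym2 V → ℝ} {u v : V}

lemma cost_nonneg (hc : ∀ e, 0 ≤ c e) (H : SimpleGraph V) : 0 ≤ cost c H :=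
  finsum_nonneg fun e => finsum_nonneg fun _ => hc e

lemma cost_eq_sum_indicator [Fintype (Sym2 V)] (c : Sym2 V → ℝ) (H : SimpleGraph V) :
    cost c H = ∑ e, H.edgeSet.indicator c e := by
  rw [cost, finsum_mem_def, finsum_eq_sum_of_fintype]

lemma cost_mono [Finite V] (hc : ∀ e, 0 ≤ c e) (h : H ≤ G) : cost c H ≤ cost c G := by
  have := Fintype.ofFinite (Sym2 V)
  simp only [cost_eq_sum_indicator]
  exact Finset.sum_le_sum fun e _ =>
    Set.indicator_le_indicator_of_subset (edgeSet_mono h) hc e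

lemma cost_iSup_le [Finite V] [Fintype ι] (hc : ∀ e, 0 ≤ c e) (Q : ι → SimpleGraph V) :
    cost c (⨆ i, Q i) ≤ ∑ i, cost c (Q i) := by
  have := Fintype.ofFinite (Sym2 V)
  simp only [cost_eq_sum_indicator]
  rw [Finset.sum_comm]
  refine Finset.sum_le_sum fun e _ => ?_
  have hnonneg : ∀ i ∈ Finset.univ, 0 ≤ (Q i).edgeSet.indicator c e :=
    fun i _ => Set.indicator_nonneg (fun e _ => hc e) e
  by_cases he : e ∈ (⨆ i, Q i).edgeSet
  · obtain ⟨i, hi⟩ : ∃ i, e ∈ (Q i).edgeSet := by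
      rwa [edgeSet_iSup, Set.mem_iUnion] at he
    rw [Set.indicator_of_mem he, ← Set.indicator_of_mem hi c]
    exact Finset.single_le_sum hnonneg (Finset.mem_univ i)
  · rw [Set.indicator_of_notMem he]
    exact Finset.sum_nonneg hnonneg

lemma cost_iSup_of_pairwise_disjoint [Finite V] [Fintype ι] {Q : ι → SimpleGraph V}
    (hQ : Pairwise (Function.onFun Disjoint Q)) : cost c (⨆ i, Q i) = ∑ i, cost c (Q i) := by
  rw [cost, edgeSet_iSup, finsum_mem_iUnion
    (fun i j hij => disjoint_edgeSet.2 (hQ hij)) (fun i => Set.toFinite _),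
    finsum_eq_sum_of_fintype]
  rfl

lemma cost_toSubgraph_spanningCoe {p : G.Walk u v} (hp : p.IsTrail) :
    cost c p.toSubgraph.spanningCoe = walkCost c p := by
  classical
  have hedges : p.toSubgraph.spanningCoe.edgeSet = ↑p.edges.toFinset := by
    ext e
    simp
  rw [cost, hedges, finsum_mem_coe_finset, List.sum_toFinset _ hp.edges_nodup, walkCost]

end Cost

section ElementFans

variable {V : Type*} {G L : SimpleGraph V} {c : Sym2 V → ℝ} {T : Set V} {f : V → V}
  {r t : V} {k : ℕ}

lemma elemCost_le_cost (hc : ∀ e, 0 ≤ c e) {H : SimpleGraph V} (hle : H ≤ G)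
    (hH : HasElemFanTo H T r t k) : elemCost G c T r t k ≤ cost c H := by
  refine csInf_le ⟨0, ?_⟩ ⟨H, hle, hH, rfl⟩
  rintro _ ⟨H', -, -, rfl⟩
  exact cost_nonneg hc H'

lemma elemCost_le_sum_nearestCost [Finite V] {ι : Type*} [Fintype ι] (hc : ∀ e, 0 ≤ c e)
    {Q : ι → SimpleGraph V} (hQ : ∀ j, Q j ≤ G)
    (hreach : ∀ j, ∃ t' ∈ T ∪ {r}, t' ≠ t ∧ (Q j).Reachable t t') (σ : Fin k → ι)
    (hσ : ∀ i i', i ≠ i' → (Q (σ i)).support ∩ (Q (σ i')).support ⊆ T ∪ {r}) :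
    elemCost G c T r t k ≤ ∑ j, nearestCost (Q j) c (T ∪ {r}) t := by
  choose s hs hst hreach using hreach
  choose e p hp hcost using fun j =>
    exists_isTerminalPath_walkCost_eq (c := c) (hs j) (hst j) (hreach j)
  set H : SimpleGraph V := ⨆ j, (p j).toSubgraph.spanningCoe
  have hH : H ≤ G := iSup_le fun j => (p j).toSubgraph.spanningCoe_le.trans (hQ j)
  have hpH : ∀ j, ∀ e ∈ (p j).edges, e ∈ H.edgeSet := fun j e he => by
    rw [edgeSet_iSup]
    exact Set.mem_iUnion_of_mem j (by simpa [Walk.mem_edges_toSubgraph] using he)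
  have hsupport : ∀ j, ∀ x ∈ (p j).support, x ∈ (Q j).support := fun j x hx => by
    obtain ⟨y, -, hxy⟩ := adj_of_mem_walk_support (p j)
      (Walk.not_nil_of_ne (hp j).ne.symm) hx
    exact ⟨y, hxy⟩
  have hfan : HasElemFanTo H T r t k := by
    refine ⟨fun i => e (σ i), fun i => (p (σ i)).transfer H (hpH _),
      fun i => ⟨(hp _).mem, (hp _).ne⟩, fun i => (hp _).isPath.transfer _, ?_⟩
    intro i i' hii' x hx hx'
    rw [Walk.support_transfer] at hx hx'
    have hxA := hσ i i' hii' ⟨hsupport _ x hx, hsupport _ x hx'⟩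
    exact or_iff_not_imp_left.2 fun hxt => ⟨((hp _).eq_or_eq x hx hxA).resolve_left hxt,
      ((hp _).eq_or_eq x hx' hxA).resolve_left hxt⟩
  calc elemCost G c T r t k ≤ cost c H := elemCost_le_cost hc hH hfan
    _ ≤ ∑ j, cost c (p j).toSubgraph.spanningCoe := cost_iSup_le hc _
    _ = ∑ j, nearestCost (Q j) c (T ∪ {r}) t := Finset.sum_congr rfl fun j _ => by
        rw [cost_toSubgraph_spanningCoe (hp j).isPath.isTrail, hcost]

lemma IsCellPacking.support_inter_support_subset {A : Set V} (h : IsCellPacking L A f k) {i j : V}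
    (hij : i ≠ j) :
    (cell L A f (some i)).support ∩ (cell L A f (some j)).support ⊆ A := by
  rintro x ⟨⟨y, hy⟩, ⟨z, hz⟩⟩
  by_contra hx
  exact hij ((h.label_eq_of_adj hy hx).symm.trans (h.label_eq_of_adj hz hx))

lemma IsCellPacking.elemCost_le [Fintype V] (h : IsCellPacking L (T ∪ {r}) f k)
    (hc : ∀ e, 0 ≤ c e) (hL : L ≤ G) (ht : t ∈ T) :
    elemCost G c T r t k ≤ ∑ o, nearestCost (cell L (T ∪ {r}) f o) c (T ∪ {r}) t := by
  classical
  set A := T ∪ {r}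
  have hle : ∀ o, cell L A f o ≤ G := fun o => (cell_le L A f o).trans hL
  have hnonneg : ∀ o ∈ Finset.univ, 0 ≤ nearestCost (cell L A f o) c A t :=
    fun o _ => nearestCost_nonneg hc
  rcases h.adj_or_le_ncard t (.inl ht) with ⟨t', ht', hadj⟩ | hk
  · have hcell : (cell L A f none).Adj t t' := ⟨hadj, .inl ht, ht'⟩
    have hterm : (cell L A f none).support ⊆ A := fun x ⟨y, hxy⟩ => hxy.2.1
    refine (elemCost_le_sum_nearestCost (ι := Unit) hc (fun _ => hle none)
      (fun _ => ⟨t', ht', hadj.ne.symm, hcell.reachable⟩) (fun _ => ())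
      fun _ _ _ => Set.inter_subset_left.trans hterm).trans ?_
    rw [Fintype.sum_unique]
    exact Finset.single_le_sum hnonneg (Finset.mem_univ none)
  · obtain ⟨g⟩ : Nonempty (Fin k ↪ connectingLabels L A f t) := by
      rwa [Function.Embedding.nonempty_iff_card_le, Fintype.card_fin, ← Nat.card_eq_fintype_card,
        Nat.card_coe_set_eq]
    set g' : Fin k ↪ Option V := (g.trans (.subtype _)).trans .some
    calc elemCost G c T r t k ≤ ∑ i, nearestCost (cell L A f (g' i)) c A t :=
          elemCost_le_sum_nearestCost hc (fun i => hle _) (fun i => (g i).2) id fun i j hij =>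
            h.support_inter_support_subset (Subtype.coe_injective.ne (g.injective.ne hij))
      _ = ∑ o ∈ Finset.univ.map g', nearestCost (cell L A f o) c A t := by
          rw [Finset.sum_map]
      _ ≤ ∑ o, nearestCost (cell L A f o) c A t :=
          Finset.sum_le_sum_of_subset_of_nonneg (Finset.subset_univ _) fun o ho _ => hnonneg o ho

theorem IsCellPacking.sum_elemCost_le [Finite V] (h : IsCellPacking L (T ∪ {r}) f k)
    (hc : ∀ e, 0 ≤ c e) (hL : L ≤ G) :
    ∑ᶠ t ∈ T, elemCost G c T r t k ≤ 2 * cost c L := by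
  have := Fintype.ofFinite V
  rw [finsum_mem_eq_finite_toFinset_sum _ T.toFinite]
  set A := T ∪ {r}
  have hTA : ↑T.toFinite.toFinset ⊆ A := by simp [A]
  calc ∑ t ∈ T.toFinite.toFinset, elemCost G c T r t k
    _ ≤ ∑ t ∈ T.toFinite.toFinset, ∑ o, nearestCost (cell L A f o) c A t :=
        Finset.sum_le_sum fun t ht => h.elemCost_le hc hL (by simpa using ht)
    _ = ∑ o, ∑ t ∈ T.toFinite.toFinset, nearestCost (cell L A f o) c A t := Finset.sum_comm
    _ ≤ ∑ o, 2 * cost c (cell L A f o) :=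
        Finset.sum_le_sum fun o _ => sum_nearestCost_le hc hTA
    _ = 2 * cost c (⨆ o, cell L A f o) := by
        rw [← Finset.mul_sum, cost_iSup_of_pairwise_disjoint h.pairwise_disjoint_cell]
    _ ≤ 2 * cost c L :=
        mul_le_mul_of_nonneg_left (cost_mono hc (iSup_le (cell_le L A f))) zero_le_two

lemma elemCost_nonpos_of_subset_singleton [Finite V] (hc : ∀ e, 0 ≤ c e) (hT : T ⊆ {r})
    (ht : t ∈ T) : elemCost G c T r t k ≤ 0 := by
  obtain rfl : t = r := hT ht
  cases k with
  | zero =>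
    simpa using elemCost_le_sum_nearestCost (T := T) (r := t) (ι := Empty) (Q := fun _ => ⊥)
      hc (fun j => j.elim) (fun j => j.elim) Fin.elim0 (fun i => i.elim0)
  | succ k =>
    have hempty : {x | ∃ H ≤ G, HasElemFanTo H T t t (k + 1) ∧ x = cost c H} = ∅ := by
      refine Set.eq_empty_of_forall_notMem ?_
      rintro _ ⟨H, -, ⟨e, -, he, -⟩, -⟩
      exact (he 0).2 ((he 0).1.elim (fun h => hT h) id)
    exact (congrArg sInf hempty).trans_le Real.sInf_empty.le

end ElementFans

section Fans

variable {V : Type*} {K : SimpleGraph V} {T U : Set V} {a b r : V} {k : ℕ}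

lemma HasFan.symm (h : HasFan K a b k) : HasFan K b a k := by
  obtain ⟨P, hP, hdisj⟩ := h
  refine ⟨fun i => (P i).reverse, fun i => (hP i).reverse, fun i j hij x hx hx' => ?_⟩
  simp only [Walk.support_reverse, List.mem_reverse] at hx hx'
  exact (hdisj i j hij x hx hx').symm

lemma HasFan.le_ncard_outerBoundary [Finite V] (h : HasFan K a b k) (ha : a ∈ U) (hb : b ∉ U)
    (hbU : b ∉ outerBoundary K U) : k ≤ (outerBoundary K U).ncard := by
  obtain ⟨P, -, hdisj⟩ := h
  have hcross : ∀ i, ∃ x ∈ outerBoundary K U, x ∈ (P i).support := fun i => by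
    obtain ⟨d, hd, hfst, hsnd⟩ := (P i).exists_boundary_dart U ha hb
    exact ⟨d.snd, ⟨hsnd, d.fst, hfst, d.adj⟩, (P i).dart_snd_mem_support_of_mem_darts hd⟩
  choose x hxU hxP using hcross
  have hinj : Function.Injective x := fun i j hij => by
    by_contra hne
    rcases hdisj i j hne (x i) (hxP i) (hij ▸ hxP j) with heq | heq
    · exact (hxU i).1 (heq ▸ ha)
    · exact hbU (heq ▸ hxU i)
  calc k = (Set.range x).ncard := by rw [Set.ncard_range_of_injective hinj, Nat.card_fin]
    _ ≤ (outerBoundary K U).ncard := Set.ncard_le_ncard (Set.range_subset_iff.2 hxU)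

lemma cutCondition_of_hasFan [Finite V] (h : ∀ t ∈ T, HasFan K t r k) (hT : ∃ t ∈ T, t ≠ r) :
    CutCondition K (T ∪ {r}) k := by
  intro t U hU
  have hout : ∀ b ∈ T ∪ {r}, b ≠ t → b ∉ U := fun b hb hbt hbU => hbt (hU.eq_of_mem hbU hb)
  have hbdry : ∀ b ∈ T ∪ {r}, b ∉ outerBoundary K U :=
    fun b hb hbU => Set.disjoint_left.1 hU.disjoint_outerBoundary hbU hb
  have hr : r ∈ T ∪ {r} := .inr rfl
  by_cases htr : t = r
  · subst htr
    obtain ⟨t', ht', hne⟩ := hT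
    exact (h t' ht').symm.le_ncard_outerBoundary hU.mem.1 (hout t' (.inl ht') hne)
      (hbdry t' (.inl ht'))
  · exact (h t (hU.mem.2.resolve_right htr)).le_ncard_outerBoundary hU.mem.1
      (hout r hr (Ne.symm htr)) (hbdry r hr)

end Fans

/-- **Element-connectivity lemma (Chuzhoy–Khanna).** For any feasible solution `Hopt` of
the single-sink `k`-vertex-connectivity instance, `Σ_{t ∈ T} ElemCost(t) ≤ 2 · cost(Hopt)`;
in particular the sum is at most `2 · OPT`. -/
theorem elem_cost_sum_le {V : Type*} [Fintype V]
    (G : SimpleGraph V) (c : Sym2 V → ℝ) (hc : ∀ e, 0 ≤ c e)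
    (r : V) (T : Set V) (k : ℕ)
    (Hopt : SimpleGraph V) (hle : Hopt ≤ G)
    (hfeas : ∀ t ∈ T, HasFan Hopt t r k) :
    ∑ᶠ t ∈ T, elemCost G c T r t k ≤ 2 * cost c Hopt := by
  by_cases hT : ∃ t ∈ T, t ≠ r
  · obtain ⟨L, hL, f, hf⟩ := (cutCondition_of_hasFan hfeas hT).exists_isCellPacking
    calc ∑ᶠ t ∈ T, elemCost G c T r t k ≤ 2 * cost c L := hf.sum_elemCost_le hc (hL.trans hle)
      _ ≤ 2 * cost c Hopt := mul_le_mul_of_nonneg_left (cost_mono hc hL) zero_le_two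
  · push Not at hT
    calc ∑ᶠ t ∈ T, elemCost G c T r t k ≤ 0 := by
          rw [finsum_mem_eq_finite_toFinset_sum _ T.toFinite]
          exact Finset.sum_nonpos fun t ht =>
            elemCost_nonpos_of_subset_singleton hc hT (by simpa using ht)
      _ ≤ 2 * cost c Hopt := mul_nonneg zero_le_two (cost_nonneg hc Hopt)
end

section
/- Let G=(V,E) be an undirected graph of treewidth at most r−1 with terminal set T ⊆ V such that every pair of terminals is k-element-connected. Then G contains at least k/(12 r² log₂(3r)) pairwise element-disjoint Steiner trees spanning T. -/
open SimpleGraph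

/-- Two subgraphs, given as graphs on the same vertex set, are *element-disjoint* with
respect to the terminal set `T`: they share no edges and no non-terminal vertices. -/
def EDisj {V : Type*} (T : Set V) (H₁ H₂ : SimpleGraph V) : Prop :=
  Disjoint H₁.edgeSet H₂.edgeSet ∧ ∀ x, x ∈ H₁.support → x ∈ H₂.support → x ∈ T

/-- `H` is a Steiner tree of `G` for the terminal set `T`: a tree subgraph of `G`
containing all the terminals. -/
def IsSteinerTree {V : Type*} (G : SimpleGraph V) (T : Set V) (H : SimpleGraph V) : Prop :=
  H ≤ G ∧ H.IsAcyclic ∧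
    ∀ x ∈ H.support ∪ T, ∀ y ∈ H.support ∪ T, H.Reachable x y

/-- `H` is a Steiner forest of `G` for the terminal groups `T i`: a forest subgraph of
`G` in which each group lies entirely within a single tree of the forest. -/
def IsSteinerForest {V : Type*} {m : ℕ} (G : SimpleGraph V) (T : Fin m → Set V)
    (H : SimpleGraph V) : Prop :=
  H ≤ G ∧ H.IsAcyclic ∧ ∀ i, ∀ u ∈ T i, ∀ v ∈ T i, H.Reachable u v

/-- `G` has a tree decomposition in which every bag has at most `r` vertices,
i.e. `G` has treewidth at most `r - 1`. -/
def HasTreeDecompWidthLE {V : Type*} (G : SimpleGraph V) (r : ℕ) : Prop :=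
  ∃ (ι : Type) (Tr : SimpleGraph ι) (bag : ι → Set V),
    Tr.Connected ∧ Tr.IsAcyclic ∧
    (∀ v, ∃ i, v ∈ bag i) ∧
    (∀ u v, G.Adj u v → ∃ i, u ∈ bag i ∧ v ∈ bag i) ∧
    (∀ (x : V) (i j : ι), x ∈ bag i → x ∈ bag j →
      ∀ p : Tr.Walk i j, p.IsPath → ∀ y ∈ p.support, x ∈ bag y) ∧
    (∀ i, (bag i).ncard ≤ r)

/-!
Regard the nonterminals as elements and look at cuts of the graph that label every terminal `1` or
`-1` and every element `1`, `0` or `-1`, an element labelled `0` being deleted. The number of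
deleted elements is submodular, so uncrossing shows that every edge between two nonterminals can be
deleted or contracted without creating a cut with fewer than `k` deleted elements. In the end no
two elements are adjacent, and the elements become the hyperedges of a `k`-edge-connected
hypergraph on the terminals. A tree decomposition of the graph represents this hypergraph by
subtrees of a tree, of which at most `r` pass through any node.

Suppose that `k ≥ q r²` and that there are more than `r` vertices. Root the tree, let `c` be a
deepest node that is the top of the subtree of some vertex, and let `D` be the set of nodes below
`c`. Every vertex whose subtree meets `D` has `c` in its subtree, so there are at most `r` of them.
Let `L` consist of those whose subtrees lie inside `D` and let `W` consist of the others. Only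
hyperedges through `c` join `L` to vertices outside `L ∪ W`, so a nonempty subset of `L` is left by
more than `q r |W|` hyperedges inside `L ∪ W`. A minimal set `S` meeting `L` whose cut is small
compared with `|W \ S|` then has at least two vertices and is `q r`-edge-connected by its own
hyperedges, which suffices to choose `q` disjoint spanning connected subhypergraphs of `S` greedily.
Contracting `S` preserves the width and the edge-connectivity, and induction on the number of
vertices gives `q` disjoint connected spanning subhypergraphs, each of which contains a Steiner
tree of the graph.
-/

section Trees

variable {ι : Type*} {Tr : SimpleGraph ι} {ρ c : ι} {B D : Set ι}

lemma exists_adj_of_connected_induce (hB : (Tr.induce B).Connected) (hmeet : (B ∩ D).Nonempty)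
    (hsub : ¬ B ⊆ D) : ∃ i ∈ B ∩ D, ∃ j ∈ B \ D, Tr.Adj i j := by
  obtain ⟨i, hi, hiD⟩ := hmeet
  obtain ⟨j, hj, hjD⟩ := Set.not_subset.1 hsub
  obtain ⟨w⟩ := hB.preconnected ⟨i, hi⟩ ⟨j, hj⟩
  obtain ⟨d, -, hd₁, hd₂⟩ := w.exists_boundary_dart (Subtype.val ⁻¹' D) hiD hjD
  exact ⟨d.fst, ⟨d.fst.2, hd₁⟩, d.snd, ⟨d.snd.2, hd₂⟩, d.adj⟩

/-- The vertices of `Tr` lying at or below `c` when the tree `Tr` is rooted at `ρ`: those that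
cannot be reached from `ρ` without passing through `c`. -/
def descendants (Tr : SimpleGraph ι) (ρ c : ι) : Set ι :=
  {i | ∀ p : Tr.Walk ρ i, c ∈ p.support}

lemma self_mem_descendants : c ∈ descendants Tr ρ c := fun p => p.end_mem_support

lemma eq_of_adj_of_mem_descendants {i j : ι} (hi : i ∈ descendants Tr ρ c)
    (hj : j ∉ descendants Tr ρ c) (hadj : Tr.Adj i j) : c = i := by
  obtain ⟨p, hp⟩ := not_forall.1 hj
  simpa [hp, Walk.support_concat] using hi (p.concat hadj.symm)

lemma mem_of_connected_of_not_subset_descendants (hB : (Tr.induce B).Connected)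
    (hmeet : (B ∩ descendants Tr ρ c).Nonempty) (hsub : ¬ B ⊆ descendants Tr ρ c) : c ∈ B := by
  obtain ⟨i, ⟨hiB, hi⟩, j, ⟨-, hj⟩, hadj⟩ := exists_adj_of_connected_induce hB hmeet hsub
  exact eq_of_adj_of_mem_descendants hi hj hadj ▸ hiB

lemma dist_lt_dist_of_mem_descendants (hTr : Tr.Connected) {i : ι}
    (hi : i ∈ descendants Tr ρ c) (hne : c ≠ i) : Tr.dist ρ c < Tr.dist ρ i := by
  classical
  obtain ⟨p, hp⟩ := hTr.exists_walk_length_eq_dist ρ i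
  exact hp ▸ (dist_le _).trans_lt (p.length_takeUntil_lt_length (hi p) hne)

lemma mem_descendants_of_adj (hTr : Tr.IsTree) {i : ι} (hadj : Tr.Adj c i)
    (hle : Tr.dist ρ c ≤ Tr.dist ρ i) : i ∈ descendants Tr ρ c := by
  classical
  intro w
  obtain ⟨p, hp⟩ := hTr.connected.exists_walk_length_eq_dist ρ c
  have hdist : Tr.dist ρ i = Tr.dist ρ c + 1 := by
    have := hTr.dist_eq_dist_add_one_of_adj ρ hadj
    omega
  have hpath : (p.concat hadj).IsPath :=
    Walk.isPath_of_length_eq_dist _ (by rw [Walk.length_concat, hp, hdist])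
  have heq : w.bypass = p.concat hadj :=
    congrArg Subtype.val
      ((hTr.isAcyclic.subsingleton_path ρ i).elim ⟨_, w.bypass_isPath⟩ ⟨_, hpath⟩)
  apply w.support_bypass_subset_support
  simp [heq, Walk.support_concat]

lemma exists_subset_descendants (hTr : Tr.IsTree) (ρ : ι) (hB : (Tr.induce B).Connected) :
    ∃ c ∈ B, B ⊆ descendants Tr ρ c := by
  have hne : B.Nonempty := Set.nonempty_coe_sort.1 hB.nonempty
  obtain ⟨c, hc, hmin⟩ := exists_minimalFor_of_wellFoundedLT (· ∈ B) (Tr.dist ρ) hne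
  refine ⟨c, hc, by_contra fun hsub => ?_⟩
  obtain ⟨i, ⟨-, hi⟩, j, ⟨hjB, hj⟩, hadj⟩ :=
    exists_adj_of_connected_induce hB ⟨c, hc, self_mem_descendants⟩ hsub
  obtain rfl := eq_of_adj_of_mem_descendants hi hj hadj
  exact hj (mem_descendants_of_adj hTr hadj ((le_total _ _).elim id (hmin hjB)))

/-- `D` is the set of descendants of a deepest vertex `c` among the tops of the subtrees. -/
lemma exists_lowest_subtree {α : Type*} [Finite α] [Nonempty α] (hTr : Tr.IsTree) {S : α → Set ι}
    (hS : ∀ t, (Tr.induce (S t)).Connected) :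
    ∃ (c : ι) (D : Set ι), (∃ t, S t ⊆ D) ∧
      (∀ B, (Tr.induce B).Connected → (B ∩ D).Nonempty → ¬ B ⊆ D → c ∈ B) ∧
      ∀ t, (S t ∩ D).Nonempty → c ∈ S t := by
  obtain ⟨ρ⟩ := hTr.connected.nonempty
  choose top htop hsub using fun t => exists_subset_descendants hTr ρ (hS t)
  obtain ⟨t₀, ht₀⟩ := Finite.exists_max fun t => Tr.dist ρ (top t)
  refine ⟨top t₀, descendants Tr ρ (top t₀), ⟨t₀, hsub t₀⟩,
    fun B => mem_of_connected_of_not_subset_descendants, fun t ht => ?_⟩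
  by_cases hle : S t ⊆ descendants Tr ρ (top t₀)
  · by_cases heq : top t₀ = top t
    · exact heq ▸ htop t
    · exact absurd (ht₀ t)
        (dist_lt_dist_of_mem_descendants hTr.connected (hle (htop t)) heq).not_ge
  · exact mem_of_connected_of_not_subset_descendants (hS t) ht hle

end Trees

section Hypergraphs

variable {α Y : Type*} {N : Y → Set α} {F F' : Set Y} {A C S : Set α} {k l q : ℕ}

/-- The bipartition of the vertices into `C` and its complement separates two vertices of `A`. -/
def Splits (C A : Set α) : Prop :=
  (A ∩ C).Nonempty ∧ (A \ C).Nonempty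

/-- The hyperedges of `F` crossing the bipartition of the vertices into `C` and its complement.
A hypergraph is given by the vertex sets `N y` of its hyperedges `y`, so parallel hyperedges are
allowed. -/
def hypercut (N : Y → Set α) (F : Set Y) (C : Set α) : Set Y :=
  {y ∈ F | Splits C (N y)}

/-- The vertices of `A` are `k`-edge-connected in the hypergraph with hyperedges `F`. -/
def IsHyperconnected (k : ℕ) (N : Y → Set α) (F : Set Y) (A : Set α) : Prop :=
  ∀ C, Splits C A → k ≤ (hypercut N F C).ncard

/-- There are `q` pairwise disjoint subsets of the hyperedges `F`, each of which connects `A`. -/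
def HasPacking (N : Y → Set α) (F : Set Y) (A : Set α) (q : ℕ) : Prop :=
  ∃ P : Fin q → Set Y, (∀ j, P j ⊆ F ∧ IsHyperconnected 1 N (P j) A) ∧
    Pairwise fun i j => Disjoint (P i) (P j)

lemma splits_compl_iff : Splits Cᶜ A ↔ Splits C A := by
  rw [Splits, Splits, Set.sdiff_compl, ← Set.sdiff_eq, and_comm]

lemma splits_univ [Finite α] (hC : C.Nonempty) (hcard : C.ncard < Nat.card α) :
    Splits C Set.univ := by
  refine ⟨by rwa [Set.univ_inter], Set.sdiff_nonempty.2 fun hle => hcard.not_ge ?_⟩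
  rw [← Set.ncard_univ]
  exact Set.ncard_le_ncard hle

lemma not_splits_iff : ¬ Splits C A ↔ A ⊆ C ∨ Disjoint A C := by
  rw [Splits, not_and_or, Set.not_nonempty_iff_eq_empty, Set.not_nonempty_iff_eq_empty,
    Set.sdiff_eq_empty, or_comm, Set.disjoint_iff_inter_eq_empty]

lemma splits_image_iff {β : Type*} (π : α → β) {C : Set β} :
    Splits C (π '' A) ↔ Splits (π ⁻¹' C) A := by
  simp only [Splits, Set.Nonempty, Set.mem_inter_iff, Set.mem_sdiff, Set.mem_image,
    Set.mem_preimage]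
  grind

lemma hypercut_compl : hypercut N F Cᶜ = hypercut N F C := by
  simp only [hypercut, splits_compl_iff]

lemma hypercut_mono (h : F ⊆ F') : hypercut N F C ⊆ hypercut N F' C :=
  fun _ hy => ⟨h hy.1, hy.2⟩

lemma hypercut_inter_subset :
    hypercut N F (S ∩ C) ⊆ hypercut N F S ∪ hypercut N {y ∈ F | N y ⊆ S} C := by
  rintro y ⟨hy, ⟨a, haN, haS, haC⟩, b, hbN, hb⟩
  by_cases hsub : N y ⊆ S
  · exact .inr ⟨⟨hy, hsub⟩, ⟨a, haN, haC⟩, b, hbN, fun hbC => hb ⟨hsub hbN, hbC⟩⟩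
  · obtain ⟨d, hdN, hdS⟩ := Set.not_subset.1 hsub
    exact .inl ⟨hy, ⟨a, haN, haS⟩, d, hdN, hdS⟩

lemma IsHyperconnected.of_le (h : IsHyperconnected k N F A) (hl : l ≤ k) :
    IsHyperconnected l N F A :=
  fun C hC => hl.trans (h C hC)

section Connected

variable [Finite Y]

lemma isHyperconnected_one_iff :
    IsHyperconnected 1 N F A ↔ ∀ C, Splits C A → ∃ y ∈ F, Splits C (N y) :=
  forall₂_congr fun _ _ => Nat.succ_le_iff.trans (Set.ncard_pos (Set.toFinite _))

lemma IsHyperconnected.mono (h : IsHyperconnected k N F A) (hF : F ⊆ F') :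
    IsHyperconnected k N F' A :=
  fun C hC => (h C hC).trans (Set.ncard_le_ncard (hypercut_mono hF))

lemma IsHyperconnected.forall_of_propagates (h : IsHyperconnected 1 N F A) {P : α → Prop} {t₀ : α}
    (ht₀ : t₀ ∈ A) (h₀ : P t₀) (hP : ∀ y ∈ F, ∀ a ∈ N y, ∀ b ∈ N y, P a → P b) :
    ∀ t ∈ A, P t := by
  by_contra! hne
  obtain ⟨t, ht, hPt⟩ := hne
  obtain ⟨y, hy, ⟨a, haN, ha⟩, b, hbN, hb⟩ :=
    isHyperconnected_one_iff.1 h {t | P t} ⟨⟨t₀, ht₀, h₀⟩, t, ht, hPt⟩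
  exact hb (hP y hy a haN b hbN ha)

lemma IsHyperconnected.union_insert (h : IsHyperconnected 1 N F A) {y : Y}
    (hy : (A ∩ N y).Nonempty) : IsHyperconnected 1 N (insert y F) (A ∪ N y) := by
  rw [isHyperconnected_one_iff] at h ⊢
  intro C hC
  by_cases hA : Splits C A
  · obtain ⟨z, hz, hzC⟩ := h C hA
    exact ⟨z, Set.mem_insert_of_mem y hz, hzC⟩
  · refine ⟨y, Set.mem_insert y F, ?_⟩
    obtain ⟨a, haA, haN⟩ := hy
    obtain ⟨⟨b, hb, hbC⟩, d, hd, hdC⟩ := hC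
    rcases not_splits_iff.1 hA with hA | hA
    · exact ⟨⟨a, haN, hA haA⟩, d, hd.resolve_left fun h => hdC (hA h), hdC⟩
    · exact ⟨⟨b, hb.resolve_left fun h => hA.notMem_of_mem_left h hbC, hbC⟩,
        a, haN, hA.notMem_of_mem_left haA⟩

lemma IsHyperconnected.exists_subset_ncard_le [Finite α] (h : IsHyperconnected 1 N F A)
    (hN : ∀ y ∈ F, N y ⊆ A) :
    ∃ F₀ ⊆ F, F₀.ncard ≤ A.ncard ∧ IsHyperconnected 1 N F₀ A := by
  rcases A.eq_empty_or_nonempty with rfl | ⟨t, ht⟩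
  · exact ⟨∅, Set.empty_subset F, by simp, fun C hC => by simp [Splits] at hC⟩
  let IsSpanned (X : Set α) : Prop :=
    X ⊆ A ∧ ∃ F₀ ⊆ F, F₀.ncard ≤ X.ncard ∧ IsHyperconnected 1 N F₀ X
  have hsingle : IsSpanned {t} := by
    refine ⟨Set.singleton_subset_iff.2 ht, ∅, Set.empty_subset F, by simp, ?_⟩
    rintro C ⟨⟨_, rfl, ha⟩, _, rfl, hb⟩
    exact absurd ha hb
  obtain ⟨X, htX, ⟨hXA, F₀, hF₀, hcard, hconn⟩, hmax⟩ := Finite.exists_le_maximal hsingle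
  suffices hAX : A ⊆ X by
    obtain rfl := hXA.antisymm hAX
    exact ⟨F₀, hF₀, hcard, hconn⟩
  by_contra hAX
  obtain ⟨y, hy, ⟨a, haN, haX⟩, b, hbN, hbX⟩ :=
    isHyperconnected_one_iff.1 h X ⟨⟨t, ht, htX rfl⟩, Set.sdiff_nonempty.2 hAX⟩
  have hgrow : X.ncard < (X ∪ N y).ncard :=
    Set.ncard_lt_ncard ⟨Set.subset_union_left, fun hle => hbX (hle (.inr hbN))⟩
  have hspanned : IsSpanned (X ∪ N y) :=
    ⟨Set.union_subset hXA (hN y hy), insert y F₀, Set.insert_subset hy hF₀,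
      (Set.ncard_insert_le y F₀).trans (by omega), hconn.union_insert ⟨a, haX, haN⟩⟩
  exact hbX (hmax hspanned Set.subset_union_left (.inr hbN))

lemma IsHyperconnected.sdiff (h : IsHyperconnected (k + l) N F A) {F₀ : Set Y}
    (hF₀ : F₀.ncard ≤ l) : IsHyperconnected k N (F \ F₀) A := by
  intro C hC
  have hsub : hypercut N F C ⊆ hypercut N (F \ F₀) C ∪ F₀ := fun y hy =>
    (em (y ∈ F₀)).elim .inr fun hyF₀ => .inl ⟨⟨hy.1, hyF₀⟩, hy.2⟩
  have := (Set.ncard_le_ncard hsub).trans (Set.ncard_union_le _ _)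
  have := h C hC
  omega

lemma IsHyperconnected.hasPacking [Finite α] (h : IsHyperconnected (q * A.ncard) N F A)
    (hN : ∀ y ∈ F, N y ⊆ A) : HasPacking N F A q := by
  induction q generalizing F with
  | zero => exact ⟨fun j => j.elim0, fun j => j.elim0, fun j => j.elim0⟩
  | succ q ih =>
    rw [Nat.succ_mul] at h
    obtain hA | hA := A.ncard.eq_zero_or_pos
    · rw [Set.ncard_eq_zero] at hA
      subst hA
      exact ⟨fun _ => ∅, fun j => ⟨Set.empty_subset F, fun C hC => by simp [Splits] at hC⟩,
        fun _ _ _ => disjoint_bot_left⟩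
    obtain ⟨F₀, hF₀, hcard, hconn⟩ :=
      (h.of_le (l := 1) (by omega)).exists_subset_ncard_le hN
    obtain ⟨P, hP, hdisj⟩ := ih (h.sdiff hcard) fun y hy => hN y hy.1
    have hF₀P (j : Fin q) : Disjoint F₀ (P j) :=
      Set.disjoint_left.2 fun y hy hyP => ((hP j).1 hyP).2 hy
    refine ⟨Fin.cons F₀ P, Fin.cases ⟨hF₀, hconn⟩ fun j => ⟨(hP j).1.trans Set.sdiff_subset,
      (hP j).2⟩, fun i j hij => ?_⟩
    cases i using Fin.cases <;> cases j using Fin.cases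
    · exact absurd rfl hij
    · exact hF₀P _
    · exact (hF₀P _).symm
    · exact hdisj (ne_of_apply_ne Fin.succ hij)

lemma le_ncard_hypercut_of_inter [Finite α] {W : Set α} (hW : ((S \ C) ∩ W).Nonempty)
    (hS : (hypercut N F S).ncard ≤ k * (W \ S).ncard)
    (hSC : k * (W \ (S ∩ C)).ncard < (hypercut N F (S ∩ C)).ncard) :
    k ≤ (hypercut N {y ∈ F | N y ⊆ S} C).ncard := by
  obtain ⟨w, ⟨hwS, hwC⟩, hwW⟩ := hW
  have hlt : (W \ S).ncard < (W \ (S ∩ C)).ncard :=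
    Set.ncard_lt_ncard ⟨Set.sdiff_subset_sdiff_right Set.inter_subset_left,
      fun hle => (hle ⟨hwW, fun h => hwC h.2⟩).2 hwS⟩
  have hmul : k * (W \ S).ncard + k ≤ k * (W \ (S ∩ C)).ncard := Nat.mul_le_mul_left k hlt
  have hsub : (hypercut N F (S ∩ C)).ncard ≤
      (hypercut N F S).ncard + (hypercut N {y ∈ F | N y ⊆ S} C).ncard :=
    (Set.ncard_le_ncard hypercut_inter_subset).trans (Set.ncard_union_le _ _)
  omega

/-- `S` is a minimal set meeting `L` whose cut is at most `k` times the number of vertices of `W`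
outside it. -/
lemma exists_isHyperconnected_of_lt_ncard_hypercut [Finite α] {L W : Set α} (hL : L.Nonempty)
    (hLW : Disjoint L W) (hN : ∀ y ∈ F, N y ⊆ L ∪ W)
    (hcut : ∀ S ⊆ L, S.Nonempty → k * W.ncard < (hypercut N F S).ncard) :
    ∃ S ⊆ L ∪ W, S.Nontrivial ∧ IsHyperconnected k N {y ∈ F | N y ⊆ S} S := by
  let IsSparse (S : Set α) : Prop :=
    (S ∩ L).Nonempty ∧ (hypercut N F S).ncard ≤ k * (W \ S).ncard
  have hunion : IsSparse (L ∪ W) := by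
    refine ⟨by simpa [Set.union_inter_cancel_left], ?_⟩
    have : hypercut N F (L ∪ W) = ∅ :=
      Set.eq_empty_of_forall_notMem fun y hy => hy.2.2.ne_empty (Set.sdiff_eq_empty.2 (hN y hy.1))
    simp [this]
  obtain ⟨S, hSLW, ⟨hSL, hScut⟩, hmin⟩ := Finite.exists_le_minimal hunion
  have hSW : (S ∩ W).Nonempty := by
    by_contra hSW
    have hsub : S ⊆ L := fun x hx => (hSLW hx).resolve_right fun hxW => hSW ⟨x, hx, hxW⟩
    have := hcut S hsub (hSL.mono Set.inter_subset_left)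
    have := Nat.mul_le_mul_left k (Set.ncard_le_ncard (Set.sdiff_subset (s := W) (t := S)))
    omega
  have hlarge {C : Set α} (hCL : (S ∩ C ∩ L).Nonempty) (hCW : ((S \ C) ∩ W).Nonempty) :
      k ≤ (hypercut N {y ∈ F | N y ⊆ S} C).ncard :=
    le_ncard_hypercut_of_inter hCW hScut (not_le.1 fun hle => by
      obtain ⟨w, ⟨hwS, hwC⟩, -⟩ := hCW
      exact hwC (hmin (y := S ∩ C) ⟨hCL, hle⟩ Set.inter_subset_left hwS).2)
  obtain ⟨a, haS, haL⟩ := hSL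
  obtain ⟨w, hwS, hwW⟩ := hSW
  refine ⟨S, hSLW, ⟨a, haS, w, hwS, fun h => hLW.notMem_of_mem_left haL (h ▸ hwW)⟩, ?_⟩
  rintro C ⟨⟨b, hbS, hbC⟩, d, hdS, hdC⟩
  have hsides : (S ∩ C ∩ L).Nonempty ∧ ((S \ C) ∩ W).Nonempty ∨
      (S ∩ Cᶜ ∩ L).Nonempty ∧ ((S \ Cᶜ) ∩ W).Nonempty := by
    simp only [Set.Nonempty, Set.mem_inter_iff, Set.mem_sdiff, Set.mem_compl_iff]
    have hb := hSLW hbS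
    have hd := hSLW hdS
    grind
  rcases hsides with h | h
  · exact hlarge h.1 h.2
  · exact hypercut_compl ▸ hlarge h.1 h.2

end Connected

end Hypergraphs

section Contraction

variable {α Y : Type*} {N : Y → Set α} {F : Set Y} {S : Set α} {k q : ℕ}

open Classical in
/-- The map contracting the set of vertices `S` to the single new vertex `none`. -/
noncomputable def contractSet (S : Set α) (t : α) : Option ↥Sᶜ :=
  if h : t ∈ S then none else some ⟨t, h⟩

lemma contractSet_of_mem {t : α} (ht : t ∈ S) : contractSet S t = none := dif_pos ht

lemma contractSet_of_notMem {t : α} (ht : t ∉ S) : contractSet S t = some ⟨t, ht⟩ := dif_neg ht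

lemma contractSet_surjective (hS : S.Nonempty) : Function.Surjective (contractSet S)
  | none => hS.imp fun _ => contractSet_of_mem
  | some t => ⟨t, contractSet_of_notMem t.2⟩

lemma card_option_compl_lt [Finite α] (hS : S.Nontrivial) :
    Nat.card (Option ↥Sᶜ) < Nat.card α := by
  have := Set.one_lt_ncard_iff_nontrivial.2 hS
  have := Set.ncard_add_ncard_compl S
  rw [Finite.card_option, Nat.card_coe_set_eq]
  omega

lemma preimage_image_contractSet {C : Set α} (hC : ¬ Splits C S) :
    contractSet S ⁻¹' (contractSet S '' C) = C := by
  refine (Set.subset_preimage_image _ C).antisymm' ?_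
  rintro a ⟨b, hbC, hab⟩
  by_cases hb : b ∈ S
  · have ha : a ∈ S := by_contra fun ha => by
      simp [contractSet_of_mem hb, contractSet_of_notMem ha] at hab
    rcases not_splits_iff.1 hC with hC | hC
    · exact hC ha
    · exact absurd hbC (hC.notMem_of_mem_left hb)
  · have ha : a ∉ S := fun ha => by
      simp [contractSet_of_mem ha, contractSet_of_notMem hb] at hab
    rw [contractSet_of_notMem ha, contractSet_of_notMem hb, Option.some_inj, Subtype.mk.injEq]
      at hab
    exact hab ▸ hbC

lemma not_splits_preimage_contractSet {C : Set (Option ↥Sᶜ)} {A : Set α} (hA : A ⊆ S) :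
    ¬ Splits (contractSet S ⁻¹' C) A := by
  rintro ⟨⟨a, ha, haC⟩, b, hb, hbC⟩
  rw [Set.mem_preimage, contractSet_of_mem (hA ha)] at haC
  rw [Set.mem_preimage, contractSet_of_mem (hA hb)] at hbC
  exact hbC haC

lemma hypercut_contractSet (C : Set (Option ↥Sᶜ)) :
    hypercut (fun y => contractSet S '' N y) (F \ {y ∈ F | N y ⊆ S}) C =
      hypercut N F (contractSet S ⁻¹' C) := by
  ext y
  simp only [hypercut, splits_image_iff, Set.mem_ofPred_eq, Set.mem_sdiff, not_and,
    and_congr_left_iff, and_iff_left_iff_imp]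
  exact fun hy _ _ hNS => not_splits_preimage_contractSet hNS hy

lemma IsHyperconnected.image_contractSet (h : IsHyperconnected k N F Set.univ) (hS : S.Nonempty) :
    IsHyperconnected k (fun y => contractSet S '' N y) (F \ {y ∈ F | N y ⊆ S}) Set.univ := by
  intro C hC
  rw [← (contractSet_surjective hS).range_eq, ← Set.image_univ, splits_image_iff] at hC
  exact hypercut_contractSet C ▸ h _ hC

lemma HasPacking.of_contractSet [Finite Y] (hS : S.Nonempty)
    (h : HasPacking (fun y => contractSet S '' N y) (F \ {y ∈ F | N y ⊆ S}) Set.univ q)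
    (hin : HasPacking N {y ∈ F | N y ⊆ S} S q) : HasPacking N F Set.univ q := by
  obtain ⟨P, hP, hPdisj⟩ := h
  obtain ⟨Q, hQ, hQdisj⟩ := hin
  have hPQ (i j : Fin q) : Disjoint (P i) (Q j) :=
    (Set.disjoint_sdiff_left.mono_left (hP i).1).mono_right (hQ j).1
  refine ⟨fun j => P j ∪ Q j, fun j => ⟨?_, isHyperconnected_one_iff.2 fun C hC => ?_⟩,
    fun i j hij => ?_⟩
  · exact Set.union_subset ((hP j).1.trans Set.sdiff_subset) ((hQ j).1.trans (Set.sep_subset _ _))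
  · by_cases hCS : Splits C S
    · obtain ⟨y, hy, hyC⟩ := isHyperconnected_one_iff.1 (hQ j).2 C hCS
      exact ⟨y, .inr hy, hyC⟩
    · rw [← preimage_image_contractSet hCS, ← splits_image_iff, Set.image_univ,
        (contractSet_surjective hS).range_eq] at hC
      obtain ⟨y, hy, hyC⟩ := isHyperconnected_one_iff.1 (hP j).2 _ hC
      rw [splits_image_iff, preimage_image_contractSet hCS] at hyC
      exact ⟨y, .inl hy, hyC⟩
  · exact ((hPdisj hij).union_left (hPQ j i).symm).union_right
      ((hPQ i j).union_left (hQdisj hij))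

end Contraction

section TreeRepresentation

variable {ι : Type*} {Tr : SimpleGraph ι}

lemma connected_induce_iUnion {κ : Type*} {B : κ → Set ι}
    (hB : ∀ e, (Tr.induce (B e)).Connected) (e₀ : κ)
    (hinter : ∀ e, Relation.ReflTransGen (fun a b => (B a ∩ B b).Nonempty) e₀ e) :
    (Tr.induce (⋃ e, B e)).Connected := by
  obtain ⟨i₀, hi₀⟩ := Set.nonempty_coe_sort.1 (hB e₀).nonempty
  have hpatch (e : κ) : ∃ Z ⊆ ⋃ e, B e, i₀ ∈ Z ∧ B e ⊆ Z ∧ (Tr.induce Z).Connected := by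
    induction hinter e with
    | refl => exact ⟨B e₀, Set.subset_iUnion B e₀, hi₀, subset_rfl, hB e₀⟩
    | @tail a b _ hab ih =>
      obtain ⟨Z, hZ, hiZ, haZ, hconn⟩ := ih
      exact ⟨Z ∪ B b, Set.union_subset hZ (Set.subset_iUnion B b), .inl hiZ,
        Set.subset_union_right, induce_union_connected hconn.preconnected (hB b).preconnected
          (hab.mono (Set.inter_subset_inter_left _ haZ))⟩
  refine induce_connected_of_patches i₀ (Set.mem_iUnion_of_mem e₀ hi₀) fun {i} hi => ?_
  obtain ⟨e, he⟩ := Set.mem_iUnion.1 hi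
  obtain ⟨Z, hZ, hiZ, heZ, hconn⟩ := hpatch e
  exact ⟨Z, hZ, hiZ, heZ he, hconn.preconnected _ _⟩

variable {α Y : Type*} {N : Y → Set α} {F : Set Y} {S : Set α} {BT : α → Set ι}
  {BY : Y → Set ι} {r q : ℕ}

/-- A representation of a hypergraph by subtrees `BT t` and `BY y` of `Tr`, one for each vertex and
each hyperedge, such that incident subtrees intersect. It has width `r` if every node of `Tr`
belongs to at most `r` subtrees; the hyperedges represented by a single node are not counted. -/
structure TreeRepresentation (Tr : SimpleGraph ι) (N : Y → Set α) (F : Set Y) (r : ℕ)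
    (BT : α → Set ι) (BY : Y → Set ι) : Prop where
  vertex_connected : ∀ t, (Tr.induce (BT t)).Connected
  hyperedge_connected : ∀ y ∈ F, (Tr.induce (BY y)).Connected
  hyperedge_nonempty : ∀ y ∈ F, (N y).Nonempty
  inter_nonempty : ∀ y ∈ F, ∀ t ∈ N y, (BT t ∩ BY y).Nonempty
  width_le : ∀ i, {t | i ∈ BT t}.ncard + {y ∈ F | i ∈ BY y ∧ (BY y).Nontrivial}.ncard ≤ r

/-- The subtree representing the vertex obtained by contracting `S`. -/
def mergedSubtree (N : Y → Set α) (F : Set Y) (BT : α → Set ι) (BY : Y → Set ι) (S : Set α) :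
    Set ι :=
  (⋃ t ∈ S, BT t) ∪ ⋃ y ∈ {y ∈ F | N y ⊆ S}, BY y

namespace TreeRepresentation

lemma connected_mergedSubtree [Finite Y] (h : TreeRepresentation Tr N F r BT BY)
    (hS : S.Nonempty) (hconn : IsHyperconnected 1 N {y ∈ F | N y ⊆ S} S) :
    (Tr.induce (mergedSubtree N F BT BY S)).Connected := by
  let B : ↥S ⊕ ↥{y ∈ F | N y ⊆ S} → Set ι := Sum.elim (fun t => BT t) fun y => BY y
  have hunion : mergedSubtree N F BT BY S = ⋃ e, B e := by
    rw [mergedSubtree, Set.iUnion_sum, Set.biUnion_eq_iUnion, Set.biUnion_eq_iUnion]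
    rfl
  obtain ⟨t₀, ht₀⟩ := hS
  have hvertex : ∀ t ∈ S, ∀ ht : t ∈ S, Relation.ReflTransGen (fun a b => (B a ∩ B b).Nonempty)
      (.inl ⟨t₀, ht₀⟩) (.inl ⟨t, ht⟩) := by
    refine hconn.forall_of_propagates ht₀ (fun _ => .refl) fun y hy a ha b hb hreach hbS => ?_
    refine .tail (b := .inr ⟨y, hy⟩) (.tail (hreach (hy.2 ha)) ?_) ?_
    · exact h.inter_nonempty y hy.1 a ha
    · exact Set.inter_comm (BT b) (BY y) ▸ h.inter_nonempty y hy.1 b hb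
  rw [hunion]
  refine connected_induce_iUnion ?_ (.inl ⟨t₀, ht₀⟩) ?_
  · rintro (t | y)
    exacts [h.vertex_connected t, h.hyperedge_connected y y.2.1]
  · rintro (t | y)
    · exact hvertex t t.2 t.2
    · obtain ⟨t, ht⟩ := h.hyperedge_nonempty y y.2.1
      exact (hvertex t (y.2.2 ht) (y.2.2 ht)).tail (h.inter_nonempty y y.2.1 t ht)

lemma width_contract_le [Finite α] [Finite Y] (h : TreeRepresentation Tr N F r BT BY) (i : ι) :
    {z : Option ↥Sᶜ | i ∈ z.elim (mergedSubtree N F BT BY S) fun t => BT t}.ncard +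
      {y ∈ F \ {y ∈ F | N y ⊆ S} | i ∈ BY y ∧ (BY y).Nontrivial}.ncard ≤ r := by
  set bag := {z : Option ↥Sᶜ | i ∈ z.elim (mergedSubtree N F BT BY S) fun t => BT t} with hbag
  set image := contractSet S '' {t | i ∈ BT t}
  have himage : image.ncard ≤ {t | i ∈ BT t}.ncard := Set.ncard_image_le
  have hinsert : bag ⊆ insert none image := by
    rintro (_ | t) hz
    · exact .inl rfl
    · exact .inr ⟨t, hz, contractSet_of_notMem t.2⟩
  have hsub : {y ∈ F \ {y ∈ F | N y ⊆ S} | i ∈ BY y ∧ (BY y).Nontrivial} ⊆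
      {y ∈ F | i ∈ BY y ∧ (BY y).Nontrivial} := fun y hy => ⟨hy.1.1, hy.2⟩
  refine le_trans ?_ (h.width_le i)
  by_cases hnone : none ∈ bag → none ∈ image
  · have hle : bag ⊆ image := fun z hz => (hinsert hz).elim (fun h => h ▸ hnone (h ▸ hz)) id
    exact Nat.add_le_add ((Set.ncard_le_ncard hle).trans himage) (Set.ncard_le_ncard hsub)
  · obtain ⟨hi, hnot⟩ := Classical.not_imp.1 hnone
    have hBT : ∀ t ∈ S, i ∉ BT t := fun t ht hit => hnot ⟨t, hit, contractSet_of_mem ht⟩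
    simp only [hbag, Set.mem_ofPred_eq, Option.elim_none, mergedSubtree, Set.mem_union,
      Set.mem_iUnion, exists_prop] at hi
    obtain ⟨y, ⟨hyF, hyS⟩, hiy⟩ := hi.resolve_left fun ⟨t, ht, hit⟩ => hBT t ht hit
    have hnontriv : (BY y).Nontrivial := by
      by_contra htriv
      obtain ⟨t, ht⟩ := h.hyperedge_nonempty y hyF
      obtain ⟨j, hjt, hjy⟩ := h.inter_nonempty y hyF t ht
      exact hBT t (hyS ht) (Set.not_nontrivial_iff.1 htriv hjy hiy ▸ hjt)
    have hlt := Set.ncard_lt_ncard (Set.ssubset_iff_exists.2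
      ⟨hsub, y, ⟨hyF, hiy, hnontriv⟩, fun hy => hy.1.2 ⟨hyF, hyS⟩⟩)
    have := (Set.ncard_le_ncard hinsert).trans (Set.ncard_insert_le _ _)
    omega

lemma contract [Finite α] [Finite Y] (h : TreeRepresentation Tr N F r BT BY)
    (hS : S.Nonempty) (hconn : IsHyperconnected 1 N {y ∈ F | N y ⊆ S} S) :
    TreeRepresentation Tr (fun y => contractSet S '' N y) (F \ {y ∈ F | N y ⊆ S}) r
      (fun z => z.elim (mergedSubtree N F BT BY S) fun t => BT t) BY where
  vertex_connected
    | none => h.connected_mergedSubtree hS hconn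
    | some t => h.vertex_connected t
  hyperedge_connected y hy := h.hyperedge_connected y hy.1
  hyperedge_nonempty y hy := (h.hyperedge_nonempty y hy.1).image _
  inter_nonempty := by
    rintro y ⟨hy, -⟩ _ ⟨t, ht, rfl⟩
    refine (h.inter_nonempty y hy t ht).mono (Set.inter_subset_inter_left _ ?_)
    by_cases htS : t ∈ S
    · rw [contractSet_of_mem htS]
      exact Set.subset_union_of_subset_left (Set.subset_biUnion_of_mem htS) _
    · rw [contractSet_of_notMem htS, Option.elim_some]
  width_le := h.width_contract_le

lemma hypercut_subset_union (h : TreeRepresentation Tr N F r BT BY) {c : ι} {D : Set ι}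
    (hD : ∀ B, (Tr.induce B).Connected → (B ∩ D).Nonempty → ¬ B ⊆ D → c ∈ B)
    (hS : ∀ t ∈ S, BT t ⊆ D) :
    hypercut N F S ⊆ hypercut N {y ∈ F | N y ⊆ {t | (BT t ∩ D).Nonempty}} S ∪
      {y ∈ F | c ∈ BY y ∧ (BY y).Nontrivial} := by
  rintro y ⟨hy, hyS⟩
  by_cases hsub : N y ⊆ {t | (BT t ∩ D).Nonempty}
  · exact .inl ⟨⟨hy, hsub⟩, hyS⟩
  · obtain ⟨a, haN, haS⟩ := hyS.1
    obtain ⟨b, hbN, hb⟩ := Set.not_subset.1 hsub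
    obtain ⟨i, hia, hiy⟩ := h.inter_nonempty y hy a haN
    obtain ⟨j, hjb, hjy⟩ := h.inter_nonempty y hy b hbN
    have hiD : i ∈ D := hS a haS hia
    have hjD : j ∉ D := fun hj => hb ⟨j, hjb, hj⟩
    exact .inr ⟨hy, hD (BY y) (h.hyperedge_connected y hy) ⟨i, hiy, hiD⟩ fun hle => hjD (hle hjy),
      i, hiy, j, hjy, fun hij => hjD (hij ▸ hiD)⟩

lemma exists_isHyperconnected [Finite α] [Finite Y] (hTr : Tr.IsTree)
    (h : TreeRepresentation Tr N F r BT BY) (hq : 1 ≤ q) (hr : r < Nat.card α)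
    (hconn : IsHyperconnected (q * r ^ 2) N F Set.univ) :
    ∃ S : Set α, S.Nontrivial ∧ IsHyperconnected (q * S.ncard) N {y ∈ F | N y ⊆ S} S := by
  have : Nonempty α := (Nat.card_pos_iff.1 (r.zero_le.trans_lt hr)).1
  obtain ⟨c, D, ⟨t₀, ht₀⟩, hcross, hc⟩ := exists_lowest_subtree hTr h.vertex_connected
  set L := {t | BT t ⊆ D}
  set W := {t | (BT t ∩ D).Nonempty} \ L
  set crossing := {y ∈ F | c ∈ BY y ∧ (BY y).Nontrivial}
  have hLsub : L ⊆ {t | (BT t ∩ D).Nonempty} := fun t ht =>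
    (Set.nonempty_coe_sort.1 (h.vertex_connected t).nonempty).mono fun i hi => ⟨hi, ht hi⟩
  have hLW : L ∪ W = {t | (BT t ∩ D).Nonempty} := Set.union_sdiff_cancel hLsub
  have hwidth : (L ∪ W).ncard + crossing.ncard ≤ r :=
    (Nat.add_le_add_right (Set.ncard_le_ncard (hLW ▸ hc)) _).trans (h.width_le c)
  have hW : W.ncard < (L ∪ W).ncard :=
    Set.ncard_lt_ncard ⟨Set.subset_union_right, fun hle => (hle (.inl ht₀)).2 ht₀⟩
  have hcut : ∀ S ⊆ L, S.Nonempty →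
      q * r * W.ncard < (hypercut N {y ∈ F | N y ⊆ L ∪ W} S).ncard := by
    intro S hS hne
    have hSW := Set.ncard_le_ncard (hS.trans (Set.subset_union_left (t := W)))
    have hk := hconn S (splits_univ hne (by omega))
    have hlost : (hypercut N F S).ncard ≤
        (hypercut N {y ∈ F | N y ⊆ L ∪ W} S).ncard + crossing.ncard :=
      (Set.ncard_le_ncard (hLW ▸ h.hypercut_subset_union hcross hS)).trans (Set.ncard_union_le _ _)
    have hmul : q * r * (W.ncard + 1) ≤ q * r * r := Nat.mul_le_mul_left _ (by omega)
    have hqr : r ≤ q * r := Nat.le_mul_of_pos_left r hq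
    rw [mul_add_one] at hmul
    rw [pow_two, ← mul_assoc] at hk
    omega
  obtain ⟨S, hSLW, hnontriv, hS⟩ := exists_isHyperconnected_of_lt_ncard_hypercut ⟨t₀, ht₀⟩
    Set.disjoint_sdiff_right (fun y hy => hy.2) hcut
  have hSr : S.ncard ≤ r := (Set.ncard_le_ncard hSLW).trans (le_of_add_le_left hwidth)
  have hSF : IsHyperconnected (q * r) N {y ∈ F | N y ⊆ S} S :=
    hS.mono fun y hy => ⟨hy.1.1, hy.2⟩
  exact ⟨S, hnontriv, hSF.of_le (Nat.mul_le_mul_left q hSr)⟩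

theorem hasPacking [Finite α] [Finite Y] (hTr : Tr.IsTree)
    (h : TreeRepresentation Tr N F r BT BY) (hq : 1 ≤ q)
    (hconn : IsHyperconnected (q * r ^ 2) N F Set.univ) : HasPacking N F Set.univ q := by
  induction hn : Nat.card α using Nat.strong_induction_on generalizing α F with
  | h n ih =>
    subst hn
    rcases le_or_gt (Nat.card α) r with hr | hr
    · have hcard : q * (Set.univ : Set α).ncard ≤ q * r ^ 2 := by
        rw [Set.ncard_univ]
        exact Nat.mul_le_mul_left q (hr.trans (Nat.le_self_pow two_ne_zero r))
      exact (hconn.of_le hcard).hasPacking fun y _ => Set.subset_univ (N y)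
    · obtain ⟨S, hnontriv, hS⟩ := h.exists_isHyperconnected hTr hq hr hconn
      have hpos : 1 ≤ q * S.ncard :=
        Nat.mul_pos hq ((Set.ncard_pos (Set.toFinite S)).2 hnontriv.nonempty)
      exact .of_contractSet hnontriv.nonempty
        (ih _ (card_option_compl_lt hnontriv) (h.contract hnontriv.nonempty (hS.of_le hpos))
          (hconn.image_contractSet hnontriv.nonempty) rfl)
        (hS.hasPacking fun y hy => hy.2)

end TreeRepresentation

end TreeRepresentation

section ElementCuts

variable {α E : Type*} {inc : E → Set α} {R L : SimpleGraph E} {φ : E → E} {k : ℕ}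

/-- A cut separating the terminals `α` from each other: every terminal is on the side `1` or `-1`,
and every element is on one of these sides or, with label `0`, deleted. An element `e` may not be on
the side opposite to a terminal in `inc e` or to an `L`-neighbour, and the elements of one fibre of
`φ`, which are regarded as contracted to a single element, have the same label. -/
structure IsElementCut (inc : E → Set α) (L : SimpleGraph E) (φ : E → E) (ℓ : α → SignType)
    (m : E → SignType) : Prop where
  terminal_ne_zero : ∀ a, ℓ a ≠ 0
  eq_of_fiber : ∀ x y, φ x = φ y → m x = m y
  incident : ∀ e, ∀ a ∈ inc e, m e * ℓ a ≠ -1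
  adjacent : ∀ x y, L.Adj x y → m x * m y ≠ -1

/-- Any cut with terminals on both sides deletes at least `k` contracted elements. -/
def IsCutConnected (inc : E → Set α) (L : SimpleGraph E) (φ : E → E) (k : ℕ) : Prop :=
  ∀ ℓ m, IsElementCut inc L φ ℓ m → (∃ a, ℓ a = 1) → (∃ b, ℓ b = -1) →
    k ≤ (φ '' {e | m e = 0}).ncard

namespace IsElementCut

variable {ℓ ℓ' : α → SignType} {m m' : E → SignType}

lemma neg (h : IsElementCut inc L φ ℓ m) : IsElementCut inc L φ (-ℓ) (-m) where
  terminal_ne_zero a := SignType.neg_eq_zero_iff.not.2 (h.terminal_ne_zero a)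
  eq_of_fiber x y hxy := congrArg Neg.neg (h.eq_of_fiber x y hxy)
  incident e a ha := by simpa using h.incident e a ha
  adjacent x y hxy := by simpa using h.adjacent x y hxy

lemma inf (h : IsElementCut inc L φ ℓ m) (h' : IsElementCut inc L φ ℓ' m') :
    IsElementCut inc L φ (ℓ ⊓ ℓ') (m ⊓ m') := by
  have hmul : ∀ s t s' t' : SignType, s * t ≠ -1 → s' * t' ≠ -1 → (s ⊓ s') * (t ⊓ t') ≠ -1 := by
    decide
  refine ⟨fun a => ?_, fun x y hxy => ?_, fun e a ha => ?_, fun x y hxy => ?_⟩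
  · rcases min_choice (ℓ a) (ℓ' a) with heq | heq
    exacts [heq.trans_ne (h.terminal_ne_zero a), heq.trans_ne (h'.terminal_ne_zero a)]
  · exact congrArg₂ (· ⊓ ·) (h.eq_of_fiber x y hxy) (h'.eq_of_fiber x y hxy)
  · exact hmul _ _ _ _ (h.incident e a ha) (h'.incident e a ha)
  · exact hmul _ _ _ _ (h.adjacent x y hxy) (h'.adjacent x y hxy)

lemma sup (h : IsElementCut inc L φ ℓ m) (h' : IsElementCut inc L φ ℓ' m') :
    IsElementCut inc L φ (ℓ ⊔ ℓ') (m ⊔ m') := by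
  have hneg : ∀ s t : SignType, -(-s ⊓ -t) = s ⊔ t := by decide
  have hsup := (h.neg.inf h'.neg).neg
  rwa [show -(-ℓ ⊓ -ℓ') = ℓ ⊔ ℓ' from funext fun a => hneg _ _,
    show -(-m ⊓ -m') = m ⊔ m' from funext fun e => hneg _ _] at hsup

lemma ncard_zeros_inf_add_ncard_zeros_sup_le [Finite E] (h : IsElementCut inc L φ ℓ m)
    (h' : IsElementCut inc L φ ℓ' m') :
    (φ '' {e | (m ⊓ m') e = 0}).ncard + (φ '' {e | (m ⊔ m') e = 0}).ncard ≤
      (φ '' {e | m e = 0}).ncard + (φ '' {e | m' e = 0}).ncard := by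
  have hboth : ∀ s t : SignType, s ⊓ t = 0 → s ⊔ t = 0 → s = 0 ∧ t = 0 := by decide
  have hinf : ∀ s t : SignType, s ⊓ t = 0 → s = 0 ∨ t = 0 := by decide
  have hsup : ∀ s t : SignType, s ⊔ t = 0 → s = 0 ∨ t = 0 := by decide
  rw [← Set.ncard_union_add_ncard_inter, ← Set.ncard_union_add_ncard_inter (φ '' {e | m e = 0})]
  refine Nat.add_le_add (Set.ncard_le_ncard ?_) (Set.ncard_le_ncard ?_)
  · rw [← Set.image_union, ← Set.image_union]
    exact Set.image_mono fun e he => he.elim (hinf _ _) (hsup _ _)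
  · rintro _ ⟨⟨x, hx, rfl⟩, y, hy, hxy⟩
    have hy' : (m ⊔ m') x = 0 := by
      rw [Pi.sup_apply, ← h.eq_of_fiber y x hxy, ← h'.eq_of_fiber y x hxy]
      exact hy
    obtain ⟨h0, h0'⟩ := hboth _ _ hx hy'
    exact ⟨⟨x, h0, rfl⟩, x, h0', rfl⟩

lemma of_deleteEdges {p q : E} (h : IsElementCut inc (L.deleteEdges {s(p, q)}) φ ℓ m)
    (hpq : m p * m q ≠ -1) : IsElementCut inc L φ ℓ m where
  terminal_ne_zero := h.terminal_ne_zero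
  eq_of_fiber := h.eq_of_fiber
  incident := h.incident
  adjacent x y hxy := by
    by_cases heq : s(x, y) = s(p, q)
    · rcases Sym2.eq_iff.1 heq with ⟨rfl, rfl⟩ | ⟨rfl, rfl⟩
      exacts [hpq, mul_comm (m x) (m y) ▸ hpq]
    · exact h.adjacent x y (deleteEdges_adj.2 ⟨hxy, heq⟩)

lemma of_comp {ψ : E → E} (h : IsElementCut inc L (ψ ∘ φ) ℓ m) : IsElementCut inc L φ ℓ m where
  terminal_ne_zero := h.terminal_ne_zero
  eq_of_fiber x y hxy := h.eq_of_fiber x y (congrArg ψ hxy)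
  incident := h.incident
  adjacent := h.adjacent

lemma two_mul_le_of_corners [Finite E] {p q : E} (hL : IsCutConnected inc L φ k)
    (h : IsElementCut inc (L.deleteEdges {s(p, q)}) φ ℓ m)
    (h' : IsElementCut inc (L.deleteEdges {s(p, q)}) φ ℓ' m') (hp : m' p = 0) (hq : m' q = 0)
    (hpos : ∃ a, ℓ a = 1 ∧ ℓ' a = 1) (hneg : ∃ b, ℓ b = -1 ∧ ℓ' b = -1) :
    2 * k ≤ (φ '' {e | m e = 0}).ncard + (φ '' {e | m' e = 0}).ncard := by
  have hnonpos : ∀ s t : SignType, (s ⊓ 0) * (t ⊓ 0) ≠ -1 := by decide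
  have hnonneg : ∀ s t : SignType, (s ⊔ 0) * (t ⊔ 0) ≠ -1 := by decide
  obtain ⟨a, ha, ha'⟩ := hpos
  obtain ⟨b, hb, hb'⟩ := hneg
  have hinf := hL _ _ ((h.inf h').of_deleteEdges (by simpa [hp, hq] using hnonpos _ _))
    ⟨a, by simp [ha, ha']⟩ ⟨b, by simp [hb, hb']⟩
  have hsup := hL _ _ ((h.sup h').of_deleteEdges (by simpa [hp, hq] using hnonneg _ _))
    ⟨a, by simp [ha, ha']⟩ ⟨b, by simp [hb, hb']⟩
  exact (two_mul k).trans_le ((Nat.add_le_add hinf hsup).trans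
    (h.ncard_zeros_inf_add_ncard_zeros_sup_le h'))

/-- If the corner where both cuts are positive or the one where both are negative contains no
terminal, then both mixed corners contain one, and the second cut may be replaced by its negative.
-/
lemma two_mul_le_ncard_zeros_add_ncard_zeros [Finite E] {p q : E}
    (hL : IsCutConnected inc L φ k) (h : IsElementCut inc (L.deleteEdges {s(p, q)}) φ ℓ m)
    (hpos : ∃ a, ℓ a = 1) (hneg : ∃ b, ℓ b = -1)
    (h' : IsElementCut inc (L.deleteEdges {s(p, q)}) φ ℓ' m') (hpos' : ∃ a, ℓ' a = 1)
    (hneg' : ∃ b, ℓ' b = -1) (hp : m' p = 0) (hq : m' q = 0) :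
    2 * k ≤ (φ '' {e | m e = 0}).ncard + (φ '' {e | m' e = 0}).ncard := by
  by_cases hcorners : (∃ a, ℓ a = 1 ∧ ℓ' a = 1) ∧ ∃ b, ℓ b = -1 ∧ ℓ' b = -1
  · exact two_mul_le_of_corners hL h h' hp hq hcorners.1 hcorners.2
  · have hsign (s : SignType) (hs : s ≠ 0) : s = 1 ∨ s = -1 := by revert s; decide
    have hmixed : (∃ a, ℓ a = 1 ∧ (-ℓ') a = 1) ∧ ∃ b, ℓ b = -1 ∧ (-ℓ') b = -1 := by
      have hℓ := fun a => hsign (ℓ a) (h.terminal_ne_zero a)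
      have hℓ' := fun a => hsign (ℓ' a) (h'.terminal_ne_zero a)
      simp only [Pi.neg_apply, neg_eq_iff_eq_neg, neg_neg]
      grind
    simpa using two_mul_le_of_corners hL h h'.neg (by simp [hp]) (by simp [hq]) hmixed.1 hmixed.2

end IsElementCut

/-- Merging the fibre of `q` into the fibre of `p`. -/
noncomputable def mergeFibers (φ : E → E) (p q : E) : E → E :=
  open Classical in Function.update id (φ q) (φ p) ∘ φ

lemma mergeFibers_of_eq {p q e : E} (he : φ e = φ q) : mergeFibers φ p q e = φ p := by
  simp [mergeFibers, he]

lemma mergeFibers_of_ne {p q e : E} (he : φ e ≠ φ q) : mergeFibers φ p q e = φ e := by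
  simp [mergeFibers, he]

lemma IsCutConnected.deleteEdges_or_mergeFibers [Finite E] {p q : E}
    (hL : IsCutConnected inc L φ k) :
    IsCutConnected inc (L.deleteEdges {s(p, q)}) φ k ∨
      IsCutConnected inc (L.deleteEdges {s(p, q)}) (mergeFibers φ p q) k := by
  refine or_iff_not_imp_left.2 fun hdel ℓ' m' h' hpos' hneg' => ?_
  simp only [IsCutConnected, not_forall, not_le] at hdel
  obtain ⟨ℓ, m, h, hpos, hneg, hlt⟩ := hdel
  have hm'pq : m' p = m' q := h'.eq_of_fiber p q (by
    by_cases hpq : φ p = φ q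
    · rw [mergeFibers_of_eq hpq, mergeFibers_of_eq rfl]
    · rw [mergeFibers_of_ne hpq, mergeFibers_of_eq rfl])
  have h'φ : IsElementCut inc (L.deleteEdges {s(p, q)}) φ ℓ' m' := h'.of_comp
  have himage (e : E) (he : m' e = 0) (hne : φ e ≠ φ q) :
      φ e ∈ mergeFibers φ p q '' {e | m' e = 0} := ⟨e, he, mergeFibers_of_ne hne⟩
  by_cases hq : m' q = 0
  · have hcross := IsElementCut.two_mul_le_ncard_zeros_add_ncard_zeros hL h hpos hneg h'φ hpos'
      hneg' (hm'pq.trans hq) hq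
    have hsub : φ '' {e | m' e = 0} ⊆ insert (φ q) (mergeFibers φ p q '' {e | m' e = 0}) := by
      rintro _ ⟨e, he, rfl⟩
      exact or_iff_not_imp_left.2 (himage e he)
    have := (Set.ncard_le_ncard hsub).trans (Set.ncard_insert_le _ _)
    omega
  · have hsquare : ∀ s : SignType, s * s ≠ -1 := by decide
    refine (hL _ _ (h'φ.of_deleteEdges (hm'pq ▸ hsquare _)) hpos' hneg').trans
      (Set.ncard_le_ncard ?_)
    rintro _ ⟨e, he, rfl⟩
    exact himage e he fun heq => hq ((h'φ.eq_of_fiber e q heq).symm.trans he)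

/-- The map `φ` contracts connected sets of `R` to single vertices. -/
def IsContraction (R : SimpleGraph E) (φ : E → E) : Prop :=
  ∀ e, (R.induce {e' | φ e' = φ e}).Connected

lemma isContraction_id : IsContraction R id := fun e =>
  connected_iff_exists_forall_reachable _ |>.2
    ⟨⟨e, rfl⟩, fun x => (Subtype.ext x.2 : x = ⟨e, rfl⟩) ▸ .refl _⟩

lemma isContraction_mergeFibers (hφ : IsContraction R φ) {p q : E} (hpq : R.Adj p q) :
    IsContraction R (mergeFibers φ p q) := by
  have hunion : (R.induce ({e | φ e = φ p} ∪ {e | φ e = φ q})).Connected :=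
    connected_induce_union (hφ p).preconnected (hφ q).preconnected rfl rfl hpq
  have hval (x : E) : φ x = φ q ∧ mergeFibers φ p q x = φ p ∨
      φ x ≠ φ q ∧ mergeFibers φ p q x = φ x :=
    (em (φ x = φ q)).imp (fun h => ⟨h, mergeFibers_of_eq h⟩) fun h => ⟨h, mergeFibers_of_ne h⟩
  intro e
  by_cases he : φ e = φ p ∨ φ e = φ q
  · have hfiber : {x | mergeFibers φ p q x = mergeFibers φ p q e} =
        {x | φ x = φ p} ∪ {x | φ x = φ q} := by
      ext x
      simp only [Set.mem_ofPred_eq, Set.mem_union]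
      grind
    exact hfiber ▸ hunion
  · have hfiber : {x | mergeFibers φ p q x = mergeFibers φ p q e} = {x | φ x = φ e} := by
      ext x
      simp only [Set.mem_ofPred_eq]
      grind
    exact hfiber ▸ hφ e

theorem IsCutConnected.exists_isContraction [Finite E] (h : IsCutConnected inc R id k) :
    ∃ φ : E → E, IsContraction R φ ∧ IsCutConnected inc ⊥ φ k := by
  let IsReduct (L : SimpleGraph E) : Prop :=
    L ≤ R ∧ ∃ φ : E → E, IsContraction R φ ∧ IsCutConnected inc L φ k
  have hR : IsReduct R := ⟨le_rfl, id, isContraction_id, h⟩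
  obtain ⟨L, -, ⟨hLR, φ, hφ, hL⟩, hmin⟩ := Finite.exists_le_minimal hR
  suffices hbot : L = ⊥ from ⟨φ, hφ, hbot ▸ hL⟩
  by_contra hne
  obtain ⟨p, q, hpq⟩ := ne_bot_iff_exists_adj.1 hne
  have hdel : IsReduct (L.deleteEdges {s(p, q)}) := by
    refine ⟨(deleteEdges_le _).trans hLR, ?_⟩
    rcases hL.deleteEdges_or_mergeFibers (p := p) (q := q) with hL | hL
    exacts [⟨φ, hφ, hL⟩, ⟨_, isContraction_mergeFibers hφ (hLR hpq), hL⟩]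
  exact (deleteEdges_adj.1 (hmin hdel (deleteEdges_le _) hpq)).2 rfl

/-- The terminals incident with the contracted element `y`. -/
def contractedHyperedge (inc : E → Set α) (φ : E → E) (y : E) : Set α :=
  {a | ∃ e, φ e = y ∧ a ∈ inc e}

lemma IsCutConnected.isHyperconnected [Finite E] (h : IsCutConnected inc ⊥ φ k) :
    IsHyperconnected k (contractedHyperedge inc φ)
      {y | (contractedHyperedge inc φ y).Nonempty} Set.univ := by
  classical
  rintro C ⟨⟨a, -, ha⟩, b, -, hb⟩
  let ℓ : α → SignType := fun t => if t ∈ C then 1 else -1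
  let m : E → SignType := fun e =>
    if Splits C (contractedHyperedge inc φ (φ e)) then 0
    else if contractedHyperedge inc φ (φ e) ⊆ C then 1 else -1
  have hcut : IsElementCut inc ⊥ φ ℓ m :=
    { terminal_ne_zero := fun t => by
        by_cases ht : t ∈ C <;> simp [ℓ, ht]
      eq_of_fiber := fun x y hxy => by simp only [m, hxy]
      incident := fun e t ht => by
        have hte : t ∈ contractedHyperedge inc φ (φ e) := ⟨e, rfl, ht⟩
        by_cases hs : Splits C (contractedHyperedge inc φ (φ e))
        · simp [m, hs]
        · rcases not_splits_iff.1 hs with hsub | hdisj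
          · simp [ℓ, m, hs, hsub, hsub hte]
          · have htC := hdisj.notMem_of_mem_left hte
            have hsub : ¬ contractedHyperedge inc φ (φ e) ⊆ C := fun hsub => htC (hsub hte)
            simp [ℓ, m, hs, hsub, htC]
      adjacent := fun x y hxy => absurd hxy not_false }
  refine (h ℓ m hcut ⟨a, if_pos ha⟩ ⟨b, if_neg hb⟩).trans (Set.ncard_le_ncard ?_)
  rintro _ ⟨e, he, rfl⟩
  have hsplits : Splits C (contractedHyperedge inc φ (φ e)) := by
    by_contra hns
    by_cases hsub : contractedHyperedge inc φ (φ e) ⊆ C <;> simp [m, hns, hsub] at he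
  exact ⟨hsplits.1.mono Set.inter_subset_left, hsplits⟩

end ElementCuts

section ContractedRepresentation

variable {ι α E : Type*} {Tr : SimpleGraph ι} {inc : E → Set α} {R : SimpleGraph E} {φ : E → E}
  {BT : α → Set ι} {B : E → Set ι} {r : ℕ}

lemma IsContraction.connected_iUnion_fiber (hφ : IsContraction R φ)
    (hB : ∀ e, (Tr.induce (B e)).Connected) (hR : ∀ x y, R.Adj x y → (B x ∩ B y).Nonempty)
    (e₀ : E) : (Tr.induce (⋃ e : {e | φ e = φ e₀}, B e)).Connected := by
  refine connected_induce_iUnion (B := fun e : {e | φ e = φ e₀} => B e) (fun e => hB e)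
    ⟨e₀, rfl⟩ fun e => ?_
  have hreach := (reachable_iff_reflTransGen _ _).1 ((hφ e₀).preconnected ⟨e₀, rfl⟩ e)
  exact Relation.ReflTransGen.mono (fun x y (hxy : (R.induce _).Adj x y) => hR x y hxy) _ _ hreach

lemma IsContraction.eq_of_notMem_support (hφ : IsContraction R φ) {e e' : E}
    (he : e ∉ R.support) (hee' : φ e' = φ e) : e' = e := by
  by_contra hne
  obtain ⟨_, ⟨-, rfl⟩, x, -, hx⟩ := exists_adj_of_connected_induce (D := {e}) (hφ e) ⟨e, rfl, rfl⟩
    fun hsub => hne (hsub hee')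
  exact he ⟨x, hx⟩

/-- A hyperedge that is isolated in `R` is not merged with any other and may stay uncounted if it is
represented by a single node. -/
lemma IsContraction.treeRepresentation [Finite E] (hφ : IsContraction R φ)
    (hBT : ∀ t, (Tr.induce (BT t)).Connected) (hB : ∀ e, (Tr.induce (B e)).Connected)
    (hR : ∀ x y, R.Adj x y → (B x ∩ B y).Nonempty)
    (hinc : ∀ e, ∀ a ∈ inc e, (BT a ∩ B e).Nonempty)
    (hwidth : ∀ i, {t | i ∈ BT t}.ncard +
      {e | i ∈ B e ∧ ((B e).Nontrivial ∨ e ∈ R.support)}.ncard ≤ r) :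
    TreeRepresentation Tr (contractedHyperedge inc φ)
      {y | (contractedHyperedge inc φ y).Nonempty} r BT fun y => ⋃ e : {e | φ e = y}, B e where
  vertex_connected := hBT
  hyperedge_connected := by
    rintro _ ⟨_, e, rfl, _⟩
    exact hφ.connected_iUnion_fiber hB hR e
  hyperedge_nonempty y hy := hy
  inter_nonempty := by
    rintro y - a ⟨e, he, ha⟩
    exact (hinc e a ha).mono
      (Set.inter_subset_inter_right _ (Set.subset_iUnion (fun e : {e | φ e = y} => B e) ⟨e, he⟩))
  width_le i := by
    refine (Nat.add_le_add_left ?_ _).trans (hwidth i)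
    refine (Set.ncard_le_ncard ?_).trans (Set.ncard_image_le (f := φ))
    rintro y ⟨-, hy, hnontriv⟩
    obtain ⟨⟨e, rfl⟩, hi⟩ := Set.mem_iUnion.1 hy
    refine ⟨e, ⟨hi, or_iff_not_imp_right.2 fun he => ?_⟩, rfl⟩
    exact hnontriv.mono (Set.iUnion_subset fun e' =>
      (congrArg B (hφ.eq_of_notMem_support he e'.2)).subset)

end ContractedRepresentation

section SteinerTrees

variable {V : Type*} {G H H' : SimpleGraph V} {T : Set V}

lemma exists_isSteinerTree_le (hHG : H ≤ G) (hT : ∀ u ∈ T, ∀ v ∈ T, H.Reachable u v) :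
    ∃ F ≤ H, IsSteinerTree G T F := by
  rcases T.eq_empty_or_nonempty with rfl | ⟨t, ht⟩
  · exact ⟨⊥, bot_le, bot_le, isAcyclic_bot, by simp⟩
  obtain ⟨H', hH', hacyclic, hreach⟩ := H.exists_isAcyclic_reachable_eq_le
  let C := H'.connectedComponentMk t
  have hCH' : C.toSimpleGraph.spanningCoe ≤ H' := fun u v huv =>
    (C.adj_spanningCoe_toSimpleGraph.1 huv).2
  have hC : ∀ x ∈ C.toSimpleGraph.spanningCoe.support ∪ T, x ∈ C.supp := by
    rintro x (⟨y, hxy⟩ | hx)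
    · exact (C.adj_spanningCoe_toSimpleGraph.1 hxy).1
    · exact ConnectedComponent.sound (hreach ▸ hT x hx t ht)
  exact ⟨C.toSimpleGraph.spanningCoe, hCH'.trans hH', (hCH'.trans hH').trans hHG,
    hacyclic.anti hCH', fun x hx y hy =>
      (C.reachable_toSimpleGraph (hC x hx) (hC y hy)).map
        (Embedding.spanningCoe C.toSimpleGraph).toHom⟩

/-- An element of `G` with respect to the terminals `T`: a nonterminal vertex or an edge joining two
terminals. The other edges need not be counted, since graphs sharing such an edge also share a
nonterminal vertex. -/
abbrev Element (G : SimpleGraph V) (T : Set V) : Type _ :=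
  ↥Tᶜ ⊕ {e : Sym2 V // e ∈ G.edgeSet ∧ ∀ v ∈ e, v ∈ T}

namespace Element

/-- The terminals incident with an element. -/
def terminals : Element G T → Set ↥T :=
  Sum.elim (fun w => {t | G.Adj w t}) fun e => {t | ↑t ∈ e.1}

/-- The graph `G` without its terminals, to which the edges between terminals are added as isolated
vertices. -/
def nonterminalGraph (G : SimpleGraph V) (T : Set V) : SimpleGraph (Element G T) :=
  G.induce Tᶜ ⊕g ⊥

/-- The element is the edge `f` or an end of `f`. -/
def LiesOn : Element G T → Sym2 V → Prop :=
  Sum.elim (fun w f => ↑w ∈ f) fun e f => e.1 = f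

lemma exists_liesOn {f : Sym2 V} (hf : f ∈ G.edgeSet) : ∃ x : Element G T, x.LiesOn f := by
  by_cases hT : ∀ v ∈ f, v ∈ T
  · exact ⟨.inr ⟨f, hf, hT⟩, rfl⟩
  · obtain ⟨w, hw, hwT⟩ := not_forall₂.1 hT
    exact ⟨.inl ⟨w, hwT⟩, hw⟩

section Labels

variable {ℓ : ↥T → SignType} {m : Element G T → SignType}

/-- The side of a vertex in the cut given by the labels `ℓ` of the terminals and `m` of the
elements. -/
noncomputable def side (ℓ : ↥T → SignType) (m : Element G T → SignType) (v : V) : SignType :=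
  open Classical in if hv : v ∈ T then ℓ ⟨v, hv⟩ else m (.inl ⟨v, hv⟩)

lemma side_of_mem {v : V} (hv : v ∈ T) : side ℓ m v = ℓ ⟨v, hv⟩ := dif_pos hv

lemma side_of_notMem {v : V} (hv : v ∉ T) : side ℓ m v = m (.inl ⟨v, hv⟩) := dif_neg hv

lemma side_eq_of_adj (h : IsElementCut terminals (nonterminalGraph G T) id ℓ m) {u v : V}
    (huv : G.Adj u v) (hm : ∀ x : Element G T, x.LiesOn s(u, v) → m x ≠ 0) :
    side ℓ m u = side ℓ m v := by
  have heq : ∀ s t : SignType, s ≠ 0 → t ≠ 0 → s * t ≠ -1 → s = t := by decide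
  by_cases hu : u ∈ T <;> by_cases hv : v ∈ T
  · let e : Element G T := .inr ⟨s(u, v), huv, by simp [hu, hv]⟩
    have he : ∀ t ∈ terminals e, m e = ℓ t := fun t ht =>
      heq _ _ (hm e rfl) (h.terminal_ne_zero t) (h.incident e t ht)
    rw [side_of_mem hu, side_of_mem hv, ← he ⟨u, hu⟩ (Sym2.mem_mk_left u v),
      he ⟨v, hv⟩ (Sym2.mem_mk_right u v)]
  · rw [side_of_mem hu, side_of_notMem hv]
    exact (heq _ _ (hm (.inl ⟨v, hv⟩) (Sym2.mem_mk_right u v)) (h.terminal_ne_zero _)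
      (h.incident _ ⟨u, hu⟩ huv.symm)).symm
  · rw [side_of_notMem hu, side_of_mem hv]
    exact heq _ _ (hm (.inl ⟨u, hu⟩) (Sym2.mem_mk_left u v)) (h.terminal_ne_zero _)
      (h.incident _ ⟨v, hv⟩ huv)
  · rw [side_of_notMem hu, side_of_notMem hv]
    exact heq _ _ (hm _ (Sym2.mem_mk_left u v)) (hm _ (Sym2.mem_mk_right u v))
      (h.adjacent (.inl ⟨u, hu⟩) (.inl ⟨v, hv⟩) huv)

lemma side_eq_of_walk (h : IsElementCut terminals (nonterminalGraph G T) id ℓ m) {u v : V}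
    (p : G.Walk u v) (hm : ∀ f ∈ p.edges, ∀ x : Element G T, x.LiesOn f → m x ≠ 0) :
    side ℓ m u = side ℓ m v := by
  induction p with
  | nil => rfl
  | cons hadj p ih =>
    exact (side_eq_of_adj h hadj (hm _ List.mem_cons_self)).trans
      (ih fun f hf => hm f (List.mem_cons_of_mem _ hf))

end Labels

lemma not_elemDisjWalks_of_liesOn {u v : V} {p q : G.Walk u v} {x : Element G T} (hu : u ∈ T)
    (hv : v ∈ T) (hp : ∃ f ∈ p.edges, x.LiesOn f) (hq : ∃ f ∈ q.edges, x.LiesOn f) :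
    ¬ ElemDisjWalks T p q := by
  obtain ⟨f, hf, hxf⟩ := hp
  obtain ⟨g, hg, hxg⟩ := hq
  rintro ⟨hedges, hverts⟩
  rcases x with w | e
  · rcases hverts w (p.mem_support_of_mem_edges hf hxf) (q.mem_support_of_mem_edges hg hxg)
      with hw | hw | hw
    exacts [w.2 hw, w.2 (hw ▸ hu), w.2 (hw ▸ hv)]
  · obtain rfl : e.1 = f := hxf
    obtain rfl : e.1 = g := hxg
    exact hedges _ hf hg

lemma isCutConnected [Finite V] {k : ℕ}
    (hconn : ∀ u ∈ T, ∀ v ∈ T, u ≠ v → k ≤ elemConn G T u v) :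
    IsCutConnected terminals (nonterminalGraph G T) id k := by
  rintro ℓ m h ⟨a, ha⟩ ⟨b, hb⟩
  have hab : side ℓ m a ≠ side ℓ m b := by
    rw [side_of_mem a.2, side_of_mem b.2, ha, hb]
    decide
  refine (hconn a a.2 b b.2 fun heq => hab (by rw [heq])).trans ?_
  refine csSup_le ⟨0, fun i => i.elim0, fun i => i.elim0, fun i => i.elim0⟩ ?_
  rintro n ⟨P, -, hdisj⟩
  have hzero (i : Fin n) : ∃ x : Element G T, m x = 0 ∧ ∃ f ∈ (P i).edges, x.LiesOn f := by
    by_contra! hne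
    exact hab (side_eq_of_walk h (P i) fun f hf x hx h0 => hne x h0 f hf hx)
  choose x hx0 hx using hzero
  have hinj : Function.Injective x := fun i j hij => by
    by_contra hne
    exact not_elemDisjWalks_of_liesOn a.2 b.2 (hx i) (hij ▸ hx j) (hdisj i j hne)
  calc n = (Set.range x).ncard := by rw [Set.ncard_range_of_injective hinj, Nat.card_fin]
    _ ≤ (id '' {x | m x = 0}).ncard :=
      Set.ncard_le_ncard (Set.range_subset_iff.2 fun i => ⟨x i, hx0 i, rfl⟩)

/-- The subgraph of `G` formed by the edges on which only elements of `K` lie. -/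
def subgraphOf (K : Set (Element G T)) : SimpleGraph V where
  Adj u v := G.Adj u v ∧ ∀ x : Element G T, x.LiesOn s(u, v) → x ∈ K
  symm := ⟨fun _ _ h => ⟨h.1.symm, by simpa only [Sym2.eq_swap] using h.2⟩⟩
  loopless := ⟨fun _ h => h.1.ne rfl⟩

variable {K K' : Set (Element G T)}

lemma eDisj_of_disjoint (hK : Disjoint K K') (hH : H ≤ subgraphOf K) (hH' : H' ≤ subgraphOf K') :
    EDisj T H H' := by
  refine ⟨Set.disjoint_left.2 fun f hf hf' => ?_, fun v ⟨a, ha⟩ ⟨b, hb⟩ => ?_⟩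
  · induction f with
    | _ u v =>
      obtain ⟨x, hx⟩ := exists_liesOn (T := T) (G.mem_edgeSet.2 (hH hf).1)
      exact hK.notMem_of_mem_left ((hH hf).2 x hx) ((hH' hf').2 x hx)
  · by_contra hv
    exact hK.notMem_of_mem_left ((hH ha).2 (.inl ⟨v, hv⟩) (Sym2.mem_mk_left v a))
      ((hH' hb).2 _ (Sym2.mem_mk_left v b))

/-- A vertex belonging to the element. -/
noncomputable def anchor : Element G T → V :=
  Sum.elim (fun w => w) fun e => e.1.out.1

lemma subgraphOf_adj_of_notMem {u v : V} (huv : G.Adj u v) (hu : u ∉ T)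
    (hK : ∀ w : ↥Tᶜ, ↑w ∈ s(u, v) → .inl w ∈ K) : (subgraphOf K).Adj u v := by
  refine ⟨huv, ?_⟩
  rintro (w | ⟨e, _, heT⟩) hx
  · exact hK w hx
  · obtain rfl : e = s(u, v) := hx
    exact absurd (heT u (Sym2.mem_mk_left u v)) hu

lemma subgraphOf_adj_of_inr {u v : V} {h : s(u, v) ∈ G.edgeSet ∧ ∀ w ∈ s(u, v), w ∈ T}
    (hK : .inr ⟨s(u, v), h⟩ ∈ K) : (subgraphOf K).Adj u v := by
  refine ⟨h.1, ?_⟩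
  rintro (w | e) hx
  · exact absurd (h.2 w hx) w.2
  · obtain rfl : e = ⟨s(u, v), h⟩ := Subtype.ext hx
    exact hK

lemma reachable_anchor {x : Element G T} (hx : x ∈ K) {t : ↥T} (ht : t ∈ x.terminals) :
    (subgraphOf K).Reachable t x.anchor := by
  rcases x with w | ⟨e, he⟩
  · refine (Adj.reachable (subgraphOf_adj_of_notMem ht w.2 fun w' hw' => ?_)).symm
    obtain h | h := Sym2.mem_iff.1 hw'
    · rwa [Subtype.ext h]
    · exact absurd (h ▸ t.2) w'.2
  · obtain ⟨v, rfl⟩ := Sym2.mem_iff_exists.1 (show ↑t ∈ e from ht)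
    change (subgraphOf K).Reachable t s(↑t, v).out.1
    rcases Sym2.mem_iff.1 (Sym2.out_fst_mem s(↑t, v)) with h | h
    · rw [h]
    · rw [h]
      exact (subgraphOf_adj_of_inr hx).reachable

lemma reachable_of_nonterminalGraph_adj {x y : Element G T} (hx : x ∈ K) (hy : y ∈ K)
    (hxy : (nonterminalGraph G T).Adj x y) : (subgraphOf K).Reachable x.anchor y.anchor := by
  rcases x with u | e <;> rcases y with v | f
  · have huv : G.Adj u v := hxy
    refine (subgraphOf_adj_of_notMem huv u.2 fun w hw => ?_).reachable
    obtain h | h := Sym2.mem_iff.1 hw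
    · rwa [Subtype.ext h]
    · rwa [Subtype.ext h]
  all_goals simp [nonterminalGraph] at hxy

lemma reachable_of_isContraction [Finite V] {φ : Element G T → Element G T} {P : Set (Element G T)}
    (hφ : IsContraction (nonterminalGraph G T) φ)
    (hP : IsHyperconnected 1 (contractedHyperedge terminals φ) P Set.univ) :
    ∀ u ∈ T, ∀ v ∈ T, (subgraphOf (φ ⁻¹' P)).Reachable u v := by
  intro u hu v hv
  refine hP.forall_of_propagates (P := fun t : ↥T => (subgraphOf (φ ⁻¹' P)).Reachable u t)
    (t₀ := ⟨u, hu⟩) trivial (.refl _) ?_ ⟨v, hv⟩ trivial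
  rintro y hy a ⟨e, rfl, ha⟩ b ⟨e', he', hb⟩ hua
  have hfiber (x : {x | φ x = φ e}) : x.1 ∈ φ ⁻¹' P := (congrArg (· ∈ P) x.2).mpr hy
  have hanchor (x : {x | φ x = φ e}) :
      (subgraphOf (φ ⁻¹' P)).Reachable e.anchor x.1.anchor := by
    induction (reachable_iff_reflTransGen _ _).1 ((hφ e).preconnected ⟨e, rfl⟩ x) with
    | refl => rfl
    | @tail x z _ hxz ih =>
      exact ih.trans (reachable_of_nonterminalGraph_adj (hfiber x) (hfiber z) hxz)
  exact ((hua.trans (reachable_anchor (hfiber ⟨e, rfl⟩) ha)).trans (hanchor ⟨e', he'⟩)).trans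
    (reachable_anchor (hfiber ⟨e', he'⟩) hb).symm

end Element

lemma connected_induce_of_forall_isPath {ι : Type*} {Tr : SimpleGraph ι} (hTr : Tr.Connected)
    {s : Set ι} (hs : s.Nonempty)
    (hpath : ∀ i ∈ s, ∀ j ∈ s, ∀ p : Tr.Walk i j, p.IsPath → ∀ x ∈ p.support, x ∈ s) :
    (Tr.induce s).Connected := by
  obtain ⟨i, hi⟩ := hs
  refine induce_connected_of_patches i hi fun {j} hj => ?_
  obtain ⟨p, hp⟩ := hTr.exists_isPath i j
  exact ⟨{x | x ∈ p.support}, hpath i hi j hj p hp, p.start_mem_support, p.end_mem_support,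
    p.connected_induce_support.preconnected _ _⟩

lemma ncard_preimage_val_add_ncard_preimage_val_compl [Finite V] (T s : Set V) :
    (Subtype.val ⁻¹' s : Set ↥T).ncard + (Subtype.val ⁻¹' s : Set ↥Tᶜ).ncard = s.ncard := by
  rw [← Set.ncard_image_of_injective _ Subtype.val_injective,
    ← Set.ncard_image_of_injective (Subtype.val ⁻¹' s : Set ↥Tᶜ) Subtype.val_injective,
    Subtype.image_preimage_coe, Subtype.image_preimage_coe, Set.inter_comm T, Set.inter_comm Tᶜ,
    ← Set.sdiff_eq, Set.ncard_inter_add_ncard_sdiff_eq_ncard]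

namespace Element

/-- The nodes representing an element in a tree decomposition, for a choice of a node whose bag
contains both ends of each edge between terminals. -/
def subtree {ι : Type*} (bag : ι → Set V)
    (node : {e : Sym2 V // e ∈ G.edgeSet ∧ ∀ v ∈ e, v ∈ T} → ι) : Element G T → Set ι :=
  Sum.elim (fun w => {i | ↑w ∈ bag i}) fun e => {node e}

lemma exists_treeRepresentation [Finite V] {r : ℕ} {φ : Element G T → Element G T}
    (htw : HasTreeDecompWidthLE G r) (hφ : IsContraction (nonterminalGraph G T) φ) :
    ∃ (ι : Type) (Tr : SimpleGraph ι) (BT : ↥T → Set ι) (BY : Element G T → Set ι), Tr.IsTree ∧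
      TreeRepresentation Tr (contractedHyperedge terminals φ)
        {y | (contractedHyperedge terminals φ y).Nonempty} r BT BY := by
  obtain ⟨ι, Tr, bag, hTr, hacyclic, hcover, hadj, hconvex, hwidth⟩ := htw
  have hnode (e : {e : Sym2 V // e ∈ G.edgeSet ∧ ∀ v ∈ e, v ∈ T}) : ∃ i, ∀ v ∈ e.1, v ∈ bag i := by
    obtain ⟨⟨u, v⟩, huv, -⟩ := e
    obtain ⟨i, hu, hv⟩ := hadj u v huv
    exact ⟨i, Sym2.forall_mem_pair.2 ⟨hu, hv⟩⟩
  choose node hnode using hnode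
  have hbag (v : V) : (Tr.induce {i | v ∈ bag i}).Connected :=
    connected_induce_of_forall_isPath hTr (hcover v) fun i hi j hj => hconvex v i j hi hj
  refine ⟨ι, Tr, fun t => {i | ↑t ∈ bag i}, _, ⟨hTr, hacyclic⟩,
    hφ.treeRepresentation (B := subtree bag node) (fun t => hbag t) ?_ ?_ ?_ fun i => ?_⟩
  · rintro (w | e)
    · exact hbag w
    · exact Connected.of_subsingleton (V := ↥({node e} : Set ι))
  · rintro (u | e) (v | f) huv
    · exact hadj u v huv
    all_goals simp [nonterminalGraph] at huv
  · rintro (w | e) t ht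
    · exact (hadj w t ht).imp fun i => And.symm
    · exact ⟨node e, hnode e t ht, rfl⟩
  · have hcounted : {e | i ∈ subtree bag node e ∧ ((subtree bag node e).Nontrivial ∨
        e ∈ (nonterminalGraph G T).support)} ⊆ Sum.inl '' (Subtype.val ⁻¹' bag i : Set ↥Tᶜ) := by
      rintro (w | e) ⟨hi, he⟩
      · exact ⟨w, hi, rfl⟩
      · obtain h | ⟨_ | _, h⟩ := he <;> simp [subtree, nonterminalGraph] at h
    calc _ ≤ (Subtype.val ⁻¹' bag i : Set ↥T).ncard + (Subtype.val ⁻¹' bag i : Set ↥Tᶜ).ncard :=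
          Nat.add_le_add_left ((Set.ncard_le_ncard hcounted).trans (Set.ncard_image_le)) _
      _ = (bag i).ncard := ncard_preimage_val_add_ncard_preimage_val_compl T (bag i)
      _ ≤ r := hwidth i

lemma exists_isSteinerTree_of_hasPacking [Finite V] {φ : Element G T → Element G T}
    {F : Set (Element G T)} {n : ℕ} (hφ : IsContraction (nonterminalGraph G T) φ)
    (hF : HasPacking (contractedHyperedge terminals φ) F Set.univ n) :
    ∃ S : Fin n → SimpleGraph V, (∀ j, IsSteinerTree G T (S j)) ∧
      ∀ i j, i ≠ j → EDisj T (S i) (S j) := by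
  obtain ⟨P, hP, hdisj⟩ := hF
  choose S hS hST using fun j => exists_isSteinerTree_le (H := subgraphOf (φ ⁻¹' P j))
    (fun _ _ h => h.1) (reachable_of_isContraction hφ (hP j).2)
  exact ⟨S, hST, fun i j hij =>
    eDisj_of_disjoint ((hdisj hij).preimage φ) (hS i) (hS j)⟩

end Element

lemma TreeRepresentation.exists_hasPacking_div_le {ι α Y : Type*} [Finite α] [Finite Y]
    {Tr : SimpleGraph ι} {N : Y → Set α} {F : Set Y} {r k : ℕ} {BT : α → Set ι} {BY : Y → Set ι}
    (hTr : Tr.IsTree) (h : TreeRepresentation Tr N F r BT BY)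
    (hconn : IsHyperconnected k N F Set.univ) :
    ∃ n : ℕ, (k : ℝ) / (2 * (r : ℝ) ^ 2) ≤ n ∧ HasPacking N F Set.univ n := by
  obtain rfl | hr := Nat.eq_zero_or_pos r
  · exact ⟨0, by simp, fun j => j.elim0, fun j => j.elim0, fun j => j.elim0⟩
  obtain rfl | hk := Nat.eq_zero_or_pos k
  · exact ⟨0, by simp, fun j => j.elim0, fun j => j.elim0, fun j => j.elim0⟩
  have hr2 : 0 < r ^ 2 := pow_pos hr 2
  suffices hpack : ∃ n : ℕ, k ≤ n * (2 * r ^ 2) ∧ HasPacking N F Set.univ n by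
    obtain ⟨n, hn, hF⟩ := hpack
    exact ⟨n, by rw [div_le_iff₀ (by positivity)]; exact_mod_cast hn, hF⟩
  rcases lt_or_ge k (r ^ 2) with hlt | hle
  · exact ⟨1, by omega, fun _ => F, fun _ => ⟨subset_rfl, hconn.of_le hk⟩,
      Subsingleton.pairwise⟩
  · have hq : 1 ≤ k / r ^ 2 := (Nat.one_le_div_iff hr2).2 hle
    have hlt : k < r ^ 2 * (k / r ^ 2 + 1) := Nat.lt_mul_div_succ k hr2
    exact ⟨k / r ^ 2, by nlinarith,
      h.hasPacking hTr hq (hconn.of_le (Nat.div_mul_le_self k (r ^ 2)))⟩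

lemma div_mul_logb_le_div (k r : ℕ) :
    (k : ℝ) / (12 * (r : ℝ) ^ 2 * Real.logb 2 (3 * r)) ≤ k / (2 * (r : ℝ) ^ 2) := by
  obtain rfl | hr := Nat.eq_zero_or_pos r
  · simp
  have hr1 : (1 : ℝ) ≤ r := by exact_mod_cast hr
  have hlog : 1 ≤ Real.logb 2 (3 * r) := by
    rw [Real.le_logb_iff_rpow_le one_lt_two (by positivity), Real.rpow_one]
    linarith
  have hden : 2 * (r : ℝ) ^ 2 ≤ 12 * (r : ℝ) ^ 2 * Real.logb 2 (3 * r) := by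
    nlinarith [sq_nonneg (r : ℝ)]
  gcongr

theorem treewidth_steiner_tree_packing_general [Finite V] (G : SimpleGraph V) (r : ℕ) (T : Set V)
    (htw : HasTreeDecompWidthLE G r) (k : ℕ)
    (hconn : ∀ u ∈ T, ∀ v ∈ T, u ≠ v → k ≤ elemConn G T u v) :
    ∃ n : ℕ, (k : ℝ) / (2 * (r : ℝ) ^ 2) ≤ (n : ℝ) ∧
      ∃ F : Fin n → SimpleGraph V, (∀ j, IsSteinerTree G T (F j)) ∧
        ∀ i j, i ≠ j → EDisj T (F i) (F j) := by
  obtain ⟨φ, hφ, hcut⟩ := (Element.isCutConnected hconn).exists_isContraction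
  obtain ⟨ι, Tr, BT, BY, hTr, hrep⟩ := Element.exists_treeRepresentation htw hφ
  obtain ⟨n, hn, hpack⟩ := hrep.exists_hasPacking_div_le hTr hcut.isHyperconnected
  exact ⟨n, hn, Element.exists_isSteinerTree_of_hasPacking hφ hpack⟩

end SteinerTrees

/-- **Packing Steiner trees in bounded-treewidth graphs.** If `G` has treewidth at most
`r - 1` and every pair of terminals is `k`-element-connected, then `G` contains at least
`k / (12 r² log₂(3r))` pairwise element-disjoint Steiner trees. -/
theorem treewidth_steiner_tree_packing {V : Type*} [Fintype V]
    (G : SimpleGraph V) (r : ℕ) (T : Set V)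
    (htw : HasTreeDecompWidthLE G r) (k : ℕ)
    (hconn : ∀ u ∈ T, ∀ v ∈ T, u ≠ v → k ≤ elemConn G T u v) :
    ∃ n : ℕ,
      (k : ℝ) / (12 * (r : ℝ) ^ 2 * Real.logb 2 (3 * r)) ≤ (n : ℝ) ∧
      ∃ F : Fin n → SimpleGraph V,
        (∀ j, IsSteinerTree G T (F j)) ∧
        ∀ i j, i ≠ j → EDisj T (F i) (F j) := by
  obtain ⟨n, hn, hF⟩ := treewidth_steiner_tree_packing_general G r T htw k hconn
  exact ⟨n, (div_mul_logb_le_div k r).trans hn, hF⟩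
end
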